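/- For every positive integer k there exists a positive integer p = p(k) such that every 2-connected graph of path-width at least p has a minor isomorphic to 𝒫_k or a minor isomorphic to 𝒬_k. -/

import Mathlib

/-!
Common definitions: minors, widths, connectivity, the specific graphs
`K4`, `K23`, `C32`, `graphA`, the binary trees `CT_h`, the graphs `𝒫_k`, `𝒬_k`,
the trees `T_h`, homeomorphic embeddings, cascades, and related notions,
following Dang--Thomas, "Minors of two-connected graphs of large path-width".
-/

open SimpleGraph

/-- A minor model of `H` in `G`: branch sets `f w` are nonempty, connected,
pairwise disjoint, and edges of `H` are realized by edges of `G` between branch sets. -/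
def IsMinorModel {W V : Type*} (H : SimpleGraph W) (G : SimpleGraph V) (f : W → Set V) : Prop :=
  (∀ w, (f w).Nonempty) ∧
  (∀ w, (G.induce (f w)).Connected) ∧
  (∀ w₁ w₂ : W, w₁ ≠ w₂ → Disjoint (f w₁) (f w₂)) ∧
  (∀ w₁ w₂ : W, H.Adj w₁ w₂ → ∃ v₁ ∈ f w₁, ∃ v₂ ∈ f w₂, G.Adj v₁ v₂)

/-- `H` is (isomorphic to) a minor of `G`. -/
def IsMinor {W V : Type*} (H : SimpleGraph W) (G : SimpleGraph V) : Prop :=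
  ∃ f : W → Set V, IsMinorModel H G f

/-- The complete graph on four vertices. -/
def K4 : SimpleGraph (Fin 4) := ⊤

/-- The complete bipartite graph `K_{2,3}`. -/
def K23 : SimpleGraph (Fin 2 ⊕ Fin 3) := completeBipartiteGraph (Fin 2) (Fin 3)

/-- The graph `A`: a cycle `a₁a₂a₃a₄a₅a₆a₁` plus the edges `a₁a₃`, `a₃a₅`, `a₅a₁`. -/
def graphA : SimpleGraph (Fin 6) :=
  SimpleGraph.fromEdgeSet
    {s(0, 1), s(1, 2), s(2, 3), s(3, 4), s(4, 5), s(5, 0), s(0, 2), s(2, 4), s(4, 0)}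

/-- The graph `C_{3,2}`: two disjoint triangles. -/
def C32 : SimpleGraph (Fin 2 × Fin 3) :=
  SimpleGraph.fromRel (fun u v => u.1 = v.1)

/-- A graph is outerplanar iff it has no `K₄` minor and no `K_{2,3}` minor
(the classical characterization of outerplanarity). -/
def Outerplanar {V : Type*} (G : SimpleGraph V) : Prop :=
  ¬ IsMinor K4 G ∧ ¬ IsMinor K23 G

/-- `G` is `k`-connected: it has more than `k` vertices and deleting fewer than `k`
vertices leaves a connected graph. -/
def IsKConnected {V : Type*} [Fintype V] (k : ℕ) (G : SimpleGraph V) : Prop :=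
  k + 1 ≤ Fintype.card V ∧
  ∀ S : Finset V, S.card < k → (G.induce ((↑S : Set V)ᶜ)).Connected

/-- `(Tr, X)` is a tree-decomposition of `G`: `Tr` is a tree, the bags `X t` cover all
vertices and edges (W1), and whenever `t₂` lies on the path of `Tr` between `t₁` and `t₃`
we have `X t₁ ∩ X t₃ ⊆ X t₂` (W2). -/
def IsTreeDecomp {V T : Type*} (G : SimpleGraph V) (Tr : SimpleGraph T) (X : T → Finset V) :
    Prop :=
  Tr.IsTree ∧
  (∀ v : V, ∃ t, v ∈ X t) ∧
  (∀ u v : V, G.Adj u v → ∃ t, u ∈ X t ∧ v ∈ X t) ∧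
  (∀ (t₁ t₂ t₃ : T) (p : Tr.Walk t₁ t₃), p.IsPath → t₂ ∈ p.support →
    ∀ v : V, v ∈ X t₁ → v ∈ X t₃ → v ∈ X t₂)

/-- A path-decomposition of `G`, with bags indexed by `Fin n`. -/
def IsPathDecomp {V : Type*} (G : SimpleGraph V) {n : ℕ} (X : Fin n → Finset V) : Prop :=
  (∀ v : V, ∃ i, v ∈ X i) ∧
  (∀ u v : V, G.Adj u v → ∃ i, u ∈ X i ∧ v ∈ X i) ∧
  (∀ i j k : Fin n, i ≤ j → j ≤ k → ∀ v : V, v ∈ X i → v ∈ X k → v ∈ X j)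

/-- The path-width of a finite graph: the least `w` such that `G` has a
path-decomposition all of whose bags have at most `w + 1` vertices. -/
noncomputable def pathwidth {V : Type*} [Fintype V] (G : SimpleGraph V) : ℕ :=
  sInf {w | ∃ (n : ℕ) (X : Fin n → Finset V), IsPathDecomp G X ∧ ∀ i, (X i).card ≤ w + 1}

/-- The tree-width of a finite graph: the least `w` such that `G` has a
tree-decomposition all of whose bags have at most `w + 1` vertices. -/
noncomputable def treewidth {V : Type*} [Fintype V] (G : SimpleGraph V) : ℕ :=
  sInf {w | ∃ (T : Type) (_ : Fintype T) (Tr : SimpleGraph T) (X : T → Finset V),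
    IsTreeDecomp G Tr X ∧ ∀ t, (X t).card ≤ w + 1}

/-- Vertices of the binary tree `CT_h`: paths from the root, recorded as reversed
lists of left/right moves, of length at most `h`. -/
abbrev CTVert (h : ℕ) := {l : List Bool // l.length ≤ h}

/-- The binary tree `CT_h` of height `h`. -/
def CTgraph (h : ℕ) : SimpleGraph (CTVert h) :=
  SimpleGraph.fromEdgeSet
    {e | ∃ (b : Bool) (σ : List Bool) (hσ : σ.length < h),
      e = s((⟨σ, le_of_lt hσ⟩ : CTVert h), (⟨b :: σ, by simpa using hσ⟩ : CTVert h))}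

/-- The graph `𝒫_k`: the binary tree `CT_k` together with one extra vertex (`none`)
adjacent to every leaf of `CT_k`. -/
def Pgraph (k : ℕ) : SimpleGraph (Option (CTVert k)) :=
  SimpleGraph.fromEdgeSet
    ({e | ∃ (b : Bool) (σ : List Bool) (hσ : σ.length < k),
        e = s(some (⟨σ, le_of_lt hσ⟩ : CTVert k), some (⟨b :: σ, by simpa using hσ⟩ : CTVert k))} ∪
     {e | ∃ l : CTVert k, l.1.length = k ∧ e = s(none, some l)})

/-- Vertices of `𝒬_k`: the two base vertices of the root triangle (`Sum.inl false` and
`Sum.inl true`), together with one apex vertex for each node of the complete binary tree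
of depth `< k` (recorded as a reversed list of moves). -/
abbrev QVert (k : ℕ) := Bool ⊕ {l : List Bool // l.length < k}

/-- The two ends of the base edge of the copy of the triangle at node `σ` of `𝒬_k`. -/
def qbase (k : ℕ) : List Bool → QVert k × QVert k
  | [] => (Sum.inl false, Sum.inl true)
  | b :: σ =>
      ((if b then (qbase k σ).2 else (qbase k σ).1),
        if h : σ.length < k then Sum.inr ⟨σ, h⟩ else Sum.inl false)

/-- The graph `𝒬_k`, built from triangles as in the recursive definition: the triangle at
node `σ` consists of the base edge `qbase k σ` together with the apex vertex `Sum.inr σ`;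
the base edge of `𝒬_k` is `s(Sum.inl false, Sum.inl true)`. -/
def Qgraph (k : ℕ) : SimpleGraph (QVert k) :=
  SimpleGraph.fromEdgeSet
    ({s(Sum.inl false, Sum.inl true)} ∪
     {e | ∃ (σ : List Bool) (h : σ.length < k),
        e = s(Sum.inr ⟨σ, h⟩, (qbase k σ).1) ∨ e = s(Sum.inr ⟨σ, h⟩, (qbase k σ).2)})

/-- The minor vertices of the tree `T_h` (one for each string of length `≤ h`). -/
abbrev MVert (h : ℕ) := {l : List Bool // l.length ≤ h}

/-- The major vertices of the tree `T_h` (one for each string of length `≤ h - 1`). -/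
abbrev JVert (h : ℕ) := {l : List Bool // l.length + 1 ≤ h}

/-- Vertices of the tree `T_h` (obtained from `CT_h` by subdividing every edge not incident
with a degree-one vertex and adding the minor root). -/
abbrev TVert (h : ℕ) := MVert h ⊕ JVert h

/-- The tree `T_h`: each major vertex `σ` is adjacent to the minor vertices `σ` (its parent),
`false :: σ` (its left neighbor) and `true :: σ` (its right neighbor). -/
def Tgraph (h : ℕ) : SimpleGraph (TVert h) :=
  SimpleGraph.fromEdgeSet
    {e | ∃ (σ : List Bool) (hσ : σ.length + 1 ≤ h),
      e = s(Sum.inr ⟨σ, hσ⟩, Sum.inl ⟨σ, Nat.le_of_succ_le hσ⟩) ∨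
      ∃ b : Bool, e = s(Sum.inr ⟨σ, hσ⟩, Sum.inl ⟨b :: σ, by simpa using hσ⟩)}

/-- A homeomorphic embedding of `TA` into `TB`: an injection such that for any two edges of
`TA` sharing an end `t`, the corresponding paths of `TB` are edge-disjoint. -/
def IsHomeoEmb {A B : Type*} (TA : SimpleGraph A) (TB : SimpleGraph B) (η : A → B) : Prop :=
  Function.Injective η ∧
  ∀ ⦃t t₁ t₂ : A⦄, TA.Adj t t₁ → TA.Adj t t₂ → t₁ ≠ t₂ →
    ∀ (p₁ : TB.Walk (η t) (η t₁)) (p₂ : TB.Walk (η t) (η t₂)),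
      p₁.IsPath → p₂.IsPath → ∀ e ∈ p₁.edges, e ∉ p₂.edges

/-- `v` lies in the span of `η`: it lies on a path of `TB` between two vertices in the
image of `η`. -/
def inSpan {A B : Type*} (TB : SimpleGraph B) (η : A → B) (v : B) : Prop :=
  ∃ (a₁ a₂ : A) (p : TB.Walk (η a₁) (η a₂)), p.IsPath ∧ v ∈ p.support

/-- A cascade of height `h` and size `s` in the tree-decomposition `(Tr, X)`:
a homeomorphic embedding of `T_h` with `|X (η t)| = s` for every minor vertex `t`
and `|X t| ≥ s` for every `t` in the span. -/
def IsCascade {V T : Type*} (Tr : SimpleGraph T) (X : T → Finset V) (h s : ℕ)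
    (η : TVert h → T) : Prop :=
  IsHomeoEmb (Tgraph h) Tr η ∧
  (∀ l : MVert h, (X (η (Sum.inl l))).card = s) ∧
  (∀ t : T, inSpan Tr η t → s ≤ (X t).card)

/-- An injective cascade with common intersection set `I`. -/
def IsInjectiveCascade {V T : Type*} (Tr : SimpleGraph T) (X : T → Finset V) (h s : ℕ)
    (η : TVert h → T) (I : Finset V) : Prop :=
  IsCascade Tr X h s η ∧ I.card < s ∧
  ∀ t t' : TVert h, t ≠ t' → ((X (η t) : Set V) ∩ (X (η t') : Set V)) = (I : Set V)

/-- A family of `s` disjoint paths in `G \ I` (a linkage). -/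
def IsLinkage {V : Type*} (G : SimpleGraph V) (I : Finset V) {s : ℕ} {x y : Fin s → V}
    (P : ∀ i : Fin s, G.Walk (x i) (y i)) : Prop :=
  (∀ i, (P i).IsPath) ∧
  (∀ i, ∀ v ∈ (P i).support, v ∉ I) ∧
  (∀ i j, i ≠ j → ∀ v ∈ (P i).support, v ∉ (P j).support)

/-- An ordered cascade: an injective cascade of size `s + |I|` with common intersection set
`I`, together with orderings `ξ t : Fin s → X (η t) \ I` of the bags at minor vertices, such
that at every major vertex there are left and right linkages connecting corresponding
vertices. -/
def IsOrderedCascade {V T : Type*} (G : SimpleGraph V) (Tr : SimpleGraph T)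
    (X : T → Finset V) (h s : ℕ) (η : TVert h → T) (I : Finset V)
    (ξ : MVert h → Fin s → V) : Prop :=
  IsInjectiveCascade Tr X h (s + I.card) η I ∧
  (∀ t : MVert h, Function.Injective (ξ t) ∧
    Set.range (ξ t) = (X (η (Sum.inl t)) : Set V) \ (I : Set V)) ∧
  ∀ (σ : List Bool) (hσ : σ.length + 1 ≤ h),
    (∃ P : ∀ i : Fin s,
        G.Walk (ξ ⟨σ, Nat.le_of_succ_le hσ⟩ i) (ξ ⟨false :: σ, by simpa using hσ⟩ i),
      IsLinkage G I P) ∧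
    (∃ Q : ∀ i : Fin s,
        G.Walk (ξ ⟨σ, Nat.le_of_succ_le hσ⟩ i) (ξ ⟨true :: σ, by simpa using hσ⟩ i),
      IsLinkage G I Q)

/-- The vertex set of the `η`-torso at the major vertex `σ` of `T_h`: the union of the bags
`X t - I` over all `t` such that the path in `Tr` from `t` to `η σ` contains none of the
images of the three minor neighbors of `σ` as an internal vertex. -/
def torsoSet {V T : Type*} (Tr : SimpleGraph T) (X : T → Finset V) {h : ℕ}
    (η : TVert h → T) (I : Finset V) (σ : List Bool) (hσ : σ.length + 1 ≤ h) : Set V :=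
  {v | v ∉ I ∧ ∃ t : T,
    (∀ p : Tr.Walk t (η (Sum.inr ⟨σ, hσ⟩)), p.IsPath →
      ∀ u : T,
        (u = η (Sum.inl ⟨σ, Nat.le_of_succ_le hσ⟩) ∨
         u = η (Sum.inl ⟨false :: σ, by simpa using hσ⟩) ∨
         u = η (Sum.inl ⟨true :: σ, by simpa using hσ⟩)) →
        u ∈ p.support → u = t ∨ u = η (Sum.inr ⟨σ, hσ⟩)) ∧
    v ∈ X t}

/-- `H` is a tripod in `G` with all vertices in `S`, center `c` and feet `f₁, f₂, f₃`:
the union of three paths from `c` to the feet, pairwise disjoint except for `c`,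
at least two of which have length at least one. -/
def IsTripodOn {V : Type*} (G : SimpleGraph V) (S : Set V) (H : G.Subgraph)
    (c f₁ f₂ f₃ : V) : Prop :=
  ∃ (W₁ : G.Walk c f₁) (W₂ : G.Walk c f₂) (W₃ : G.Walk c f₃),
    W₁.IsPath ∧ W₂.IsPath ∧ W₃.IsPath ∧
    (∀ v ∈ W₁.support, v ∈ S) ∧ (∀ v ∈ W₂.support, v ∈ S) ∧ (∀ v ∈ W₃.support, v ∈ S) ∧
    (∀ v, v ∈ W₁.support → v ∈ W₂.support → v = c) ∧
    (∀ v, v ∈ W₁.support → v ∈ W₃.support → v = c) ∧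
    (∀ v, v ∈ W₂.support → v ∈ W₃.support → v = c) ∧
    ((1 ≤ W₁.length ∧ 1 ≤ W₂.length) ∨ (1 ≤ W₁.length ∧ 1 ≤ W₃.length) ∨
      (1 ≤ W₂.length ∧ 1 ≤ W₃.length)) ∧
    H = W₁.toSubgraph ⊔ W₂.toSubgraph ⊔ W₃.toSubgraph

/-- The major vertex `σ` has property `A_{ij}` in the ordered cascade `η` with orderings
`ξ`: there are two disjoint tripods in the `η`-torso at `σ`, with feet as prescribed. -/
def HasPropA {V T : Type*} (G : SimpleGraph V) (Tr : SimpleGraph T) (X : T → Finset V)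
    {h s : ℕ} (η : TVert h → T) (I : Finset V) (ξ : MVert h → Fin s → V)
    (σ : List Bool) (hσ : σ.length + 1 ≤ h) (i j : Fin s) : Prop :=
  ∃ (Li Lj : G.Subgraph) (ci cj : V),
    (∃ m₂ m₃ : Fin s, (m₂ = i ∨ m₂ = j) ∧ (m₃ = i ∨ m₃ = j) ∧
      IsTripodOn G (torsoSet Tr X η I σ hσ) Li ci
        (ξ ⟨σ, Nat.le_of_succ_le hσ⟩ i)
        (ξ ⟨false :: σ, by simpa using hσ⟩ m₂)
        (ξ ⟨true :: σ, by simpa using hσ⟩ m₃)) ∧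
    (∃ m₂ m₃ : Fin s, (m₂ = i ∨ m₂ = j) ∧ (m₃ = i ∨ m₃ = j) ∧
      IsTripodOn G (torsoSet Tr X η I σ hσ) Lj cj
        (ξ ⟨σ, Nat.le_of_succ_le hσ⟩ j)
        (ξ ⟨false :: σ, by simpa using hσ⟩ m₂)
        (ξ ⟨true :: σ, by simpa using hσ⟩ m₃)) ∧
    Disjoint Li.verts Lj.verts

/-- The major vertex `σ` has property `B_{ij}`: there are two tripods `L_i`, `L_j` in the
`η`-torso at `σ`, with feet `v_{m,1}, v_{m,2}, v_{m,3}` where `{v_{i,y}, v_{j,y}}` equals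
`{ξ_{t_y} i, ξ_{t_y} j}` for each `y`, which intersect exactly in a path that is the
intersection of the branch of `L_i` to `v_{i,3}` and the branch of `L_j` to `v_{j,2}`,
and which avoids both centers. -/
def HasPropB {V T : Type*} (G : SimpleGraph V) (Tr : SimpleGraph T) (X : T → Finset V)
    {h s : ℕ} (η : TVert h → T) (I : Finset V) (ξ : MVert h → Fin s → V)
    (σ : List Bool) (hσ : σ.length + 1 ≤ h) (i j : Fin s) : Prop :=
  ∃ (vi vj : Fin 3 → V) (ci cj : V)
    (Wi : ∀ y : Fin 3, G.Walk ci (vi y)) (Wj : ∀ y : Fin 3, G.Walk cj (vj y)),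
    (∀ y : Fin 3, ({vi y, vj y} : Set V) =
      {(![ξ ⟨σ, Nat.le_of_succ_le hσ⟩,
          ξ ⟨false :: σ, by simpa using hσ⟩,
          ξ ⟨true :: σ, by simpa using hσ⟩] : Fin 3 → Fin s → V) y i,
       (![ξ ⟨σ, Nat.le_of_succ_le hσ⟩,
          ξ ⟨false :: σ, by simpa using hσ⟩,
          ξ ⟨true :: σ, by simpa using hσ⟩] : Fin 3 → Fin s → V) y j}) ∧
    (∀ y, (Wi y).IsPath) ∧ (∀ y, (Wj y).IsPath) ∧
    (∀ y, ∀ v ∈ (Wi y).support, v ∈ torsoSet Tr X η I σ hσ) ∧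
    (∀ y, ∀ v ∈ (Wj y).support, v ∈ torsoSet Tr X η I σ hσ) ∧
    (∀ y y' : Fin 3, y ≠ y' → ∀ v, v ∈ (Wi y).support → v ∈ (Wi y').support → v = ci) ∧
    (∀ y y' : Fin 3, y ≠ y' → ∀ v, v ∈ (Wj y).support → v ∈ (Wj y').support → v = cj) ∧
    ((1 ≤ (Wi 0).length ∧ 1 ≤ (Wi 1).length) ∨ (1 ≤ (Wi 0).length ∧ 1 ≤ (Wi 2).length) ∨
      (1 ≤ (Wi 1).length ∧ 1 ≤ (Wi 2).length)) ∧
    ((1 ≤ (Wj 0).length ∧ 1 ≤ (Wj 1).length) ∨ (1 ≤ (Wj 0).length ∧ 1 ≤ (Wj 2).length) ∨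
      (1 ≤ (Wj 1).length ∧ 1 ≤ (Wj 2).length)) ∧
    (((Wi 0).toSubgraph ⊔ (Wi 1).toSubgraph ⊔ (Wi 2).toSubgraph) ⊓
      ((Wj 0).toSubgraph ⊔ (Wj 1).toSubgraph ⊔ (Wj 2).toSubgraph)
        = (Wi 2).toSubgraph ⊓ (Wj 1).toSubgraph) ∧
    ∃ (x y : V) (p : G.Walk x y), p.IsPath ∧
      (Wi 2).toSubgraph ⊓ (Wj 1).toSubgraph = p.toSubgraph ∧
      ci ∉ p.support ∧ cj ∉ p.support

/-- The major vertex `σ` has property `AB_{ij}`: in the `η`-torso at `σ` there are disjoint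
paths `L_i, L_j` from `ξ_{t₁}(m)` to `ξ_{t₂}(m)` and disjoint paths `R_i, R_j` from
`ξ_{t₁}(m)` to `ξ_{t₃}(m)`, for `m ∈ {i, j}`. -/
def HasPropAB {V T : Type*} (G : SimpleGraph V) (Tr : SimpleGraph T) (X : T → Finset V)
    {h s : ℕ} (η : TVert h → T) (I : Finset V) (ξ : MVert h → Fin s → V)
    (σ : List Bool) (hσ : σ.length + 1 ≤ h) (i j : Fin s) : Prop :=
  ∃ (Li : G.Walk (ξ ⟨σ, Nat.le_of_succ_le hσ⟩ i) (ξ ⟨false :: σ, by simpa using hσ⟩ i))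
    (Lj : G.Walk (ξ ⟨σ, Nat.le_of_succ_le hσ⟩ j) (ξ ⟨false :: σ, by simpa using hσ⟩ j))
    (Ri : G.Walk (ξ ⟨σ, Nat.le_of_succ_le hσ⟩ i) (ξ ⟨true :: σ, by simpa using hσ⟩ i))
    (Rj : G.Walk (ξ ⟨σ, Nat.le_of_succ_le hσ⟩ j) (ξ ⟨true :: σ, by simpa using hσ⟩ j)),
    Li.IsPath ∧ Lj.IsPath ∧ Ri.IsPath ∧ Rj.IsPath ∧
    (∀ v ∈ Li.support, v ∈ torsoSet Tr X η I σ hσ) ∧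
    (∀ v ∈ Lj.support, v ∈ torsoSet Tr X η I σ hσ) ∧
    (∀ v ∈ Ri.support, v ∈ torsoSet Tr X η I σ hσ) ∧
    (∀ v ∈ Rj.support, v ∈ torsoSet Tr X η I σ hσ) ∧
    (∀ v ∈ Li.support, v ∉ Lj.support) ∧
    (∀ v ∈ Ri.support, v ∉ Rj.support)

/-- A monotone homeomorphic embedding `T_a ↪ T_h`: the minor root maps to the minor root,
and for every major vertex with trinity `(t₁, t₂, t₃)`, the images of `t₂` and `t₃` are the
left and right neighbors of the (major) image of the vertex. -/
def IsMonotoneEmb (a h : ℕ) (γ : TVert a → TVert h) : Prop :=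
  IsHomeoEmb (Tgraph a) (Tgraph h) γ ∧
  γ (Sum.inl ⟨[], Nat.zero_le a⟩) = Sum.inl ⟨[], Nat.zero_le h⟩ ∧
  ∀ (σ : List Bool) (hσ : σ.length + 1 ≤ a),
    ∃ (τ : List Bool) (hτ : τ.length + 1 ≤ h),
      γ (Sum.inr ⟨σ, hσ⟩) = Sum.inr ⟨τ, hτ⟩ ∧
      γ (Sum.inl ⟨false :: σ, by simpa using hσ⟩) = Sum.inl ⟨false :: τ, by simpa using hτ⟩ ∧
      γ (Sum.inl ⟨true :: σ, by simpa using hσ⟩) = Sum.inl ⟨true :: τ, by simpa using hτ⟩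



namespace PW
variable {V : Type*}

/-- Set connectivity, in closure form. -/
def Conn (G : SimpleGraph V) (X : Set V) : Prop :=
  X.Nonempty ∧ ∀ p : Set V, (∃ x ∈ X, x ∈ p) →
    (∀ a ∈ X, ∀ b ∈ X, a ∈ p → G.Adj a b → b ∈ p) → X ⊆ p

/-- Two sets are joined by an edge. -/
def Tch (G : SimpleGraph V) (X Y : Set V) : Prop := ∃ x ∈ X, ∃ y ∈ Y, G.Adj x y

theorem Tch.symm {G : SimpleGraph V} {X Y : Set V} (h : Tch G X Y) : Tch G Y X := by
  obtain ⟨x, hx, y, hy, h⟩ := h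
  exact ⟨y, hy, x, hx, h.symm⟩

theorem Tch.mono {G : SimpleGraph V} {X Y X' Y' : Set V} (h : Tch G X Y) (hX : X ⊆ X')
    (hY : Y ⊆ Y') : Tch G X' Y' := by
  obtain ⟨x, hx, y, hy, h⟩ := h
  exact ⟨x, hX hx, y, hY hy, h⟩

theorem conn_singleton (G : SimpleGraph V) (x : V) : Conn G {x} := by
  refine ⟨⟨x, rfl⟩, ?_⟩
  rintro p ⟨y, hy, hp⟩ _
  simp at hy
  simpa [← hy] using hp

theorem Conn.union_aux {G : SimpleGraph V} {X Y : Set V} (hX : Conn G X) (hY : Conn G Y)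
    (h : (X ∩ Y).Nonempty ∨ Tch G X Y) (p : Set V) (h1 : ∃ x ∈ X, x ∈ p)
    (h2 : ∀ a ∈ X ∪ Y, ∀ b ∈ X ∪ Y, a ∈ p → G.Adj a b → b ∈ p) : X ∪ Y ⊆ p := by
  have hXp : X ⊆ p := hX.2 p h1 (fun a ha b hb => h2 a (Or.inl ha) b (Or.inl hb))
  have hYp : Y ⊆ p := by
    apply hY.2 p _ (fun a ha b hb => h2 a (Or.inr ha) b (Or.inr hb))
    rcases h with ⟨z, hz1, hz2⟩ | ⟨x, hx, y, hy, hxy⟩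
    · exact ⟨z, hz2, hXp hz1⟩
    · exact ⟨y, hy, h2 x (Or.inl hx) y (Or.inr hy) (hXp hx) hxy⟩
  exact Set.union_subset hXp hYp

theorem Conn.union {G : SimpleGraph V} {X Y : Set V} (hX : Conn G X) (hY : Conn G Y)
    (h : (X ∩ Y).Nonempty ∨ Tch G X Y) : Conn G (X ∪ Y) := by
  refine ⟨hX.1.mono Set.subset_union_left, ?_⟩
  rintro p ⟨x, hx, hxp⟩ h2
  rcases hx with hx | hx
  · exact hX.union_aux hY h p ⟨x, hx, hxp⟩ h2
  · rw [Set.union_comm] at h2 ⊢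
    refine hY.union_aux hX ?_ p ⟨x, hx, hxp⟩ h2
    rcases h with h | h
    · left; rwa [Set.inter_comm]
    · right; exact h.symm

theorem Conn.union_tch {G : SimpleGraph V} {X Y : Set V} (hX : Conn G X) (hY : Conn G Y)
    (h : Tch G X Y) : Conn G (X ∪ Y) := hX.union hY (Or.inr h)

theorem Conn.mono_graph {G H : SimpleGraph V} {X : Set V} (hX : Conn G X)
    (h : ∀ a ∈ X, ∀ b ∈ X, G.Adj a b → H.Adj a b) : Conn H X :=
  ⟨hX.1, fun p h1 h2 => hX.2 p h1 (fun a ha b hb hp hab => h2 a ha b hb hp (h a ha b hb hab))⟩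

/-- A nontrivial split of a connected set is crossed by an edge. -/
theorem Conn.tch {G : SimpleGraph V} {X Y Z : Set V} (hX : Conn G X) (hXe : X = Y ∪ Z)
    (hY : Y.Nonempty) (hZ : Z.Nonempty) (hd : Disjoint Y Z) : Tch G Y Z := by
  by_contra hn
  have := hX.2 Y (by obtain ⟨y, hy⟩ := hY; exact ⟨y, by simp [hXe, hy], hy⟩) (by
    intro a _ b hb ha hab
    rw [hXe] at hb
    rcases hb with hb | hb
    · exact hb
    · exact absurd ⟨a, ha, b, hb, hab⟩ hn)
  obtain ⟨z, hz⟩ := hZ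
  exact Set.disjoint_left.1 hd (this (by simp [hXe, hz])) hz

theorem exists_comp {G : SimpleGraph V} {X Y : Set V} (hY : Conn G Y) (hYX : Y ⊆ X) :
    ∃ P, Y ⊆ P ∧ P ⊆ X ∧ Conn G P ∧ ∀ a ∈ P, ∀ b ∈ X, G.Adj a b → b ∈ P := by
  refine ⟨{y | ∃ Z, Y ⊆ Z ∧ Z ⊆ X ∧ Conn G Z ∧ y ∈ Z}, ?_, ?_, ⟨?_, ?_⟩, ?_⟩
  · intro y hy; exact ⟨Y, subset_rfl, hYX, hY, hy⟩
  · rintro y ⟨Z, -, h, -, hy⟩; exact h hy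
  · obtain ⟨y, hy⟩ := hY.1; exact ⟨y, Y, subset_rfl, hYX, hY, hy⟩
  · rintro p ⟨x, ⟨Z, hZ1, hZ2, hZ3, hxZ⟩, hxp⟩ hcl
    have key : ∀ Z, Y ⊆ Z → Z ⊆ X → Conn G Z → (∃ z ∈ Z, z ∈ p) → Z ⊆ p := by
      intro Z hZ1 hZ2 hZ3 hz
      exact hZ3.2 p hz (fun a ha b hb => hcl a ⟨Z, hZ1, hZ2, hZ3, ha⟩ b ⟨Z, hZ1, hZ2, hZ3, hb⟩)
    have hYp : Y ⊆ p := hZ1.trans (key Z hZ1 hZ2 hZ3 ⟨x, hxZ, hxp⟩)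
    obtain ⟨y0, hy0⟩ := hY.1
    rintro y ⟨Z', h1, h2, h3, hy⟩
    exact key Z' h1 h2 h3 ⟨y0, h1 hy0, hYp hy0⟩ hy
  · rintro a ⟨Z, h1, h2, h3, ha⟩ b hb hab
    exact ⟨Z ∪ {b}, h1.trans Set.subset_union_left,
      Set.union_subset h2 (by simpa using hb),
      h3.union_tch (conn_singleton G b) ⟨a, ha, b, rfl, hab⟩, Or.inr rfl⟩

/-- Removing a component of `U \ Y` from `U` leaves a connected set. -/
theorem conn_diff_comp {G : SimpleGraph V} {U Y P : Set V} (hU : Conn G U) (hY : Conn G Y)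
    (hYU : Y ⊆ U) (hPY : Disjoint P Y)
    (hcl : ∀ a ∈ P, ∀ b ∈ U \ Y, G.Adj a b → b ∈ P) : Conn G (U \ P) := by
  have key : ∀ q : Set V, q ⊆ U \ P → q.Nonempty → (∀ a ∈ q, ∀ b ∈ U \ P, G.Adj a b → b ∈ q) →
      (Y ∩ q).Nonempty := by
    intro q hq hne hc
    by_contra hn
    rw [Set.not_nonempty_iff_eq_empty] at hn
    have hdis : ∀ y ∈ Y, y ∉ q := fun y hy hyq => by
      have : y ∈ Y ∩ q := ⟨hy, hyq⟩
      rw [hn] at this; exact this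
    have := hU.2 q (by obtain ⟨x, hx⟩ := hne; exact ⟨x, (hq hx).1, hx⟩) (by
      intro a ha b hb haq hab
      by_cases hbP : b ∈ P
      · exact absurd (hcl b hbP a ⟨ha, fun h => hdis a h haq⟩ hab.symm) (hq haq).2
      · exact hc a haq b ⟨hb, hbP⟩ hab)
    obtain ⟨y, hy⟩ := hY.1
    exact hdis y hy (this (hYU hy))
  have hYP : Y ⊆ U \ P := fun y hy => ⟨hYU hy, fun h => Set.disjoint_left.1 hPY h hy⟩
  refine ⟨hY.1.mono hYP, ?_⟩
  rintro p ⟨x, hx, hxp⟩ hc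
  obtain ⟨y, hyY, hyp⟩ := key (p ∩ (U \ P)) Set.inter_subset_right ⟨x, hxp, hx⟩ (by
    rintro a ⟨ha, ha'⟩ b hb hab
    exact ⟨hc a ha' b hb ha hab, hb⟩)
  have hYp : Y ⊆ p := hY.2 p ⟨y, hyY, hyp.1⟩
    (fun a ha b hb hap hab => hc a (hYP ha) b (hYP hb) hap hab)
  by_contra hn
  obtain ⟨z, hz, hzp⟩ := Set.not_subset.1 hn
  obtain ⟨y', hy1, hy2, hy3⟩ := key ((U \ P) \ p) Set.sdiff_subset ⟨z, hz, hzp⟩ (by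
    rintro a ⟨ha, hap⟩ b hb hab
    exact ⟨hb, fun hbp => hap (hc b hb a ha hbp hab.symm)⟩)
  exact hy3 (hYp hy1)

/-- Extension to a connected bipartition. -/
theorem exists_bipart {G : SimpleGraph V} {U Y1 Y2 : Set V} (hU : Conn G U) (h1 : Conn G Y1)
    (h2 : Conn G Y2) (hs1 : Y1 ⊆ U) (hs2 : Y2 ⊆ U) (hd : Disjoint Y1 Y2) :
    ∃ P, Y1 ⊆ P ∧ P ⊆ U \ Y2 ∧ Conn G P ∧ Conn G (U \ P) ∧
      (∀ a ∈ P, ∀ b ∈ U \ Y2, G.Adj a b → b ∈ P) := by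
  obtain ⟨P, hP1, hP2, hP3, hP4⟩ := exists_comp (X := U \ Y2) h1
    (fun y hy => ⟨hs1 hy, Set.disjoint_left.1 hd hy⟩)
  refine ⟨P, hP1, hP2, hP3, ?_, hP4⟩
  exact conn_diff_comp hU h2 hs2 (Set.disjoint_left.2 fun a ha => (hP2 ha).2) hP4

/-- A connected subset meeting a closed set is inside it. -/
theorem Conn.subset_of_closed {G : SimpleGraph V} {Z P X : Set V} (hZ : Conn G Z) (hZX : Z ⊆ X)
    (hm : (Z ∩ P).Nonempty) (hcl : ∀ a ∈ P, ∀ b ∈ X, G.Adj a b → b ∈ P) : Z ⊆ P := by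
  obtain ⟨z, h1, h2⟩ := hm
  exact hZ.2 P ⟨z, h1, h2⟩ (fun a _ b hb haP hab => hcl a haP b (hZX hb) hab)

/-- Removing a set all of whose outside neighbours lie in a connected set. -/
theorem Conn.diff {G : SimpleGraph V} {X K R : Set V} (hX : Conn G X) (hR : Conn G R)
    (hRX : R ⊆ X) (hKR : Disjoint K R)
    (hcl : ∀ a ∈ K, ∀ b ∈ X, G.Adj a b → b ∈ K ∨ b ∈ R) : Conn G (X \ K) :=
  conn_diff_comp hX hR hRX hKR (fun a ha b hb hab =>
    (hcl a ha b hb.1 hab).resolve_right hb.2)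

theorem Conn.connected {G : SimpleGraph V} {X : Set V} (hX : Conn G X) :
    (G.induce X).Connected := by
  rw [SimpleGraph.connected_iff]
  refine ⟨?_, hX.1.to_subtype⟩
  rintro ⟨x, hx⟩ ⟨y, hy⟩
  have := hX.2 {v | ∃ h : v ∈ X, (G.induce X).Reachable ⟨x, hx⟩ ⟨v, h⟩}
    ⟨x, hx, hx, SimpleGraph.Reachable.refl _⟩ (by
      rintro a ha b hb ⟨_, hr⟩ hab
      exact ⟨hb, hr.trans (SimpleGraph.Adj.reachable (by simpa using hab))⟩) hy
  exact this.2

theorem conn_of_connected {G : SimpleGraph V} {X : Set V} (h : (G.induce X).Connected) :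
    Conn G X := by
  rw [SimpleGraph.connected_iff] at h
  obtain ⟨hp, ⟨⟨x0, hx0⟩⟩⟩ := h
  refine ⟨⟨x0, hx0⟩, ?_⟩
  rintro p ⟨x, hx, hxp⟩ hcl y hy
  obtain ⟨w⟩ := hp ⟨x, hx⟩ ⟨y, hy⟩
  have : ∀ (a b : X), (G.induce X).Walk a b → (a : V) ∈ p → (b : V) ∈ p := by
    intro a b w
    induction w with
    | nil => exact id
    | cons h _ ih => intro ha; exact ih (hcl _ (Subtype.property _) _ (Subtype.property _) ha h)
  exact this _ _ w hxp

end PW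


namespace PW
variable {V : Type*}

/-- `(P, Q)` separates `A` from `B`. -/
def Sepn (G : SimpleGraph V) (A B P Q : Set V) : Prop :=
  P ∪ Q = Set.univ ∧ A ⊆ P ∧ B ⊆ Q ∧ ∀ x, x ∈ P → x ∉ Q → ∀ y, y ∈ Q → y ∉ P → ¬ G.Adj x y

theorem Sepn.symm {G : SimpleGraph V} {A B P Q : Set V} (h : Sepn G A B P Q) :
    Sepn G B A Q P := by
  obtain ⟨h1, h2, h3, h4⟩ := h
  exact ⟨by rwa [Set.union_comm], h3, h2, fun x hx hx' y hy hy' h => h4 y hy hy' x hx hx' h.symm⟩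

/-- `k` disjoint connected sets linking `A` and `B`. -/
def Lnk (G : SimpleGraph V) (k : ℕ) (A B : Set V) : Prop :=
  ∃ f : Fin k → Set V, (∀ i, Conn G (f i)) ∧ (∀ i j, i ≠ j → Disjoint (f i) (f j)) ∧
    (∀ i, (f i ∩ A).Nonempty) ∧ (∀ i, (f i ∩ B).Nonempty)

theorem transversal [Finite V] {k : ℕ} {f : Fin k → Set V} {E : Set V}
    (hd : ∀ i j, i ≠ j → Disjoint (f i) (f j)) (hne : ∀ i, (f i ∩ E).Nonempty)
    (hE : E.ncard = k) :
    ∃ d : Fin k → V, Function.Injective d ∧ Set.range d = E ∧ (∀ i, d i ∈ f i) ∧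
      ∀ i, ∀ z ∈ f i, z ∈ E → z = d i := by
  choose d hd1 using hne
  have hinj : Function.Injective d := by
    intro i j hij
    by_contra hne
    exact Set.disjoint_left.1 (hd i j hne) (hd1 i).1 (hij ▸ (hd1 j).1)
  have hr : Set.range d = E := by
    apply Set.eq_of_subset_of_ncard_le
    · rintro _ ⟨i, rfl⟩; exact (hd1 i).2
    · rw [hE, Set.ncard_range_of_injective hinj]; simp
    · exact Set.toFinite _
  refine ⟨d, hinj, hr, fun i => (hd1 i).1, ?_⟩
  intro i z hz hzE
  rw [← hr] at hzE
  obtain ⟨j, rfl⟩ := hzE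
  by_cases hij : i = j
  · rw [hij]
  · exact absurd (hd1 j).1 (Set.disjoint_left.1 (hd i j hij) hz)

/-- Edges of `G` inside `P`. -/
def resG (G : SimpleGraph V) (P : Set V) : SimpleGraph V where
  Adj a b := G.Adj a b ∧ a ∈ P ∧ b ∈ P
  symm := ⟨fun _ _ h => ⟨h.1.symm, h.2.2, h.2.1⟩⟩
  loopless := ⟨fun _ h => G.irrefl h.1⟩

theorem half [Finite V] {k : ℕ} {G G' : SimpleGraph V} {A B P Q : Set V} {x y : V}
    (hG : ∀ a b, G.Adj a b → G'.Adj a b ∨ (a = x ∧ b = y) ∨ (a = y ∧ b = x))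
    (hle : G' ≤ G)
    (hs : Sepn G' A B P Q) (hx : x ∈ P) (hxQ : x ∉ Q) (_hy : y ∈ Q) (hyP : y ∉ P)
    (hcon : ∀ P Q, Sepn G A B P Q → k ≤ (P ∩ Q).ncard)
    (hlt : (P ∩ Q).ncard < k)
    (ih : ∀ A B, (∀ P1 Q1, Sepn (resG G' P) A B P1 Q1 → k ≤ (P1 ∩ Q1).ncard) →
      Lnk (resG G' P) k A B) :
    ∃ (f : Fin k → Set V) (d : Fin k → V), (∀ i, Conn G (f i)) ∧
      (∀ i j, i ≠ j → Disjoint (f i) (f j)) ∧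
      (∀ i, (f i ∩ A).Nonempty) ∧ (∀ i, f i ⊆ P) ∧ Function.Injective d ∧
      Set.range d = insert x (P ∩ Q) ∧ (∀ i, d i ∈ f i) ∧
      ∀ i, ∀ z ∈ f i, z ∈ insert x (P ∩ Q) → z = d i := by
  obtain ⟨hc, hA, hB, hn⟩ := hs
  have hcard : (insert x (P ∩ Q)).ncard = k := by
    have h1 : k ≤ (P ∩ (insert x Q)).ncard := by
      apply hcon
      refine ⟨?_, hA, hB.trans (Set.subset_insert _ _), ?_⟩
      · rw [Set.union_insert, hc]; simp
      · intro a ha ha' b hb hb' hab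
        simp only [Set.mem_insert_iff, not_or] at ha' hb
        rcases hb with rfl | hb
        · exact hb' hx
        · rcases hG a b hab with h | h | h
          · exact hn a ha ha'.2 b hb hb' h
          · exact ha'.1 h.1
          · exact hb' (h.2 ▸ hx)
    have h2 : P ∩ (insert x Q) = insert x (P ∩ Q) := by
      ext v; simp only [Set.mem_inter_iff, Set.mem_insert_iff]
      constructor
      · tauto
      · rintro (rfl | h)
        · exact ⟨hx, Or.inl rfl⟩
        · exact ⟨h.1, Or.inr h.2⟩
    rw [h2] at h1
    have := Set.ncard_insert_le x (P ∩ Q)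
    omega
  obtain ⟨f, hf1, hf2, hf3, hf4⟩ := ih A (insert x (P ∩ Q)) (by
    rintro P1 Q1 ⟨hc1, hA1, hB1, hn1⟩
    have h1 : k ≤ ((P1 ∩ P) ∩ ((Q1 ∩ P) ∪ Q)).ncard := by
      apply hcon
      have hcov1 : ∀ v, v ∈ P1 ∨ v ∈ Q1 := fun v => by
        have : v ∈ P1 ∪ Q1 := by rw [hc1]; trivial
        exact this
      have hcov : ∀ v, v ∈ P ∨ v ∈ Q := fun v => by
        have : v ∈ P ∪ Q := by rw [hc]; trivial
        exact this
      have hxQ1 : x ∈ Q1 := hB1 (Set.mem_insert _ _)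
      refine ⟨?_, fun a ha => ⟨hA1 ha, hA ha⟩, fun b hb => Or.inr (hB hb), ?_⟩
      · ext v
        have := hcov1 v; have := hcov v
        simp only [Set.mem_union, Set.mem_inter_iff, Set.mem_univ, iff_true]; tauto
      · rintro a ⟨ha1, ha2⟩ ha3 b hb hb' hab
        simp only [Set.mem_union, Set.mem_inter_iff, not_or, not_and] at ha3 hb hb'
        have haQ1 : a ∉ Q1 := fun h => ha3.1 h ha2
        have hax : a ≠ x := fun h => haQ1 (h ▸ hxQ1)
        have hay : a ≠ y := fun h => hyP (h ▸ ha2)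
        have hab' : G'.Adj a b := by
          rcases hG a b hab with h | h | h
          · exact h
          · exact absurd h.1 hax
          · exact absurd h.1 hay
        by_cases hbP : b ∈ P
        · have hbP1 : b ∉ P1 := fun h => hb' h hbP
          have hbQ1 : b ∈ Q1 := (hcov1 b).resolve_left hbP1
          exact hn1 a ha1 haQ1 b hbQ1 hbP1 ⟨hab', ha2, hbP⟩
        · exact hn a ha2 ha3.2 b ((hcov b).resolve_left hbP) hbP hab'
    refine h1.trans (Set.ncard_le_ncard ?_ (Set.toFinite _))
    rintro v ⟨⟨hv1, hv2⟩, hv3⟩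
    refine ⟨hv1, ?_⟩
    rcases hv3 with hv3 | hv3
    · exact hv3.1
    · exact hB1 (Or.inr ⟨hv2, hv3⟩))
  obtain ⟨d, hd1, hd2, hd3, hd4⟩ := transversal hf2 hf4 hcard
  refine ⟨f, d, fun i => (hf1 i).mono_graph (fun a _ b _ h => hle h.1), hf2, hf3, ?_, hd1, hd2,
    hd3, hd4⟩
  intro i
  apply (hf1 i).2 P
  · obtain ⟨a, ha1, ha2⟩ := hf3 i
    exact ⟨a, ha1, hA ha2⟩
  · intro a _ b _ _ h; exact h.2.2

theorem menger [Finite V] (k : ℕ) (G : SimpleGraph V) : ∀ (A B : Set V),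
    (∀ P Q, Sepn G A B P Q → k ≤ (P ∩ Q).ncard) → Lnk G k A B := by
  classical
  induction G using WellFoundedLT.induction with
  | ind G ih =>
  intro A B hcon
  by_cases hE : ∃ x y, G.Adj x y
  swap
  · have h1 := hcon A (Aᶜ ∪ (A ∩ B)) (by
      refine ⟨?_, subset_rfl, ?_, ?_⟩
      · rw [← Set.union_assoc]; simp
      · intro b hb; by_cases h : b ∈ A
        · exact Or.inr ⟨h, hb⟩
        · exact Or.inl h
      · intro a _ _ b _ _ hab; exact hE ⟨a, b, hab⟩)
    have h2 : A ∩ (Aᶜ ∪ (A ∩ B)) = A ∩ B := by ext; simp; tauto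
    rw [h2] at h1
    obtain ⟨T, hT1, hT2⟩ := Set.exists_subset_card_eq h1
    have e : Fin k ≃ T := by
      have : Nat.card T = k := by rw [Nat.card_coe_set_eq]; exact hT2
      exact (Finite.equivFinOfCardEq this).symm
    refine ⟨fun i => {(e i : V)}, fun i => conn_singleton _ _, ?_, ?_, ?_⟩
    · intro i j hij
      simp only [Set.disjoint_singleton, ne_eq]
      intro h; exact hij (e.injective (Subtype.ext h))
    · intro i; exact ⟨_, rfl, (hT1 (e i).2).1⟩
    · intro i; exact ⟨_, rfl, (hT1 (e i).2).2⟩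
  · obtain ⟨x0, y0, hxy0⟩ := hE
    set G' := G.deleteEdges {s(x0, y0)} with hG'
    have hle : G' ≤ G := SimpleGraph.deleteEdges_le _
    have hlt : G' < G := by
      refine lt_of_le_of_ne hle ?_
      intro h
      have : G'.Adj x0 y0 := by rw [h]; exact hxy0
      simp [hG'] at this
    by_cases hcon' : ∀ P Q, Sepn G' A B P Q → k ≤ (P ∩ Q).ncard
    · obtain ⟨f, h1, h2, h3⟩ := ih G' hlt A B hcon'
      exact ⟨f, fun i => (h1 i).mono_graph (fun a _ b _ h => hle h), h2, h3⟩
    · push Not at hcon'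
      obtain ⟨P, Q, hs, hk⟩ := hcon'
      have hnot : ¬ Sepn G A B P Q := fun h => absurd (hcon P Q h) (by omega)
      have hs' := hs
      obtain ⟨hc, hA, hB, hn⟩ := hs'
      have : ∃ x, x ∈ P ∧ x ∉ Q ∧ ∃ y, y ∈ Q ∧ y ∉ P ∧ G.Adj x y := by
        by_contra hcc
        exact hnot ⟨hc, hA, hB, fun x h1 h2 y h3 h4 h5 => hcc ⟨x, h1, h2, y, h3, h4, h5⟩⟩
      obtain ⟨x, hxP, hxQ, y, hyQ, hyP, hxy⟩ := this
      have hsxy : s(x, y) = s(x0, y0) := by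
        by_contra hne
        exact hn x hxP hxQ y hyQ hyP (by rw [hG', SimpleGraph.deleteEdges_adj]; exact ⟨hxy, hne⟩)
      have hG : ∀ a b, G.Adj a b → G'.Adj a b ∨ (a = x ∧ b = y) ∨ (a = y ∧ b = x) := by
        intro a b hab
        by_cases h : s(a, b) = s(x, y)
        · right; simpa using h
        · left; rw [hG', SimpleGraph.deleteEdges_adj]; exact ⟨hab, by rw [← hsxy]; exact h⟩
      have hres : ∀ P, resG G' P < G := fun P =>
        lt_of_le_of_lt (fun a b h => h.1) hlt
      obtain ⟨f, d, f1, f2, f3, f4, f5, f6, f7, f8⟩ := half hG hle hs hxP hxQ hyQ hyP hcon hk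
        (ih _ (hres P))
      obtain ⟨g, d', g1, g2, g3, g4, g5, g6, g7, g8⟩ := half (x := y) (y := x)
        (fun a b h => (hG a b h).imp_right Or.symm) hle hs.symm hyQ hyP hxP hxQ
        (fun P Q h => by rw [Set.inter_comm]; exact hcon Q P h.symm)
        (by rwa [Set.inter_comm]) (ih _ (hres Q))
      let φ : V → V := fun e => if e = x then y else e
      have hj : ∀ i, ∃ j, d' j = φ (d i) := by
        intro i
        have h1 : d i ∈ insert x (P ∩ Q) := by rw [← f6]; exact ⟨i, rfl⟩
        have h2 : φ (d i) ∈ insert y (Q ∩ P) := by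
          simp only [φ]
          split_ifs with h
          · exact Set.mem_insert _ _
          · rcases h1 with h1 | h1
            · exact absurd h1 h
            · exact Or.inr ⟨h1.2, h1.1⟩
        rw [← g6] at h2
        exact h2
      choose j hj using hj
      have hdP : ∀ i, d i ∈ P := fun i => f4 i (f7 i)
      have hjinj : ∀ i i', j i = j i' → i = i' := by
        intro i i' h
        apply f5
        have h1 : φ (d i) = φ (d i') := by rw [← hj, ← hj, h]
        simp only [φ] at h1
        split_ifs at h1 with h2 h3 h3
        · rw [h2, h3]
        · exact absurd (h1 ▸ hdP i') hyP
        · exact absurd (h1 ▸ hdP i) hyP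
        · exact h1
      have hcross : ∀ i i', i ≠ i' → Disjoint (f i) (g (j i')) := by
        intro i i' hne
        rw [Set.disjoint_left]
        intro z hz hz'
        have hzP := f4 i hz
        have hzQ := g4 _ hz'
        have h1 := f8 i z hz (Or.inr ⟨hzP, hzQ⟩)
        have h2 := g8 _ z hz' (Or.inr ⟨hzQ, hzP⟩)
        rw [hj] at h2
        simp only [φ] at h2
        split_ifs at h2 with h3
        · exact hyP (h2 ▸ hzP)
        · exact hne (f5 (h1.symm.trans h2))
      refine ⟨fun i => f i ∪ g (j i), ?_, ?_, ?_, ?_⟩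
      · intro i
        apply (f1 i).union (g1 _)
        have h1 := hj i
        simp only [φ] at h1
        split_ifs at h1 with h2
        · right
          exact ⟨x, h2 ▸ f7 i, y, h1 ▸ g7 (j i), hxy⟩
        · left
          exact ⟨d i, f7 i, h1 ▸ g7 (j i)⟩
      · intro i i' hne
        rw [Set.disjoint_union_left, Set.disjoint_union_right, Set.disjoint_union_right]
        exact ⟨⟨f2 i i' hne, hcross i i' hne⟩, (hcross i' i hne.symm).symm,
          g2 _ _ (fun h => hne (hjinj _ _ h))⟩
      · intro i
        obtain ⟨a, ha, ha'⟩ := f3 i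
        exact ⟨a, Or.inl ha, ha'⟩
      · intro i
        obtain ⟨a, ha, ha'⟩ := g3 (j i)
        exact ⟨a, Or.inr ha, ha'⟩

end PW


namespace PW
variable {V : Type*}

/-- Inner vertex boundary. -/
def bd (G : SimpleGraph V) (X : Set V) : Set V := {v | v ∈ X ∧ ∃ u, u ∉ X ∧ G.Adj v u}

theorem bd_subset (G : SimpleGraph V) (X : Set V) : bd G X ⊆ X := fun _ h => h.1

theorem bd_submod [Finite V] (G : SimpleGraph V) (A B : Set V) :
    (bd G (A ∩ B)).ncard + (bd G (A ∪ B)).ncard ≤ (bd G A).ncard + (bd G B).ncard := by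
  rw [← Set.ncard_union_add_ncard_inter (bd G (A ∩ B)),
    ← Set.ncard_union_add_ncard_inter (bd G A)]
  apply add_le_add
  · apply Set.ncard_le_ncard _ (Set.toFinite _)
    rintro v (⟨⟨hA, hB⟩, u, hu, hvu⟩ | ⟨hv, u, hu, hvu⟩)
    · by_cases h : u ∈ A
      · exact Or.inr ⟨hB, u, fun h' => hu ⟨h, h'⟩, hvu⟩
      · exact Or.inl ⟨hA, u, h, hvu⟩
    · simp only [Set.mem_union, not_or] at hu
      rcases hv with hv | hv
      · exact Or.inl ⟨hv, u, hu.1, hvu⟩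
      · exact Or.inr ⟨hv, u, hu.2, hvu⟩
  · apply Set.ncard_le_ncard _ (Set.toFinite _)
    rintro v ⟨⟨⟨hA, hB⟩, -⟩, ⟨hv, u, hu, hvu⟩⟩
    simp only [Set.mem_union, not_or] at hu
    exact ⟨⟨hA, u, hu.1, hvu⟩, ⟨hB, u, hu.2, hvu⟩⟩

/-- Sets reachable by adding vertices one at a time, keeping boundaries small. -/
inductive Good (G : SimpleGraph V) (w : ℕ) : Set V → Prop
  | empty : Good G w ∅
  | step (X : Set V) (u : V) : Good G w X → u ∉ X → (bd G X).ncard ≤ w → Good G w (insert u X)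

theorem Good.decomp [Finite V] {G : SimpleGraph V} {w : ℕ} {X : Set V} (h : Good G w X) :
    ∃ (n : ℕ) (B : ℕ → Set V), (∀ i < n, (B i).ncard ≤ w + 1) ∧ (∀ i < n, B i ⊆ X) ∧
      (∀ v ∈ X, ∃ i < n, v ∈ B i) ∧
      (∀ u ∈ X, ∀ v ∈ X, G.Adj u v → ∃ i < n, u ∈ B i ∧ v ∈ B i) ∧
      (∀ i j k, i ≤ j → j ≤ k → k < n → ∀ v, v ∈ B i → v ∈ B k → v ∈ B j) ∧
      (∀ v ∈ bd G X, ∀ i j, i ≤ j → j < n → v ∈ B i → v ∈ B j) := by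
  induction h with
  | empty =>
    refine ⟨0, fun _ => ∅, by simp, by simp, by simp, by simp, by simp, by simp⟩
  | step X u hX hu hw ih =>
    obtain ⟨n, B, h1, h2, h3, h4, h5, h6⟩ := ih
    obtain ⟨B', hlt, hn⟩ : ∃ B' : ℕ → Set V, (∀ i, i < n → B' i = B i) ∧
        B' n = insert u (bd G X) :=
      ⟨fun i => if i < n then B i else insert u (bd G X), fun i hi => by simp [hi], by simp⟩
    refine ⟨n + 1, B', ?_, ?_, ?_, ?_, ?_, ?_⟩
    · intro i hi
      by_cases h : i < n
      · rw [hlt i h]; exact h1 i h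
      · have hin : i = n := by omega
        rw [hin, hn]
        have := Set.ncard_insert_le u (bd G X); omega
    · intro i hi
      by_cases h : i < n
      · rw [hlt i h]; exact (h2 i h).trans (Set.subset_insert _ _)
      · have hin : i = n := by omega
        rw [hin, hn]
        exact Set.insert_subset_insert (bd_subset G X)
    · rintro v (rfl | hv)
      · exact ⟨n, by omega, by rw [hn]; exact Set.mem_insert _ _⟩
      · obtain ⟨i, hi, hv⟩ := h3 v hv
        exact ⟨i, by omega, by rw [hlt i hi]; exact hv⟩
    · rintro a (rfl | ha) b (rfl | hb) hab
      · exact absurd hab (G.irrefl)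
      · exact ⟨n, by omega, by
          rw [hn]; exact ⟨Set.mem_insert _ _, Or.inr ⟨hb, a, hu, hab.symm⟩⟩⟩
      · exact ⟨n, by omega, by
          rw [hn]; exact ⟨Or.inr ⟨ha, b, hu, hab⟩, Set.mem_insert _ _⟩⟩
      · obtain ⟨i, hi, hv⟩ := h4 a ha b hb hab
        exact ⟨i, by omega, by rw [hlt i hi]; exact hv⟩
    · intro i j k hij hjk hk v hvi hvk
      by_cases hkn : k < n
      · rw [hlt i (by omega)] at hvi
        rw [hlt k hkn] at hvk
        rw [hlt j (by omega)]
        exact h5 i j k hij hjk hkn v hvi hvk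
      · have hkn' : k = n := by omega
        subst hkn'
        by_cases hj : j < k
        · rw [hlt i (by omega)] at hvi
          rw [hn] at hvk
          rw [hlt j hj]
          rcases hvk with rfl | hvk
          · exact absurd (h2 i (by omega) hvi) hu
          · exact h6 v hvk i j hij hj hvi
        · have : j = k := by omega
          subst this
          exact hvk
    · rintro v ⟨hv, t, ht, hvt⟩ i j hij hj hvi
      simp only [Set.mem_insert_iff, not_or] at ht
      by_cases hi : i < n
      · rw [hlt i hi] at hvi
        have hvX := h2 i hi hvi
        have hvb : v ∈ bd G X := ⟨hvX, t, ht.2, hvt⟩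
        by_cases hjn : j < n
        · rw [hlt j hjn]; exact h6 v hvb i j hij hjn hvi
        · have : j = n := by omega
          subst this
          rw [hn]; exact Or.inr hvb
      · have : i = j := by omega
        rw [← this]; exact hvi

theorem Good.pathwidth_le [Fintype V] {G : SimpleGraph V} {w : ℕ} (h : Good G w Set.univ) :
    pathwidth G ≤ w := by
  classical
  obtain ⟨n, B, h1, h2, h3, h4, h5, h6⟩ := h.decomp
  apply Nat.sInf_le
  refine ⟨n, fun i => (Set.toFinite (B i)).toFinset, ⟨?_, ?_, ?_⟩, ?_⟩
  · intro v
    obtain ⟨i, hi, hv⟩ := h3 v trivial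
    exact ⟨⟨i, hi⟩, by simpa using hv⟩
  · intro u v huv
    obtain ⟨i, hi, hv⟩ := h4 u trivial v trivial huv
    exact ⟨⟨i, hi⟩, by simpa using hv⟩
  · intro i j k hij hjk v hi hk
    simp only [Set.Finite.mem_toFinset] at *
    exact h5 i j k hij hjk k.2 v hi hk
  · intro i
    have := h1 i i.2
    rwa [Set.ncard_eq_toFinset_card _ (Set.toFinite (B i))] at this

theorem Good.inter [Finite V] {G : SimpleGraph V} {w : ℕ} {X Y Z : Set V} (h : Good G w X)
    (hXY : X ⊆ Y) (hZY : Z ⊆ Y)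
    (hmin : ∀ W, Z ⊆ W → W ⊆ Y → (bd G Z).ncard ≤ (bd G W).ncard) : Good G w (X ∩ Z) := by
  induction h with
  | empty => simpa using Good.empty
  | step X u hX hu hw ih =>
    have hXY' : X ⊆ Y := (Set.subset_insert _ _).trans hXY
    have ih := ih hXY'
    by_cases huZ : u ∈ Z
    · rw [Set.insert_inter_of_mem huZ]
      apply Good.step _ _ ih (fun h => hu h.1)
      have h1 := bd_submod G X Z
      have h2 := hmin (X ∪ Z) Set.subset_union_right (Set.union_subset hXY' hZY)
      omega
    · rw [Set.insert_inter_of_notMem huZ]; exact ih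

theorem exists_max_good [Finite V] {G : SimpleGraph V} {w n : ℕ} {X : Set V} (h : Good G w X)
    (hn : (bd G X).ncard ≤ n) : ∃ Y, Good G w Y ∧ X ⊆ Y ∧ (bd G Y).ncard ≤ n ∧
      ∀ Y', Good G w Y' → Y ⊂ Y' → n < (bd G Y').ncard := by
  obtain ⟨Y, hXY, hY⟩ := (Set.toFinite {Y : Set V | Good G w Y ∧ (bd G Y).ncard ≤ n}).exists_le_maximal
    (a := X) ⟨h, hn⟩
  refine ⟨Y, hY.1.1, hXY, hY.1.2, ?_⟩
  intro Y' hY' hlt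
  by_contra hcon
  exact hlt.2 (hY.2 ⟨hY', by omega⟩ hlt.1)

/-- The linking step. -/
theorem link_step [Finite V] {G : SimpleGraph V} {w i : ℕ} {X' Y : Set V}
    (hY : Good G w Y) (hXY : X' ⊆ Y)
    (hno : ∀ Z, X' ⊆ Z → Good G w Z → i < (bd G Z).ncard) :
    Lnk (resG G ((Y \ X') ∪ bd G X')) (i + 1) (bd G X') (bd G Y) := by
  apply menger
  rintro P Q ⟨hc, hA, hB, hn⟩
  by_contra hlt
  have hcov : ∀ v, v ∈ P ∨ v ∈ Q := fun v => by
    have : v ∈ P ∪ Q := by rw [hc]; trivial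
    exact this
  have hbZ : bd G (X' ∪ (P ∩ Y)) ⊆ P ∩ Q := by
    rintro v ⟨hv, t, ht, hvt⟩
    simp only [Set.mem_union, Set.mem_inter_iff, not_or, not_and] at ht
    have hvY : v ∈ Y := by
      rcases hv with hv | hv
      · exact hXY hv
      · exact hv.2
    have hvR : v ∈ P ∧ v ∈ (Y \ X') ∪ bd G X' := by
      by_cases hvX : v ∈ X'
      · have : v ∈ bd G X' := ⟨hvX, t, ht.1, hvt⟩
        exact ⟨hA this, Or.inr this⟩
      · exact ⟨(hv.resolve_left hvX).1, Or.inl ⟨hvY, hvX⟩⟩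
    refine ⟨hvR.1, ?_⟩
    by_contra hvQ
    by_cases htY : t ∈ Y
    · have htP : t ∉ P := fun h => ht.2 h htY
      exact hn v hvR.1 hvQ t ((hcov t).resolve_left htP) htP ⟨hvt, hvR.2, Or.inl ⟨htY, ht.1⟩⟩
    · exact hvQ (hB ⟨hvY, t, htY, hvt⟩)
  have hZle : (bd G (X' ∪ (P ∩ Y))).ncard ≤ (P ∩ Q).ncard :=
    Set.ncard_le_ncard hbZ (Set.toFinite _)
  obtain ⟨Z, ⟨hZ1, hZ2⟩, hZ3⟩ := Set.exists_min_image {Z : Set V | X' ⊆ Z ∧ Z ⊆ Y}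
    (fun Z => (bd G Z).ncard) (Set.toFinite _) ⟨X', subset_rfl, hXY⟩
  have h1 := hZ3 (X' ∪ (P ∩ Y)) ⟨Set.subset_union_left, Set.union_subset hXY Set.inter_subset_right⟩
  have h2 : Good G w (Y ∩ Z) := hY.inter subset_rfl hZ2
    (fun W hW1 hW2 => hZ3 W ⟨hZ1.trans hW1, hW2⟩)
  rw [Set.inter_eq_right.2 hZ2] at h2
  have h3 := hno Z hZ1 h2
  omega

theorem brst_step [Finite V] {G : SimpleGraph V} {w : ℕ} (hng : ¬ Good G w Set.univ) :
    ∀ i, i ≤ w + 1 → ∃ (F : ℕ → Set V) (X : Set V), Good G w X ∧ (bd G X).ncard = i ∧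
      (∀ Y, Good G w Y → X ⊂ Y → i < (bd G Y).ncard) ∧
      (∀ j, 1 ≤ j → j ≤ i → Conn G (F j) ∧ F j ⊆ X ∧ (F j ∩ bd G X).Nonempty) ∧
      (∀ j j', 1 ≤ j → j ≤ i → 1 ≤ j' → j' ≤ i → j ≠ j' → Disjoint (F j) (F j')) ∧
      (∀ j, 2 ≤ j → j ≤ i → Tch G (F j) (F (j / 2))) := by
  classical
  intro i
  induction i with
  | zero =>
    intro _
    obtain ⟨Y, h1, -, h3, h4⟩ := exists_max_good (n := 0) (Good.empty (G := G) (w := w))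
      (by simp [bd])
    refine ⟨fun _ => ∅, Y, h1, by omega, h4, ?_, ?_, ?_⟩ <;> intros <;> omega
  | succ i ih =>
    intro hi
    obtain ⟨F, X, hX, hXi, hmax, hF1, hF2, hF3⟩ := ih (by omega)
    have hu : ∃ u, u ∉ X ∧ (2 ≤ i + 1 → Tch G {u} (F ((i + 1) / 2))) := by
      by_cases hi2 : 2 ≤ i + 1
      · obtain ⟨v, hv1, hv2, u, hu, hvu⟩ := (hF1 ((i + 1) / 2) (by omega) (by omega)).2.2
        exact ⟨u, hu, fun _ => ⟨u, rfl, v, hv1, hvu.symm⟩⟩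
      · have : X ≠ Set.univ := fun h => hng (h ▸ hX)
        obtain ⟨u, hu⟩ := (Set.ne_univ_iff_exists_notMem _).1 this
        exact ⟨u, hu, fun h => absurd h hi2⟩
    obtain ⟨u, huX, hut⟩ := hu
    set X' := insert u X with hX'
    have hXX' : X ⊂ X' := Set.ssubset_insert huX
    have hX'g : Good G w X' := Good.step X u hX huX (by omega)
    have hsub : bd G X' ⊆ insert u (bd G X) := by
      rintro v ⟨hv, t, ht, hvt⟩
      simp only [hX', Set.mem_insert_iff, not_or] at ht hv
      rcases hv with rfl | hv
      · exact Set.mem_insert _ _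
      · exact Or.inr ⟨hv, t, ht.2, hvt⟩
    have hc1 := hmax X' hX'g hXX'
    have hc2 := Set.ncard_insert_le u (bd G X)
    have hbd : bd G X' = insert u (bd G X) :=
      Set.eq_of_subset_of_ncard_le hsub (by omega) (Set.toFinite _)
    have hcard : (bd G X').ncard = i + 1 := by
      have := Set.ncard_le_ncard hsub (Set.toFinite _)
      omega
    obtain ⟨Y, hY, hXY, hY1, hY2⟩ := exists_max_good hX'g hcard.le
    have hYX : X ⊂ Y := lt_of_lt_of_le hXX' hXY
    have hY3 := hmax Y hY hYX
    obtain ⟨g, g1, g2, g3, g4⟩ := link_step (i := i) hY hXY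
      (fun Z hZ hZg => hmax Z hZg (lt_of_lt_of_le hXX' hZ))
    have gR : ∀ a, g a ⊆ (Y \ X') ∪ bd G X' := by
      intro a
      apply (g1 a).2
      · obtain ⟨z, hz, hz'⟩ := g3 a
        exact ⟨z, hz, Or.inr hz'⟩
      · intro _ _ b _ _ h; exact h.2.2
    obtain ⟨d, d1, d2, d3, d4⟩ := transversal g2 g3 hcard
    let F0 : ℕ → Set V := fun j => if j = i + 1 then {u} else F j
    have hF0 : ∀ j, 1 ≤ j → j ≤ i + 1 → Conn G (F0 j) ∧ F0 j ⊆ X' ∧ (F0 j ∩ bd G X').Nonempty := by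
      intro j hj hj'
      simp only [F0]
      split_ifs with h
      · refine ⟨conn_singleton G u, by simp [hX'], ⟨u, rfl, ?_⟩⟩
        rw [hbd]; exact Set.mem_insert _ _
      · obtain ⟨h1, h2, z, h3, h4⟩ := hF1 j hj (by omega)
        refine ⟨h1, h2.trans (Set.subset_insert _ _), z, h3, ?_⟩
        rw [hbd]; exact Or.inr h4
    have hF0d : ∀ j j', 1 ≤ j → j ≤ i + 1 → 1 ≤ j' → j' ≤ i + 1 → j ≠ j' →
        Disjoint (F0 j) (F0 j') := by
      have aux : ∀ j, 1 ≤ j → j ≤ i → u ∉ F j := fun j h1 h2 h => huX ((hF1 j h1 h2).2.1 h)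
      intro j j' h1 h2 h3 h4 hne
      simp only [F0]
      split_ifs with h5 h6 h6
      · omega
      · rw [Set.disjoint_singleton_left]; exact aux j' h3 (by omega)
      · rw [Set.disjoint_singleton_right]; exact aux j h1 (by omega)
      · exact hF2 j j' h1 (by omega) h3 (by omega) hne
    have hm : ∀ j, ∃ m, 1 ≤ j → j ≤ i + 1 → d m ∈ F0 j := by
      intro j
      by_cases h : 1 ≤ j ∧ j ≤ i + 1
      · obtain ⟨e, he1, he2⟩ := (hF0 j h.1 h.2).2.2
        rw [← d2] at he2
        obtain ⟨m, rfl⟩ := he2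
        exact ⟨m, fun _ _ => he1⟩
      · exact ⟨0, fun h1 h2 => absurd ⟨h1, h2⟩ h⟩
    choose m hm using hm
    have hcross : ∀ j j', 1 ≤ j → j ≤ i + 1 → 1 ≤ j' → j' ≤ i + 1 → j ≠ j' →
        Disjoint (F0 j) (g (m j')) := by
      intro j j' h1 h2 h3 h4 hne
      rw [Set.disjoint_left]
      intro z hz hz'
      have hzX := (hF0 j h1 h2).2.1 hz
      have hzb : z ∈ bd G X' := (gR _ hz').resolve_left (fun h => h.2 hzX)
      have := d4 _ z hz' hzb
      subst this
      exact Set.disjoint_left.1 (hF0d j j' h1 h2 h3 h4 hne) hz (hm j' h3 h4)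
    refine ⟨fun j => F0 j ∪ g (m j), Y, hY, by omega, hY2, ?_, ?_, ?_⟩
    · intro j h1 h2
      refine ⟨?_, ?_, ?_⟩
      · exact (hF0 j h1 h2).1.union ((g1 _).mono_graph (fun a _ b _ h => h.1))
          (Or.inl ⟨_, hm j h1 h2, d3 _⟩)
      · apply Set.union_subset ((hF0 j h1 h2).2.1.trans hXY)
        refine (gR _).trans (Set.union_subset Set.sdiff_subset ((bd_subset _ _).trans hXY))
      · exact (g4 (m j)).mono (Set.inter_subset_inter_left _ Set.subset_union_right)
    · intro j j' h1 h2 h3 h4 hne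
      rw [Set.disjoint_union_left, Set.disjoint_union_right, Set.disjoint_union_right]
      refine ⟨⟨hF0d j j' h1 h2 h3 h4 hne, hcross j j' h1 h2 h3 h4 hne⟩,
        (hcross j' j h3 h4 h1 h2 hne.symm).symm, g2 _ _ ?_⟩
      intro h
      exact Set.disjoint_left.1 (hF0d j j' h1 h2 h3 h4 hne) (hm j h1 h2) (h ▸ hm j' h3 h4)
    · intro j h1 h2
      refine Tch.mono (X := F0 j) (Y := F0 (j / 2)) ?_ Set.subset_union_left Set.subset_union_left
      have hne : j / 2 ≠ i + 1 := by omega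
      by_cases h : j = i + 1
      · subst h
        simp only [F0, if_true, if_neg hne]
        exact hut (by omega)
      · simp only [F0, if_neg hne, if_neg h]
        exact hF3 j h1 (by omega)

/-- Rooted binary tree models: root set `Z`, total set `X`. -/
def Tr (G : SimpleGraph V) : ℕ → Set V → Set V → Prop
  | 0, Z, X => Conn G X ∧ Z = X
  | n + 1, Z, X => ∃ Z0 X0 Z1 X1, Conn G Z ∧ Tr G n Z0 X0 ∧ Tr G n Z1 X1 ∧ Tch G Z Z0 ∧
      Tch G Z Z1 ∧ Disjoint Z X0 ∧ Disjoint Z X1 ∧ Disjoint X0 X1 ∧ X = Z ∪ X0 ∪ X1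

theorem tr_of_heap {G : SimpleGraph V} {F : ℕ → Set V} {M : ℕ}
    (hF1 : ∀ j, 1 ≤ j → j ≤ M → Conn G (F j))
    (hF2 : ∀ j j', 1 ≤ j → j ≤ M → 1 ≤ j' → j' ≤ M → j ≠ j' → Disjoint (F j) (F j'))
    (hF3 : ∀ j, 2 ≤ j → j ≤ M → Tch G (F j) (F (j / 2))) :
    ∀ n j, 1 ≤ j → 2 ^ n * (j + 1) ≤ M + 1 →
      Tr G n (F j) (⋃ i ∈ {i | ∃ d ≤ n, i / 2 ^ d = j}, F i) := by
  have hb : ∀ n j i, 1 ≤ j → 2 ^ n * (j + 1) ≤ M + 1 → (∃ d ≤ n, i / 2 ^ d = j) →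
      j ≤ i ∧ i ≤ M := by
    rintro n j i hj hM ⟨d, hd, rfl⟩
    refine ⟨Nat.div_le_self _ _, ?_⟩
    have h1 : i < 2 ^ d * (i / 2 ^ d + 1) := Nat.lt_mul_div_succ i (by positivity)
    have h2 : 2 ^ d * (i / 2 ^ d + 1) ≤ 2 ^ n * (i / 2 ^ d + 1) :=
      Nat.mul_le_mul_right _ (Nat.pow_le_pow_right (by norm_num) hd)
    omega
  intro n
  induction n with
  | zero =>
    intro j hj hM
    have : (⋃ i ∈ {i | ∃ d ≤ 0, i / 2 ^ d = j}, F i) = F j := by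
      ext v; simp
    rw [this]
    exact ⟨hF1 j hj (by simp at hM; omega), rfl⟩
  | succ n ih =>
    intro j hj hM
    have hM' : 2 ^ n * (2 * j + 1 + 1) ≤ M + 1 := by
      calc 2 ^ n * (2 * j + 1 + 1) = 2 ^ (n + 1) * (j + 1) := by ring
        _ ≤ _ := hM
    have hM'' : 2 ^ n * (2 * j + 1) ≤ M + 1 :=
      (Nat.mul_le_mul_left _ (by omega)).trans hM'
    have hMj : 2 * j + 1 ≤ M := by
      have : 1 ≤ 2 ^ n := Nat.one_le_two_pow
      nlinarith
    have hpar : ∀ i d e a b, i / 2 ^ d = a → i / 2 ^ e = b → d < e → b ≤ a / 2 := by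
      intro i d e a b ha hb hde
      obtain ⟨c, rfl⟩ : ∃ c, e = d + 1 + c := ⟨e - (d + 1), by omega⟩
      rw [← hb, ← ha, pow_add, pow_add, ← Nat.div_div_eq_div_mul, ← Nat.div_div_eq_div_mul]
      simpa using Nat.div_le_self (i / 2 ^ d / 2) (2 ^ c)
    refine ⟨_, _, _, _, hF1 j hj (by omega), ih (2 * j) (by omega) hM'',
      ih (2 * j + 1) (by omega) hM', ?_, ?_, ?_, ?_, ?_, ?_⟩
    · have := hF3 (2 * j) (by omega) (by omega)
      rw [Nat.mul_div_cancel_left _ (by norm_num)] at this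
      exact this.symm
    · have := hF3 (2 * j + 1) (by omega) (by omega)
      rw [show (2 * j + 1) / 2 = j by omega] at this
      exact this.symm
    · simp only [Set.disjoint_iUnion_right]
      intro i hi
      have := hb n (2 * j) i (by omega) hM'' hi
      exact hF2 _ _ hj (by omega) (by omega) (by omega) (by omega)
    · simp only [Set.disjoint_iUnion_right]
      intro i hi
      have := hb n (2 * j + 1) i (by omega) hM' hi
      exact hF2 _ _ hj (by omega) (by omega) (by omega) (by omega)
    · simp only [Set.disjoint_iUnion_right, Set.disjoint_iUnion_left]
      intro i' hi' i hi
      have h1 := hb n (2 * j) i (by omega) hM'' hi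
      have h2 := hb n (2 * j + 1) i' (by omega) hM' hi'
      refine hF2 _ _ (by omega) (by omega) (by omega) (by omega) ?_
      rintro rfl
      obtain ⟨d, -, hd⟩ := hi
      obtain ⟨e, -, he⟩ := hi'
      rcases lt_trichotomy d e with h | h | h
      · have := hpar i d e _ _ hd he h; omega
      · subst h; omega
      · have := hpar i e d _ _ he hd h; omega
    · ext v
      simp only [Set.mem_iUnion, Set.mem_union, Set.mem_ofPred_eq, exists_prop]
      constructor
      · rintro ⟨i, ⟨d, hd, hi⟩, hv⟩
        rcases d with _ | d
        · simp at hi; subst hi; exact Or.inl (Or.inl hv)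
        · rw [pow_succ, ← Nat.div_div_eq_div_mul] at hi
          have : i / 2 ^ d = 2 * j ∨ i / 2 ^ d = 2 * j + 1 := by omega
          rcases this with h | h
          · exact Or.inl (Or.inr ⟨i, ⟨d, by omega, h⟩, hv⟩)
          · exact Or.inr ⟨i, ⟨d, by omega, h⟩, hv⟩
      · rintro ((hv | ⟨i, ⟨d, hd, hi⟩, hv⟩) | ⟨i, ⟨d, hd, hi⟩, hv⟩)
        · exact ⟨j, ⟨0, by omega, by simp⟩, hv⟩
        · exact ⟨i, ⟨d + 1, by omega, by rw [pow_succ, ← Nat.div_div_eq_div_mul, hi]; omega⟩, hv⟩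
        · exact ⟨i, ⟨d + 1, by omega, by rw [pow_succ, ← Nat.div_div_eq_div_mul, hi]; omega⟩, hv⟩

theorem exists_tr [Fintype V] {G : SimpleGraph V} (N : ℕ) (h : 2 ^ (N + 1) ≤ pathwidth G) :
    ∃ Z X, Tr G N Z X := by
  have hpos : 1 ≤ 2 ^ (N + 1) := Nat.one_le_two_pow
  obtain ⟨F, X, -, -, -, h1, h2, h3⟩ := brst_step (G := G) (w := 2 ^ (N + 1) - 1)
    (fun hg => by have := hg.pathwidth_le; omega) (2 ^ (N + 1)) (by omega)
  exact ⟨_, _, tr_of_heap (M := 2 ^ (N + 1)) (fun j a b => (h1 j a b).1) h2 h3 N 1 le_rfl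
    (by rw [pow_succ]; omega)⟩

end PW


namespace PW
variable {V : Type*}

theorem Tr.conn {G : SimpleGraph V} {n : ℕ} {Z X : Set V} (h : Tr G n Z X) :
    Conn G X ∧ Conn G Z ∧ Z ⊆ X := by
  induction n generalizing Z X with
  | zero =>
    obtain ⟨h, rfl⟩ := h
    exact ⟨h, h, subset_rfl⟩
  | succ n ih =>
    obtain ⟨Z0, X0, Z1, X1, hZ, h0, h1, t0, t1, -, -, -, rfl⟩ := h
    obtain ⟨a0, b0, c0⟩ := ih h0
    obtain ⟨a1, b1, c1⟩ := ih h1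
    refine ⟨?_, hZ, fun z hz => Or.inl (Or.inl hz)⟩
    exact (hZ.union_tch a0 (t0.mono subset_rfl c0)).union_tch a1
      (t1.mono Set.subset_union_left c1)

theorem Tr.sub {G : SimpleGraph V} {k m : ℕ} {Z X : Set V} (h : Tr G (k + m) Z X) :
    ∃ Z' Y, Y ⊆ X ∧ Tr G m Z' Y := by
  induction k generalizing Z X with
  | zero => rw [Nat.zero_add] at h; exact ⟨Z, X, subset_rfl, h⟩
  | succ k ih =>
    rw [Nat.succ_add] at h
    obtain ⟨Z0, X0, Z1, X1, hZ, h0, h1, t0, t1, -, -, -, rfl⟩ := h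
    obtain ⟨Z', Y, hY, h⟩ := ih h0
    exact ⟨Z', Y, fun y hy => Or.inl (Or.inr (hY hy)), h⟩

theorem Tr.absorb1 {G : SimpleGraph V} {n : ℕ} {Z X : Set V} (h : Tr G n Z X) {v x : V}
    (hv : v ∉ X) (hx : x ∈ X) (hxv : G.Adj x v) :
    ∃ Z', Z ⊆ Z' ∧ Tr G n Z' (X ∪ {v}) := by
  induction n generalizing Z X with
  | zero =>
    obtain ⟨h, rfl⟩ := h
    exact ⟨Z ∪ {v}, Set.subset_union_left,
      h.union_tch (conn_singleton G v) ⟨x, hx, v, rfl, hxv⟩, rfl⟩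
  | succ n ih =>
    obtain ⟨Z0, X0, Z1, X1, hZ, h0, h1, t0, t1, d0, d1, d2, rfl⟩ := h
    simp only [Set.mem_union, not_or] at hv
    rcases hx with (hx | hx) | hx
    · refine ⟨Z ∪ {v}, Set.subset_union_left, Z0, X0, Z1, X1,
        hZ.union_tch (conn_singleton G v) ⟨x, hx, v, rfl, hxv⟩, h0, h1,
        t0.mono Set.subset_union_left subset_rfl, t1.mono Set.subset_union_left subset_rfl,
        ?_, ?_, d2, ?_⟩
      · simp [d0, hv]
      · simp [d1, hv]
      · ext; simp only [Set.mem_union]; tauto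
    · obtain ⟨Z', hZ', h⟩ := ih h0 hv.1.2 hx
      refine ⟨Z, subset_rfl, Z', X0 ∪ {v}, Z1, X1, hZ, h, h1, t0.mono subset_rfl hZ', t1, ?_, d1,
        ?_, ?_⟩
      · simp [d0, hv]
      · simp [d2, hv]
      · ext; simp only [Set.mem_union]; tauto
    · obtain ⟨Z', hZ', h⟩ := ih h1 hv.2 hx
      refine ⟨Z, subset_rfl, Z0, X0, Z', X1 ∪ {v}, hZ, h0, h, t0, t1.mono subset_rfl hZ', d0, ?_,
        ?_, ?_⟩
      · simp [d1, hv]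
      · simp [d2, hv]
      · ext; simp only [Set.mem_union]; tauto

theorem Tr.absorb [Finite V] {G : SimpleGraph V} {n : ℕ} {Z X C : Set V} (h : Tr G n Z X)
    (hXC : X ⊆ C) (hC : Conn G C) : ∃ Z', Tr G n Z' C := by
  obtain ⟨Y, hXY, hY⟩ := (Set.toFinite {Y : Set V | Y ⊆ C ∧ ∃ Z', Tr G n Z' Y}).exists_le_maximal
    (a := X) ⟨hXC, Z, h⟩
  obtain ⟨hYC, Z', hZ'⟩ := hY.1
  by_cases hne : (C \ Y).Nonempty
  · obtain ⟨y, hy, v, hv, hyv⟩ := hC.tch (Y := Y) (Z := C \ Y)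
      (by rw [Set.union_sdiff_cancel hYC]) hZ'.conn.1.1 hne Set.disjoint_sdiff_right
    obtain ⟨Z'', -, h''⟩ := hZ'.absorb1 hv.2 hy hyv
    exact absurd (hY.2 (y := Y ∪ {v}) ⟨Set.union_subset hYC (by simpa using hv.1), Z'', h''⟩
      Set.subset_union_left (Or.inr rfl)) hv.2
  · rw [Set.not_nonempty_iff_eq_empty, Set.sdiff_eq_empty] at hne
    have : Y = C := Set.Subset.antisymm hYC hne
    exact ⟨Z', this ▸ hZ'⟩

/-- Tree models whose leaves meet `B`. -/
def BT (G : SimpleGraph V) (B : Set V) : ℕ → Set V → Set V → Prop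
  | 0, Z, X => Conn G X ∧ Z = X ∧ (X ∩ B).Nonempty
  | n + 1, Z, X => ∃ Z0 X0 Z1 X1, Conn G Z ∧ BT G B n Z0 X0 ∧ BT G B n Z1 X1 ∧ Tch G Z Z0 ∧
      Tch G Z Z1 ∧ Disjoint Z X0 ∧ Disjoint Z X1 ∧ Disjoint X0 X1 ∧ X = Z ∪ X0 ∪ X1

theorem BT.mono {G : SimpleGraph V} {B B' : Set V} {n : ℕ} {Z X : Set V} (h : BT G B n Z X)
    (hB : B ⊆ B') : BT G B' n Z X := by
  induction n generalizing Z X with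
  | zero =>
    obtain ⟨h, h', h''⟩ := h
    exact ⟨h, h', h''.mono (Set.inter_subset_inter_right _ hB)⟩
  | succ n ih =>
    obtain ⟨Z0, X0, Z1, X1, hZ, h0, h1, r⟩ := h
    exact ⟨Z0, X0, Z1, X1, hZ, ih h0, ih h1, r⟩

theorem BT.sub {G : SimpleGraph V} {B : Set V} {n : ℕ} {Z X : Set V} (h : BT G B n Z X) :
    Z ⊆ X := by
  cases n with
  | zero => exact h.2.1.le
  | succ n =>
    obtain ⟨Z0, X0, Z1, X1, hZ, h0, h1, _, _, _, _, _, rfl⟩ := h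
    exact fun z hz => Or.inl (Or.inl hz)

theorem BT.root {G : SimpleGraph V} {B : Set V} {n : ℕ} {Z X T : Set V} (h : BT G B n Z X)
    (hT : Conn G T) (hZT : Tch G Z T) (hd : Disjoint T X) : BT G B n (Z ∪ T) (X ∪ T) := by
  cases n with
  | zero =>
    obtain ⟨h, rfl, h''⟩ := h
    exact ⟨h.union_tch hT hZT, rfl, h''.mono (Set.inter_subset_inter_left _ Set.subset_union_left)⟩
  | succ n =>
    obtain ⟨Z0, X0, Z1, X1, hZ, h0, h1, t0, t1, d0, d1, d2, rfl⟩ := h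
    simp only [Set.disjoint_union_right] at hd
    refine ⟨Z0, X0, Z1, X1, hZ.union_tch hT hZT, h0, h1, t0.mono Set.subset_union_left subset_rfl,
      t1.mono Set.subset_union_left subset_rfl, ?_, ?_, d2, ?_⟩
    · simp [d0, hd]
    · simp [d1, hd]
    · ext; simp only [Set.mem_union]; tauto

theorem BT.map {G : SimpleGraph V} {B : Set V} {n : ℕ} {Z X : Set V} (h : BT G B n Z X) :
    ∃ f : List Bool → Set V, f [] = Z ∧ (∀ l, l.length ≤ n → Conn G (f l) ∧ f l ⊆ X) ∧
      (∀ l b, l.length < n → Tch G (f l) (f (l ++ [b]))) ∧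
      (∀ l l', l.length ≤ n → l'.length ≤ n → l ≠ l' → Disjoint (f l) (f l')) ∧
      (∀ l, l.length = n → (f l ∩ B).Nonempty) := by
  induction n generalizing Z X with
  | zero =>
    obtain ⟨h, rfl, h''⟩ := h
    refine ⟨fun _ => Z, rfl, fun l _ => ⟨h, subset_rfl⟩, by simp, ?_, fun _ _ => h''⟩
    intro l l' h1 h2 hne
    simp at h1 h2
    exact absurd (h1.trans h2.symm) hne
  | succ n ih =>
    obtain ⟨Z0, X0, Z1, X1, hZ, h0, h1, t0, t1, d0, d1, d2, rfl⟩ := h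
    obtain ⟨f0, a0, b0, c0, e0, g0⟩ := ih h0
    obtain ⟨f1, a1, b1, c1, e1, g1⟩ := ih h1
    refine ⟨fun l => match l with
      | [] => Z
      | false :: τ => f0 τ
      | true :: τ => f1 τ, rfl, ?_, ?_, ?_, ?_⟩
    · intro l hl
      match l, hl with
      | [], _ => exact ⟨hZ, fun z hz => Or.inl (Or.inl hz)⟩
      | false :: τ, hl =>
        have := b0 τ (by simpa using hl)
        exact ⟨this.1, fun z hz => Or.inl (Or.inr (this.2 hz))⟩
      | true :: τ, hl =>
        have := b1 τ (by simpa using hl)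
        exact ⟨this.1, fun z hz => Or.inr (this.2 hz)⟩
    · intro l b hl
      match l, b, hl with
      | [], false, _ => simpa [a0] using t0
      | [], true, _ => simpa [a1] using t1
      | false :: τ, b, hl => exact c0 τ b (by simpa using hl)
      | true :: τ, b, hl => exact c1 τ b (by simpa using hl)
    · intro l l' hl hl' hne
      match l, l', hl, hl', hne with
      | [], [], _, _, h => exact absurd rfl h
      | [], false :: τ, _, hl, _ => exact d0.mono_right (b0 τ (by simpa using hl)).2
      | [], true :: τ, _, hl, _ => exact d1.mono_right (b1 τ (by simpa using hl)).2
      | false :: τ, [], hl, _, _ => exact (d0.mono_right (b0 τ (by simpa using hl)).2).symm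
      | true :: τ, [], hl, _, _ => exact (d1.mono_right (b1 τ (by simpa using hl)).2).symm
      | false :: τ, true :: τ', hl, hl', _ =>
        exact d2.mono (b0 τ (by simpa using hl)).2 (b1 τ' (by simpa using hl')).2
      | true :: τ, false :: τ', hl, hl', _ =>
        exact (d2.mono (b0 τ' (by simpa using hl')).2 (b1 τ (by simpa using hl)).2).symm
      | true :: τ, true :: τ', hl, hl', h =>
        exact e1 τ τ' (by simpa using hl) (by simpa using hl') (fun h' => h (by rw [h']))
      | false :: τ, false :: τ', hl, hl', h =>
        exact e0 τ τ' (by simpa using hl) (by simpa using hl') (fun h' => h (by rw [h']))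
    · intro l hl
      match l, hl with
      | false :: τ, hl => exact g0 τ (by simpa using hl)
      | true :: τ, hl => exact g1 τ (by simpa using hl)

theorem BT.minor {G : SimpleGraph V} {D : Set V} {k : ℕ} {Z X : Set V}
    (h : BT G {v | ∃ d ∈ D, G.Adj v d} k Z X) (hD : Conn G D) (hd : Disjoint D X) :
    IsMinor (Pgraph k) G := by
  obtain ⟨f, -, b, c, e, g⟩ := h.map
  let F : Option (CTVert k) → Set V := fun o => match o with
    | none => D
    | some σ => f σ.1.reverse
  have hconn : ∀ w, Conn G (F w) := by
    rintro (_ | σ)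
    · exact hD
    · exact (b _ (by simpa using σ.2)).1
  refine ⟨F, fun w => (hconn w).1, fun w => (hconn w).connected, ?_, ?_⟩
  · rintro (_ | σ) (_ | τ) hne
    · exact absurd rfl hne
    · exact hd.mono_right (b _ (by simpa using τ.2)).2
    · exact (hd.mono_right (b _ (by simpa using σ.2)).2).symm
    · refine e _ _ (by simpa using σ.2) (by simpa using τ.2) ?_
      intro h
      exact hne (by rw [Subtype.ext (List.reverse_injective h)])
  · intro w1 w2 hadj
    change Tch G (F w1) (F w2)
    rw [Pgraph, SimpleGraph.fromEdgeSet_adj] at hadj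
    rcases hadj.1 with ⟨β, σ, hσ, he⟩ | ⟨l, hl, he⟩
    · have key : Tch G (f σ.reverse) (f (β :: σ).reverse) := by
        rw [List.reverse_cons]; exact c _ _ (by simpa using hσ)
      rcases Sym2.eq_iff.1 he with ⟨rfl, rfl⟩ | ⟨rfl, rfl⟩
      · exact key
      · exact key.symm
    · have key : Tch G D (f l.1.reverse) := by
        obtain ⟨v, hv, d, hd, hvd⟩ := g l.1.reverse (by simpa using hl)
        exact ⟨d, hd, v, hv, hvd.symm⟩
      rcases Sym2.eq_iff.1 he with ⟨rfl, rfl⟩ | ⟨rfl, rfl⟩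
      · exact key
      · exact key.symm

theorem tree_alt {G : SimpleGraph V} {B : Set V} {k m : ℕ} {Z L : Set V}
    (h : Tr G (k + m) Z L) (hB : (L ∩ B).Nonempty) :
    (∃ Z', Z ⊆ Z' ∧ BT G B k Z' L) ∨ ∃ Y Zy R, Tr G m Zy Y ∧ Y ⊆ L ∧ Disjoint Y B ∧
      R ⊆ L ∧ Disjoint R Y ∧ Conn G R ∧ Z ⊆ R ∧ L ∩ B ⊆ R := by
  induction k generalizing Z L with
  | zero =>
    rw [Nat.zero_add] at h
    exact Or.inl ⟨L, h.conn.2.2, h.conn.1, rfl, hB⟩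
  | succ k ih =>
    rw [Nat.succ_add] at h
    obtain ⟨Z0, X0, Z1, X1, hZ, h0, h1, t0, t1, d0, d1, d2, rfl⟩ := h
    have s0 : X0 ⊆ Z ∪ X0 ∪ X1 := fun z hz => Or.inl (Or.inr hz)
    have s1 : X1 ⊆ Z ∪ X0 ∪ X1 := fun z hz => Or.inr hz
    have c0 : Conn G (Z ∪ X0) := hZ.union_tch h0.conn.1 (t0.mono subset_rfl h0.conn.2.2)
    have c1 : Conn G (Z ∪ X1) := hZ.union_tch h1.conn.1 (t1.mono subset_rfl h1.conn.2.2)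
    by_cases e0 : (X0 ∩ B).Nonempty
    swap
    · right
      obtain ⟨Zy, Y, hY, hT⟩ := h0.sub
      have e0' : ∀ x ∈ X0, x ∉ B := fun x hx hb => e0 ⟨x, hx, hb⟩
      refine ⟨Y, Zy, Z ∪ X1, hT, hY.trans s0, ?_, ?_, ?_, c1, Set.subset_union_left, ?_⟩
      · exact Set.disjoint_left.2 fun y hy => e0' y (hY hy)
      · exact Set.union_subset (fun z hz => Or.inl (Or.inl hz)) s1
      · exact Set.disjoint_union_left.2 ⟨d0.mono_right hY, d2.symm.mono_right hY⟩
      · rintro v ⟨(hv | hv) | hv, hvB⟩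
        · exact Or.inl hv
        · exact absurd hvB (e0' v hv)
        · exact Or.inr hv
    by_cases e1 : (X1 ∩ B).Nonempty
    swap
    · right
      obtain ⟨Zy, Y, hY, hT⟩ := h1.sub
      have e0' : ∀ x ∈ X1, x ∉ B := fun x hx hb => e1 ⟨x, hx, hb⟩
      refine ⟨Y, Zy, Z ∪ X0, hT, hY.trans s1, ?_, ?_, ?_, c0, Set.subset_union_left, ?_⟩
      · exact Set.disjoint_left.2 fun y hy => e0' y (hY hy)
      · exact Set.subset_union_left
      · exact Set.disjoint_union_left.2 ⟨d1.mono_right hY, d2.mono_right hY⟩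
      · rintro v ⟨hv | hv, hvB⟩
        · exact hv
        · exact absurd hvB (e0' v hv)
    rcases ih h0 e0 with ⟨Z0', hz0, b0⟩ | ⟨Y, Zy, R, hT, hY, hYB, hR, hRY, hRc, hZR, hBR⟩
    swap
    · right
      refine ⟨Y, Zy, Z ∪ R ∪ X1, hT, hY.trans s0, hYB, ?_, ?_, ?_, ?_, ?_⟩
      · rintro v ((hv | hv) | hv)
        · exact Or.inl (Or.inl hv)
        · exact s0 (hR hv)
        · exact s1 hv
      · simp only [Set.disjoint_union_left]
        exact ⟨⟨d0.mono_right hY, hRY⟩, d2.symm.mono_right hY⟩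
      · exact (hZ.union_tch hRc (t0.mono subset_rfl hZR)).union_tch h1.conn.1
          (t1.mono Set.subset_union_left h1.conn.2.2)
      · exact fun z hz => Or.inl (Or.inl hz)
      · rintro v ⟨(hv | hv) | hv, hvB⟩
        · exact Or.inl (Or.inl hv)
        · exact Or.inl (Or.inr (hBR ⟨hv, hvB⟩))
        · exact Or.inr hv
    rcases ih h1 e1 with ⟨Z1', hz1, b1⟩ | ⟨Y, Zy, R, hT, hY, hYB, hR, hRY, hRc, hZR, hBR⟩
    swap
    · right
      refine ⟨Y, Zy, Z ∪ X0 ∪ R, hT, hY.trans s1, hYB, ?_, ?_, ?_, ?_, ?_⟩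
      · rintro v ((hv | hv) | hv)
        · exact Or.inl (Or.inl hv)
        · exact Or.inl (Or.inr hv)
        · exact s1 (hR hv)
      · simp only [Set.disjoint_union_left]
        exact ⟨⟨d1.mono_right hY, d2.mono_right hY⟩, hRY⟩
      · exact c0.union_tch hRc (t1.mono Set.subset_union_left hZR)
      · exact fun z hz => Or.inl (Or.inl hz)
      · rintro v ⟨hv | hv, hvB⟩
        · exact Or.inl hv
        · exact Or.inr (hBR ⟨hv, hvB⟩)
    left
    exact ⟨Z, subset_rfl, Z0', X0, Z1', X1, hZ, b0, b1, t0.mono subset_rfl hz0,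
      t1.mono subset_rfl hz1, d0, d1, d2, rfl⟩

end PW


namespace PW
variable {V : Type*}

/-- The basic configuration of the induction. -/
structure State (G : SimpleGraph V) (S T C : Set V) : Prop where
  cS : Conn G S
  cT : Conn G T
  cC : Conn G C
  dST : Disjoint S T
  dSC : Disjoint S C
  dTC : Disjoint T C
  tST : Tch G S T
  tSC : Tch G S C
  tTC : Tch G T C
  two : ∀ c ∈ C, ∀ X, X ⊆ C → c ∉ X → X.Nonempty →
    (∀ x ∈ X, ∀ y ∈ C, G.Adj x y → y ∈ X ∨ y = c) → Tch G X (S ∪ T)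

theorem State.symm {G : SimpleGraph V} {S T C : Set V} (h : State G S T C) : State G T S C :=
  ⟨h.cT, h.cS, h.cC, h.dST.symm, h.dTC, h.dSC, h.tST.symm, h.tTC, h.tSC, by
    rw [Set.union_comm]; exact h.two⟩

/-- A protected piece `K` with two connected guards `R`, `R'`. -/
structure Core (G : SimpleGraph V) (m : ℕ) (D K R R' : Set V) : Prop where
  cD : Conn G D
  cK : Conn G K
  cR : Conn G R
  cR' : Conn G R'
  dDK : Disjoint D K
  dDR : Disjoint D R
  dDR' : Disjoint D R'
  dKR : Disjoint K R
  dKR' : Disjoint K R'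
  dRR' : Disjoint R R'
  tr : ∃ Z, Tr G m Z K
  tRR' : Tch G R R'
  tKR : Tch G K R
  tKR' : Tch G K R'
  tRD : Tch G R D
  tR'D : Tch G R' D
  nKD : ¬ Tch G K D
  two : ∀ c ∈ K, ∀ X, X ⊆ K → c ∉ X → X.Nonempty →
    (∀ x ∈ X, ∀ y ∈ K, G.Adj x y → y ∈ X ∨ y = c) → Tch G X (R ∪ R')

theorem Core.symm {G : SimpleGraph V} {m : ℕ} {D K R R' : Set V} (h : Core G m D K R R') :
    Core G m D K R' R :=
  ⟨h.cD, h.cK, h.cR', h.cR, h.dDK, h.dDR', h.dDR, h.dKR', h.dKR, h.dRR'.symm, h.tr, h.tRR'.symm,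
    h.tKR', h.tKR, h.tR'D, h.tRD, h.nKD, by rw [Set.union_comm]; exact h.two⟩

theorem Core.state {G : SimpleGraph V} {m : ℕ} {D K R R' S T : Set V} (h : Core G m D K R R')
    (hS : Conn G S) (hT : Conn G T) (hRS : R ⊆ S) (hRT : R' ⊆ T) (hd : Disjoint S T)
    (hSK : Disjoint S K) (hTK : Disjoint T K) : State G S T K :=
  ⟨hS, hT, h.cK, hd, hSK, hTK, h.tRR'.mono hRS hRT, h.tKR.symm.mono hRS subset_rfl,
    h.tKR'.symm.mono hRT subset_rfl, fun c hc X hX hcX hne hcl =>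
      (h.two c hc X hX hcX hne hcl).mono subset_rfl (Set.union_subset_union hRS hRT)⟩

theorem exists_core [Finite V] {G : SimpleGraph V} {k m : ℕ} {S T C L Z : Set V}
    (hst : State G S T C) (hno : ¬ IsMinor (Pgraph k) G) (hLC : L ⊆ C)
    (hT : Tr G (k + m) Z L) (hCL : Conn G (C \ L)) (ht : Tch G (C \ L) (S ∪ T)) :
    ∃ K R R', Core G m (S ∪ T ∪ (C \ L)) K R R' ∧ L = K ∪ R ∪ R' := by
  obtain ⟨D, hDdef⟩ : ∃ D, D = S ∪ T ∪ (C \ L) := ⟨_, rfl⟩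
  rw [← hDdef]
  have hD : Conn G D := by
    rw [hDdef]
    exact (hst.cS.union_tch hst.cT hst.tST).union_tch hCL ht.symm
  have hDL : Disjoint D L := by
    rw [hDdef]
    simp only [Set.disjoint_union_left]
    exact ⟨⟨hst.dSC.mono_right hLC, hst.dTC.mono_right hLC⟩, Set.disjoint_sdiff_left⟩
  have hcT : C \ L ⊆ D := by rw [hDdef]; exact Set.subset_union_right
  have hSTD : S ∪ T ⊆ D := by rw [hDdef]; exact Set.subset_union_left
  obtain ⟨B, hBdef⟩ : ∃ B : Set V, B = {v | ∃ d ∈ D, G.Adj v d} := ⟨_, rfl⟩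
  have hB : ∀ v, v ∈ B ↔ ∃ d ∈ D, G.Adj v d := fun v => by rw [hBdef]; rfl
  have hLB : (L ∩ B).Nonempty := by
    obtain ⟨x, hx, y, hy, hxy⟩ := hst.cC.tch (Y := L) (Z := C \ L)
      (by rw [Set.union_sdiff_cancel hLC]) hT.conn.1.1 hCL.1 Set.disjoint_sdiff_right
    exact ⟨x, hx, (hB x).2 ⟨y, hcT hy, hxy⟩⟩
  rcases tree_alt hT hLB with ⟨Z', -, h⟩ | ⟨Y, Zy, R0, hTY, hYL, hYB, hRL, hRY, hRc, -, hBR⟩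
  · rw [hBdef] at h
    exact absurd (h.minor hD hDL) hno
  obtain ⟨K, hYK, hKL, hK, hKcl⟩ := exists_comp (X := L \ R0) hTY.conn.1
    (fun y hy => ⟨hYL hy, fun h => Set.disjoint_left.1 hRY h hy⟩)
  have hKR0 : Disjoint K R0 := Set.disjoint_left.2 fun v hv => (hKL hv).2
  have hKL' : K ⊆ L := fun v hv => (hKL hv).1
  have hN : Conn G (L \ K) := conn_diff_comp hT.conn.1 hRc hRL hKR0 hKcl
  have hKB : ∀ v ∈ K, v ∉ B := fun v hv hvB => (hKL hv).2 (hBR ⟨hKL' hv, hvB⟩)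
  have hBN : ∀ v ∈ L, v ∈ B → v ∈ L \ K := fun v hv hvB => ⟨hv, fun h => hKB v h hvB⟩
  obtain ⟨N, hNdef⟩ : ∃ N : Set V, N = {r | r ∈ L \ K ∧ ∃ x ∈ K, G.Adj x r} := ⟨_, rfl⟩
  have hNm : ∀ v, v ∈ N ↔ v ∈ L \ K ∧ ∃ x ∈ K, G.Adj x v := fun v => by rw [hNdef]; rfl
  have hlnk : Lnk (resG G (L \ K)) 2 N ((L \ K) ∩ B) := by
    apply menger
    rintro P Q ⟨hc, hA, hBQ, hn⟩
    by_contra hlt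
    have hcov : ∀ v, v ∈ P ∨ v ∈ Q := fun v => by
      have : v ∈ P ∪ Q := by rw [hc]; trivial
      exact this
    obtain ⟨c, hcC, hcX, hcu⟩ : ∃ c ∈ C, (c ∉ K ∧ ¬ (c ∈ L ∧ c ∉ Q)) ∧
        ∀ v ∈ L \ K, v ∈ P → v ∈ Q → v = c := by
      by_cases hne : ∃ c ∈ L \ K, c ∈ P ∧ c ∈ Q
      · obtain ⟨c, hcL, hcP, hcQ⟩ := hne
        refine ⟨c, hLC hcL.1, ⟨hcL.2, fun h => h.2 hcQ⟩, ?_⟩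
        intro v _ hvP hvQ
        have := (Set.ncard_le_one (s := P ∩ Q) (Set.toFinite _)).1 (by omega)
        exact this v ⟨hvP, hvQ⟩ c ⟨hcP, hcQ⟩
      · obtain ⟨c, hcC, hcL⟩ := hCL.1
        exact ⟨c, hcC, ⟨fun h => hcL (hKL' h), fun h => hcL h.1⟩,
          fun v hv h1 h2 => absurd ⟨v, hv, h1, h2⟩ hne⟩
    obtain ⟨x, hx, y, hy, hxy⟩ := hst.two c hcC (K ∪ {v | v ∈ L \ K ∧ v ∈ P ∧ v ∉ Q})
      (by
        rintro v (hv | hv)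
        · exact hLC (hKL' hv)
        · exact hLC hv.1.1)
      (by
        rintro (h | h)
        · exact hcX.1 h
        · exact hcX.2 ⟨h.1.1, h.2.2⟩)
      (hK.1.mono Set.subset_union_left)
      (by
        intro x hx y hy hxy
        by_cases hyK : y ∈ K
        · exact Or.inl (Or.inl hyK)
        by_cases hyL : y ∈ L
        · have hyN : y ∈ L \ K := ⟨hyL, hyK⟩
          have hyP : y ∈ P := by
            rcases hx with hx | hx
            · exact hA ((hNm y).2 ⟨hyN, x, hx, hxy⟩)
            · by_contra hyP
              exact hn x hx.2.1 hx.2.2 y ((hcov y).resolve_left hyP) hyP ⟨hxy, hx.1, hyN⟩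
          by_cases hyQ : y ∈ Q
          · exact Or.inr (hcu y hyN hyP hyQ)
          · exact Or.inl (Or.inr ⟨hyN, hyP, hyQ⟩)
        · have hxB : x ∈ B := (hB x).2 ⟨y, hcT ⟨hy, hyL⟩, hxy⟩
          rcases hx with hx | hx
          · exact absurd hxB (hKB x hx)
          · exact absurd (hBQ ⟨hx.1, hxB⟩) hx.2.2)
    have hxB : x ∈ B := (hB x).2 ⟨y, hSTD hy, hxy⟩
    rcases hx with hx | hx
    · exact hKB x hx hxB
    · exact hx.2.2 (hBQ ⟨hx.1, hxB⟩)
  obtain ⟨f, f1, f2, f3, f4⟩ := hlnk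
  have fN : ∀ i, f i ⊆ L \ K := by
    intro i
    apply (f1 i).2
    · obtain ⟨z, hz, hz'⟩ := f3 i
      exact ⟨z, hz, ((hNm z).1 hz').1⟩
    · intro _ _ b _ _ h; exact h.2.2
  have fc : ∀ i, Conn G (f i) := fun i => (f1 i).mono_graph (fun a _ b _ h => h.1)
  obtain ⟨P, hP1, hP2, hP3, hP4, -⟩ := exists_bipart hN (fc 0) (fc 1) (fN 0) (fN 1)
    (f2 0 1 (by decide))
  have hPN : P ⊆ L \ K := fun v hv => (hP2 hv).1
  have hf1 : f 1 ⊆ (L \ K) \ P := fun v hv => ⟨fN 1 hv, fun h => (hP2 h).2 hv⟩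
  have tK : ∀ i W, f i ⊆ W → Tch G K W := by
    intro i W hW
    obtain ⟨z, hz, hz'⟩ := f3 i
    obtain ⟨x, hx, hxz⟩ := ((hNm z).1 hz').2
    exact ⟨x, hx, z, hW hz, hxz⟩
  have tD : ∀ i W, f i ⊆ W → Tch G W D := by
    intro i W hW
    obtain ⟨z, hz, hz'⟩ := f4 i
    obtain ⟨d, hd, hzd⟩ := (hB z).1 hz'.2
    exact ⟨z, hW hz, d, hd, hzd⟩
  have hL : L = K ∪ P ∪ ((L \ K) \ P) := by
    ext v
    have h1 := @hKL' v
    have h2 := @hPN v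
    simp only [Set.mem_union, Set.mem_sdiff] at *
    tauto
  have hNL : L \ K ⊆ L := Set.sdiff_subset
  have hnKD : ¬ Tch G K D := by
    rintro ⟨x, hx, y, hy, hxy⟩
    exact hKB x hx ((hB x).2 ⟨y, hy, hxy⟩)
  refine ⟨K, P, (L \ K) \ P, ⟨hD, hK, hP3, hP4, hDL.mono_right hKL',
    hDL.mono_right (hPN.trans hNL), hDL.mono_right (Set.sdiff_subset.trans hNL),
    Set.disjoint_left.2 fun v hv h => (hPN h).2 hv, Set.disjoint_left.2 fun v hv h => h.1.2 hv,
    Set.disjoint_left.2 fun v hv h => h.2 hv, hTY.absorb hYK hK, ?_, tK 0 _ hP1, tK 1 _ hf1,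
    tD 0 _ hP1, tD 1 _ hf1, hnKD, ?_⟩, hL⟩
  · exact hN.tch (by rw [Set.union_sdiff_cancel hPN]) hP3.1 hP4.1 Set.disjoint_sdiff_right
  · intro c hc X hX hcX hne hcl
    by_contra hnt
    have h1 := hst.two c (hLC (hKL' hc)) X (hX.trans (hKL'.trans hLC)) hcX hne (by
      intro x hx y hy hxy
      by_cases hyL : y ∈ L
      · rw [hL] at hyL
        rcases hyL with (hyK | hyP) | hyP
        · exact hcl x hx y hyK hxy
        · exact absurd ⟨x, hx, y, Or.inl hyP, hxy⟩ hnt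
        · exact absurd ⟨x, hx, y, Or.inr hyP, hxy⟩ hnt
      · exact absurd ⟨x, hX hx, y, hcT ⟨hy, hyL⟩, hxy⟩ hnKD)
    exact hnKD (h1.mono hX hSTD)

/-- Quotient of `G[U]` by the blob map. -/
def quoG (G : SimpleGraph V) (U : Set V) (bl : V → V) : SimpleGraph V where
  Adj i j := i ≠ j ∧ ∃ u ∈ U, ∃ v ∈ U, bl u = i ∧ bl v = j ∧ G.Adj u v
  symm := ⟨fun _ _ ⟨h, u, hu, v, hv, h1, h2, h3⟩ => ⟨h.symm, v, hv, u, hu, h2, h1, h3.symm⟩⟩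
  loopless := ⟨fun _ h => h.1 rfl⟩

theorem quo_pull {G : SimpleGraph V} {U : Set V} {bl : V → V}
    (hfib : ∀ v ∈ U, Conn G {u | u ∈ U ∧ bl u = bl v}) {f : Set V} (hf : Conn (quoG G U bl) f)
    (hfU : f ⊆ bl '' U) : Conn G {u | u ∈ U ∧ bl u ∈ f} := by
  constructor
  · obtain ⟨i, hi⟩ := hf.1
    obtain ⟨u, hu, rfl⟩ := hfU hi
    exact ⟨u, hu, hi⟩
  · rintro p ⟨x, ⟨hxU, hxf⟩, hxp⟩ hcl
    have hfp : ∀ v ∈ U, bl v ∈ f → v ∈ p → ∀ u ∈ U, bl u = bl v → u ∈ p := by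
      intro v hv hvf hvp u hu huv
      exact (hfib v hv).2 p ⟨v, ⟨hv, rfl⟩, hvp⟩ (fun a ha b hb hap hab =>
        hcl a ⟨ha.1, ha.2.symm ▸ hvf⟩ b ⟨hb.1, hb.2.symm ▸ hvf⟩ hap hab) ⟨hu, huv⟩
    have := hf.2 {i | ∀ u ∈ U, bl u = i → u ∈ p} ⟨bl x, hxf, fun u hu h => hfp x hxU hxf hxp u hu h⟩
      (by
        rintro a ha b hb hap ⟨-, u, hu, v, hv, rfl, rfl, huv⟩ v' hv' hvv'
        exact hfp v hv hb (hcl u ⟨hu, ha⟩ v ⟨hv, hb⟩ (hap u hu rfl) huv) v' hv' hvv')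
    rintro u ⟨hu, huf⟩
    exact this huf u hu rfl

theorem cyc [Finite V] {G : SimpleGraph V} {U : Set V} {bl : V → V} (hU : Conn G U)
    (hfib : ∀ v ∈ U, Conn G {u | u ∈ U ∧ bl u = bl v})
    (hdel : ∀ v ∈ U, Conn G {u | u ∈ U ∧ bl u ≠ bl v})
    {s t x y : V} (hs : s ∈ U) (ht : t ∈ U) (hx : x ∈ U) (hy : y ∈ U)
    (hst : bl s ≠ bl t) (hxy : bl x ≠ bl y) :
    ∃ P ⊆ U, Conn G P ∧ Conn G (U \ P) ∧ (∀ u ∈ U, ∀ v ∈ U, bl u = bl v → u ∈ P → v ∈ P) ∧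
      s ∈ P ∧ t ∉ P ∧ ((x ∈ P ∧ y ∉ P) ∨ (y ∈ P ∧ x ∉ P)) := by
  have hlnk : Lnk (quoG G U bl) 2 {bl s, bl t} {bl x, bl y} := by
    apply menger
    rintro P Q ⟨hc, hA, hB, hn⟩
    by_contra hlt
    have hcov : ∀ v, v ∈ P ∨ v ∈ Q := fun v => by
      have : v ∈ P ∪ Q := by rw [hc]; trivial
      exact this
    haveI : Nonempty V := ⟨s⟩
    obtain ⟨c, hcc⟩ := (Set.ncard_le_one_iff_subset_singleton (s := P ∩ Q)).1 (by omega)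
    have hW : Conn G {u | u ∈ U ∧ bl u ≠ c} := by
      by_cases h : ∃ v ∈ U, bl v = c
      · obtain ⟨v, hv, rfl⟩ := h; exact hdel v hv
      · have : {u | u ∈ U ∧ bl u ≠ c} = U := by
          ext u; constructor
          · exact fun h => h.1
          · exact fun hu => ⟨hu, fun h' => h ⟨u, hu, h'⟩⟩
        rw [this]; exact hU
    have ha : ∃ u0 ∈ U, bl u0 ≠ c ∧ bl u0 ∈ P := by
      by_cases h : bl s = c
      · exact ⟨t, ht, fun h' => hst (h.trans h'.symm), hA (by simp)⟩
      · exact ⟨s, hs, h, hA (by simp)⟩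
    have hb : ∃ u0 ∈ U, bl u0 ≠ c ∧ bl u0 ∈ Q := by
      by_cases h : bl x = c
      · exact ⟨y, hy, fun h' => hxy (h.trans h'.symm), hB (by simp)⟩
      · exact ⟨x, hx, h, hB (by simp)⟩
    obtain ⟨u0, h01, h02, h03⟩ := ha
    obtain ⟨u1, h11, h12, h13⟩ := hb
    have := hW.2 {u | bl u ∈ P} ⟨u0, ⟨h01, h02⟩, h03⟩ (by
      rintro a ⟨haU, hac⟩ b ⟨hbU, hbc⟩ haP hab
      by_cases hab' : bl a = bl b
      · change bl b ∈ P; rw [← hab']; exact haP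
      · by_contra hbP
        exact hn (bl a) haP (fun h => hac (hcc ⟨haP, h⟩)) (bl b) ((hcov _).resolve_left hbP) hbP
          ⟨hab', a, haU, b, hbU, rfl, rfl, hab⟩) (show u1 ∈ _ from ⟨h11, h12⟩)
    exact h12 (hcc ⟨this, h13⟩)
  obtain ⟨f, f1, f2, f3, f4⟩ := hlnk
  have key : ∃ f g, Conn (quoG G U bl) f ∧ Conn (quoG G U bl) g ∧ Disjoint f g ∧ bl s ∈ f ∧
      bl t ∈ g ∧ ((bl x ∈ f ∧ bl y ∈ g) ∨ (bl y ∈ f ∧ bl x ∈ g)) := by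
    have d01 := f2 0 1 (by decide)
    obtain ⟨a0, ha0, ha0'⟩ := f3 0
    obtain ⟨a1, ha1, ha1'⟩ := f3 1
    obtain ⟨b0, hb0, hb0'⟩ := f4 0
    obtain ⟨b1, hb1, hb1'⟩ := f4 1
    have hne : ∀ z, z ∈ f 0 → z ∈ f 1 → False := fun z h1 h2 => Set.disjoint_left.1 d01 h1 h2
    rcases ha0' with rfl | rfl <;> rcases ha1' with rfl | rfl <;> rcases hb0' with rfl | rfl <;>
      rcases hb1' with rfl | rfl <;>
      first
      | exact (hne _ ha0 ha1).elim
      | exact (hne _ hb0 hb1).elim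
      | exact ⟨f 0, f 1, f1 0, f1 1, d01, ha0, ha1, Or.inl ⟨hb0, hb1⟩⟩
      | exact ⟨f 0, f 1, f1 0, f1 1, d01, ha0, ha1, Or.inr ⟨hb0, hb1⟩⟩
      | exact ⟨f 1, f 0, f1 1, f1 0, d01.symm, ha1, ha0, Or.inl ⟨hb1, hb0⟩⟩
      | exact ⟨f 1, f 0, f1 1, f1 0, d01.symm, ha1, ha0, Or.inr ⟨hb1, hb0⟩⟩
  obtain ⟨f, g, hf, hg, hfg, hsf, htg, hxyfg⟩ := key
  have hsubU : ∀ f, Conn (quoG G U bl) f → (∃ z ∈ f, z ∈ bl '' U) → f ⊆ bl '' U := by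
    intro f hf hz
    refine hf.2 _ hz ?_
    rintro a _ b _ _ ⟨-, u, hu, v, hv, -, h, -⟩
    exact ⟨v, hv, h⟩
  have hUH : Conn (quoG G U bl) (bl '' U) := by
    refine ⟨hU.1.image _, ?_⟩
    rintro p ⟨_, ⟨u0, hu0, rfl⟩, hp⟩ hcl
    have := hU.2 {u | bl u ∈ p} ⟨u0, hu0, hp⟩ (by
      intro a ha b hb hap hab
      by_cases h : bl a = bl b
      · change bl b ∈ p; rw [← h]; exact hap
      · exact hcl _ ⟨a, ha, rfl⟩ _ ⟨b, hb, rfl⟩ hap ⟨h, a, ha, b, hb, rfl, rfl, hab⟩)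
    rintro _ ⟨u, hu, rfl⟩
    exact this hu
  have hgU := hsubU g hg ⟨_, htg, t, ht, rfl⟩
  obtain ⟨P, hP1, hP2, hP3, hP4, -⟩ := exists_bipart hUH hf hg
    (hsubU f hf ⟨_, hsf, s, hs, rfl⟩) hgU hfg
  have hg' : ∀ z ∈ g, z ∉ P := fun z hz h => (hP2 h).2 hz
  refine ⟨{u | u ∈ U ∧ bl u ∈ P}, fun u hu => hu.1, quo_pull hfib hP3 (fun z hz => (hP2 hz).1),
    ?_, ?_, ⟨hs, hP1 hsf⟩, fun h => hg' _ htg h.2, ?_⟩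
  · have h1 := quo_pull hfib hP4 Set.sdiff_subset
    have h2 : {u | u ∈ U ∧ bl u ∈ bl '' U \ P} = U \ {u | u ∈ U ∧ bl u ∈ P} := by
      ext u
      constructor
      · rintro ⟨h1, h2⟩; exact ⟨h1, fun h => h2.2 h.2⟩
      · rintro ⟨h1, h2⟩; exact ⟨h1, ⟨u, h1, rfl⟩, fun h => h2 ⟨h1, h⟩⟩
    rw [← h2]; exact h1
  · rintro u hu v hv huv ⟨-, h⟩
    exact ⟨hv, huv ▸ h⟩
  · rcases hxyfg with ⟨h1, h2⟩ | ⟨h1, h2⟩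
    · exact Or.inl ⟨⟨hx, hP1 h1⟩, fun h => hg' _ h2 h.2⟩
    · exact Or.inr ⟨⟨hy, hP1 h1⟩, fun h => hg' _ h2 h.2⟩

end PW


namespace PW
variable {V : Type*}

theorem dl {A B : Set V} (h : Disjoint A B) (v : V) : v ∈ A → v ∉ B :=
  fun ha hb => Set.disjoint_left.1 h ha hb

theorem sdiff_dl {A B : Set V} (h : Disjoint B A) : A \ B = A := by
  ext v
  have := dl h v
  simp only [Set.mem_sdiff]; tauto

/-- Version of `cyc` for a family of blobs. -/
theorem cyc_blobs [Finite V] {G : SimpleGraph V} {U : Set V} (F : Set (Set V)) (hU : Conn G U)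
    (h1 : ∀ B ∈ F, B ⊆ U ∧ Conn G B ∧ Conn G (U \ B))
    (h2 : ∀ B ∈ F, ∀ B' ∈ F, B ≠ B' → Disjoint B B')
    (h3 : ∀ v ∈ U, (∀ B ∈ F, v ∉ B) → Conn G (U \ {v}))
    {S T M M' : Set V} (hS : S ∈ F) (hT : T ∈ F) (hM : M ∈ F) (hM' : M' ∈ F)
    (hST : Disjoint S T) (hMM : Disjoint M M') :
    ∃ P ⊆ U, Conn G P ∧ Conn G (U \ P) ∧ (∀ B ∈ F, B ⊆ P ∨ B ⊆ U \ P) ∧ S ⊆ P ∧ T ⊆ U \ P ∧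
      ((M ⊆ P ∧ M' ⊆ U \ P) ∨ (M' ⊆ P ∧ M ⊆ U \ P)) := by
  classical
  have hrep : ∀ B : Set V, ∃ r : V, B ∈ F → r ∈ B := by
    intro B
    by_cases h : B ∈ F
    · obtain ⟨r, hr⟩ := (h1 B h).2.1.1; exact ⟨r, fun _ => hr⟩
    · obtain ⟨r, hr⟩ := hU.1; exact ⟨r, fun h' => absurd h' h⟩
  choose rep hrep using hrep
  have hbl : ∀ v : V, ∃ r : V, (∀ B ∈ F, v ∈ B → r = rep B) ∧ ((∀ B ∈ F, v ∉ B) → r = v) := by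
    intro v
    by_cases h : ∃ B ∈ F, v ∈ B
    · obtain ⟨B, hB, hv⟩ := h
      refine ⟨rep B, ?_, fun h => absurd hv (h B hB)⟩
      intro B' hB' hv'
      by_cases he : B = B'
      · rw [he]
      · exact absurd hv' (Set.disjoint_left.1 (h2 B hB B' hB' he) hv)
    · exact ⟨v, fun B hB hv => absurd ⟨B, hB, hv⟩ h, fun _ => rfl⟩
  choose bl hb1 hb2 using hbl
  have e1 : ∀ B ∈ F, ∀ v ∈ B, ∀ u, bl u = bl v ↔ u ∈ B := by
    intro B hB v hv u
    rw [hb1 v B hB hv]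
    constructor
    · intro h
      by_cases hu : ∃ B' ∈ F, u ∈ B'
      · obtain ⟨B', hB', hu'⟩ := hu
        rw [hb1 u B' hB' hu'] at h
        by_cases he : B' = B
        · rwa [← he]
        · exact absurd (h ▸ hrep B hB) (Set.disjoint_left.1 (h2 B' hB' B hB he) (hrep B' hB'))
      · rw [hb2 u (fun B hB h => hu ⟨B, hB, h⟩)] at h
        rw [h]; exact hrep B hB
    · intro h; exact hb1 u B hB h
  have e2 : ∀ v, (∀ B ∈ F, v ∉ B) → ∀ u, bl u = bl v ↔ u = v := by
    intro v hv u
    constructor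
    · intro h
      by_cases hu : ∃ B' ∈ F, u ∈ B'
      · obtain ⟨B', hB', hu'⟩ := hu
        exact absurd ((e1 B' hB' u hu' v).1 h.symm) (hv B' hB')
      · rwa [hb2 u (fun B hB h => hu ⟨B, hB, h⟩), hb2 v hv] at h
    · rintro rfl; rfl
  have hfib : ∀ v ∈ U, Conn G {u | u ∈ U ∧ bl u = bl v} := by
    intro v hv
    by_cases hu : ∃ B' ∈ F, v ∈ B'
    · obtain ⟨B, hB, hvB⟩ := hu
      have : {u | u ∈ U ∧ bl u = bl v} = B := by
        ext u
        exact ⟨fun h => (e1 B hB v hvB u).1 h.2, fun h => ⟨(h1 B hB).1 h, (e1 B hB v hvB u).2 h⟩⟩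
      rw [this]; exact (h1 B hB).2.1
    · have hv' : ∀ B ∈ F, v ∉ B := fun B hB h => hu ⟨B, hB, h⟩
      have : {u | u ∈ U ∧ bl u = bl v} = {v} := by
        ext u
        exact ⟨fun h => (e2 v hv' u).1 h.2, fun h => ⟨h.symm ▸ hv, (e2 v hv' u).2 h⟩⟩
      rw [this]; exact conn_singleton G v
  have hdel : ∀ v ∈ U, Conn G {u | u ∈ U ∧ bl u ≠ bl v} := by
    intro v hv
    by_cases hu : ∃ B' ∈ F, v ∈ B'
    · obtain ⟨B, hB, hvB⟩ := hu
      have : {u | u ∈ U ∧ bl u ≠ bl v} = U \ B := by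
        ext u
        exact ⟨fun h => ⟨h.1, fun h' => h.2 ((e1 B hB v hvB u).2 h')⟩,
          fun h => ⟨h.1, fun h' => h.2 ((e1 B hB v hvB u).1 h')⟩⟩
      rw [this]; exact (h1 B hB).2.2
    · have hv' : ∀ B ∈ F, v ∉ B := fun B hB h => hu ⟨B, hB, h⟩
      have : {u | u ∈ U ∧ bl u ≠ bl v} = U \ {v} := by
        ext u
        exact ⟨fun h => ⟨h.1, fun h' => h.2 ((e2 v hv' u).2 h')⟩,
          fun h => ⟨h.1, fun h' => h.2 ((e2 v hv' u).1 h')⟩⟩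
      rw [this]; exact h3 v hv hv'
  obtain ⟨s, hs⟩ := (h1 S hS).2.1.1
  obtain ⟨t, ht⟩ := (h1 T hT).2.1.1
  obtain ⟨x, hx⟩ := (h1 M hM).2.1.1
  obtain ⟨y, hy⟩ := (h1 M' hM').2.1.1
  obtain ⟨P, hPU, hP1, hP2, hP3, hsP, htP, hxy⟩ := cyc hU hfib hdel ((h1 S hS).1 hs)
    ((h1 T hT).1 ht) ((h1 M hM).1 hx) ((h1 M' hM').1 hy)
    (fun h => Set.disjoint_left.1 hST ((e1 S hS s hs t).1 h.symm) ht)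
    (fun h => Set.disjoint_left.1 hMM ((e1 M hM x hx y).1 h.symm) hy)
  have hin : ∀ B ∈ F, ∀ b ∈ B, b ∈ P → B ⊆ P := by
    intro B hB b hb hbP u hu
    exact hP3 b ((h1 B hB).1 hb) u ((h1 B hB).1 hu) ((e1 B hB u hu b).2 hb) hbP
  have hout : ∀ B ∈ F, ∀ b ∈ B, b ∉ P → B ⊆ U \ P := by
    intro B hB b hb hbP u hu
    exact ⟨(h1 B hB).1 hu, fun h => hbP (hin B hB u hu h hb)⟩
  refine ⟨P, hPU, hP1, hP2, ?_, hin S hS s hs hsP, hout T hT t ht htP, ?_⟩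
  · intro B hB
    obtain ⟨b, hb⟩ := (h1 B hB).2.1.1
    by_cases hbP : b ∈ P
    · exact Or.inl (hin B hB b hb hbP)
    · exact Or.inr (hout B hB b hb hbP)
  · rcases hxy with h | h
    · exact Or.inl ⟨hin M hM x hx h.1, hout M' hM' y hy h.2⟩
    · exact Or.inr ⟨hin M' hM' y hy h.1, hout M hM x hx h.2⟩

theorem State.conn {G : SimpleGraph V} {S T C : Set V} (h : State G S T C) :
    Conn G (S ∪ T ∪ C) :=
  (h.cS.union_tch h.cT h.tST).union_tch h.cC (h.tSC.mono Set.subset_union_left subset_rfl)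

theorem State.conn_S {G : SimpleGraph V} {S T C : Set V} (h : State G S T C) :
    Conn G ((S ∪ T ∪ C) \ S) := by
  have : (S ∪ T ∪ C) \ S = T ∪ C := by
    ext v
    have h1 := dl h.dST v
    have h2 := dl h.dSC v
    simp only [Set.mem_sdiff, Set.mem_union]; tauto
  rw [this]; exact h.cT.union_tch h.cC h.tTC

theorem State.conn_T {G : SimpleGraph V} {S T C : Set V} (h : State G S T C) :
    Conn G ((S ∪ T ∪ C) \ T) := by
  rw [Set.union_comm S T]; exact h.symm.conn_S

theorem State.conn_v {G : SimpleGraph V} {S T C : Set V} (h : State G S T C) {c : V} (hc : c ∈ C) :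
    Conn G ((S ∪ T ∪ C) \ {c}) := by
  have hST : Conn G (S ∪ T) := h.cS.union_tch h.cT h.tST
  have hcS : c ∉ S ∪ T := by
    rintro (h' | h')
    · exact Set.disjoint_left.1 h.dSC h' hc
    · exact Set.disjoint_left.1 h.dTC h' hc
  obtain ⟨P, hP1, hP2, hP3, hP4⟩ := exists_comp (X := (S ∪ T ∪ C) \ {c}) hST
    (fun v hv => ⟨Or.inl hv, fun h' => hcS (h' ▸ hv)⟩)
  have : (S ∪ T ∪ C) \ {c} = P := by
    apply Set.Subset.antisymm _ hP2
    by_contra hn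
    obtain ⟨z, hz, hzP⟩ := Set.not_subset.1 hn
    have hzC : ∀ z, z ∈ (S ∪ T ∪ C) \ {c} → z ∉ P → z ∈ C :=
      fun z hz hzP => hz.1.resolve_left (fun h' => hzP (hP1 h'))
    obtain ⟨x, hx, y, hy, hxy⟩ := h.two c hc {v | v ∈ (S ∪ T ∪ C) \ {c} ∧ v ∉ P}
      (fun v hv => hzC v hv.1 hv.2) (fun h' => h'.1.2 rfl) ⟨z, hz, hzP⟩ (by
        rintro x ⟨hx, hxP⟩ y hy hxy
        by_cases hyc : y = c
        · exact Or.inr hyc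
        · refine Or.inl ⟨⟨Or.inr hy, hyc⟩, fun hyP => hxP (hP4 y hyP x hx hxy.symm)⟩)
    exact hx.2 (hP4 y (hP1 hy) x hx.1 hxy.symm)
  rw [this]; exact hP3

/-- Facts about the blobs coming from a core. -/
theorem Core.blobs {G : SimpleGraph V} {m : ℕ} {U D K R R' : Set V} (h : Core G m D K R R')
    (hU : U = D ∪ (K ∪ R ∪ R')) :
    (R ∪ K ⊆ U ∧ Conn G (R ∪ K) ∧ Conn G (U \ (R ∪ K))) ∧
      (R' ⊆ U ∧ Conn G R' ∧ Conn G (U \ R')) ∧ Disjoint (R ∪ K) R' := by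
  have c1 : Conn G (R ∪ K) := h.cR.union_tch h.cK h.tKR.symm
  refine ⟨⟨?_, c1, ?_⟩, ⟨?_, h.cR', ?_⟩, ?_⟩
  · rw [hU]; intro v; simp only [Set.mem_union]; tauto
  · have : U \ (R ∪ K) = D ∪ R' := by
      ext v
      have h1 := dl h.dDK v
      have h2 := dl h.dDR v
      have h3 := dl h.dKR' v
      have h4 := dl h.dRR' v
      rw [hU]
      simp only [Set.mem_sdiff, Set.mem_union]; tauto
    rw [this]; exact h.cD.union_tch h.cR' h.tR'D.symm
  · rw [hU]; intro v; simp only [Set.mem_union]; tauto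
  · have : U \ R' = D ∪ (R ∪ K) := by
      ext v
      have h1 := dl h.dDR' v
      have h3 := dl h.dKR' v
      have h4 := dl h.dRR' v
      rw [hU]
      simp only [Set.mem_sdiff, Set.mem_union]; tauto
    rw [this]; exact h.cD.union_tch c1 (h.tRD.symm.mono subset_rfl Set.subset_union_left)
  · simp [h.dRR', h.dKR']

theorem Core.diff_conn {G : SimpleGraph V} {m : ℕ} {D K R R' X : Set V} (h : Core G m D K R R')
    (hX : X ⊆ D ∪ (K ∪ R ∪ R')) (hc : Conn G X)
    (hh : (R ∪ K ⊆ X ∧ Disjoint R' X) ∨ Disjoint (R ∪ K) X) : Conn G (X \ K) := by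
  rcases hh with ⟨h1, h2⟩ | h1
  · apply hc.diff h.cR (Set.subset_union_left.trans h1) h.dKR
    intro a ha b hb hab
    rcases hX hb with hb' | (hb' | hb') | hb'
    · exact absurd ⟨a, ha, b, hb', hab⟩ h.nKD
    · exact Or.inl hb'
    · exact Or.inr hb'
    · exact absurd hb (Set.disjoint_left.1 h2 hb')
  · have : X \ K = X := by
      apply sdiff_dl
      exact (Set.disjoint_union_left.1 h1).2
    rw [this]; exact hc

theorem Tr.pick {G : SimpleGraph V} {n : ℕ} {Z C : Set V} (h : Tr G (n + 1) Z C) (c : V) :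
    ∃ L, L ⊆ C ∧ c ∉ L ∧ Conn G (C \ L) ∧ Z ⊆ C \ L ∧ ∃ Z', Tr G n Z' L := by
  obtain ⟨Z0, X0, Z1, X1, hZ, h0, h1, t0, t1, d0, d1, d2, rfl⟩ := h
  by_cases hc : c ∈ X0
  · refine ⟨X1, Set.subset_union_right, fun h => Set.disjoint_left.1 d2 hc h, ?_, ?_, Z1, h1⟩
    · have : (Z ∪ X0 ∪ X1) \ X1 = Z ∪ X0 := by
        rw [Set.union_sdiff_right]
        exact sdiff_dl (Set.disjoint_union_right.2 ⟨d1.symm, d2.symm⟩)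
      rw [this]
      exact hZ.union_tch h0.conn.1 (t0.mono subset_rfl h0.conn.2.2)
    · exact fun v hv => ⟨Or.inl (Or.inl hv), Set.disjoint_left.1 d1 hv⟩
  · refine ⟨X0, fun v hv => Or.inl (Or.inr hv), hc, ?_, ?_, Z0, h0⟩
    · have : (Z ∪ X0 ∪ X1) \ X0 = Z ∪ X1 := by
        ext v
        have h3 := dl d0 v
        have h4 := dl d2 v
        simp only [Set.mem_sdiff, Set.mem_union]; tauto
      rw [this]
      exact hZ.union_tch h1.conn.1 (t1.mono subset_rfl h1.conn.2.2)
    · exact fun v hv => ⟨Or.inl (Or.inl hv), Set.disjoint_left.1 d0 hv⟩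

theorem Tr.pick2 {G : SimpleGraph V} {n : ℕ} {Z C : Set V} (h : Tr G (n + 2) Z C) (c : V) :
    ∃ L L', L ⊆ C ∧ L' ⊆ C ∧ Disjoint L L' ∧ c ∉ L ∧ c ∉ L' ∧ Conn G (C \ L) ∧ Conn G (C \ L') ∧
      (∃ Z', Tr G n Z' L) ∧ ∃ Z', Tr G n Z' L' := by
  obtain ⟨Z0, X0, Z1, X1, hZ, h0, h1, t0, t1, d0, d1, d2, rfl⟩ := h
  obtain ⟨L, l1, l2, l3, l4, l5⟩ := h0.pick c
  obtain ⟨L', m1, m2, m3, m4, m5⟩ := h1.pick c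
  refine ⟨L, L', fun v hv => Or.inl (Or.inr (l1 hv)), fun v hv => Or.inr (m1 hv), d2.mono l1 m1,
    l2, m2, ?_, ?_, l5, m5⟩
  · have : (Z ∪ X0 ∪ X1) \ L = Z ∪ (X0 \ L) ∪ X1 := by
      ext v
      have h3 := dl d0 v
      have h4 := dl d2 v
      have h5 := @l1 v
      simp only [Set.mem_sdiff, Set.mem_union]; tauto
    rw [this]
    exact (hZ.union_tch l3 (t0.mono subset_rfl l4)).union_tch h1.conn.1
      (t1.mono Set.subset_union_left h1.conn.2.2)
  · have : (Z ∪ X0 ∪ X1) \ L' = Z ∪ X0 ∪ (X1 \ L') := by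
      ext v
      have h3 := dl d1 v
      have h4 := dl d2 v
      have h5 := @m1 v
      simp only [Set.mem_sdiff, Set.mem_union]; tauto
    rw [this]
    exact (hZ.union_tch h0.conn.1 (t0.mono subset_rfl h0.conn.2.2)).union_tch m3
      (t1.mono Set.subset_union_left m4)

theorem growth [Finite V] {G : SimpleGraph V} {k m : ℕ} {S T C Z : Set V}
    (hst : State G S T C) (hno : ¬ IsMinor (Pgraph k) G) (hT : Tr G (k + m + 1) Z C) :
    ∃ S' Y K, State G S' Y K ∧ (∃ Z', Tr G m Z' K) ∧ S ⊆ S' ∧ S' ⊆ S ∪ C ∧ Y ⊆ C ∧ K ⊆ C ∧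
      Tch G Y T := by
  obtain ⟨s0, hs0, c, hc, hsc⟩ := hst.tSC
  obtain ⟨L, hLC, hcL, hCL, -, ZL, hTL⟩ := hT.pick c
  obtain ⟨K, R, R', hcore, hL⟩ := exists_core hst hno hLC hTL hCL
    ⟨c, ⟨hc, hcL⟩, s0, Or.inl hs0, hsc.symm⟩
  set U := S ∪ T ∪ C with hUdef
  have hUD : U = (S ∪ T ∪ (C \ L)) ∪ (K ∪ R ∪ R') := by
    rw [← hL, Set.union_assoc (S ∪ T), Set.sdiff_union_of_subset hLC]
  obtain ⟨b1, b2, b3⟩ := hcore.blobs hUD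
  have hML : R ∪ K ⊆ L := by rw [hL]; intro v; simp only [Set.mem_union]; tauto
  have hML' : R' ⊆ L := by rw [hL]; intro v; simp only [Set.mem_union]; tauto
  have hKL : K ⊆ L := by rw [hL]; intro v; simp only [Set.mem_union]; tauto
  have hSL : ∀ X, X ⊆ L → Disjoint S X := fun X hX => hst.dSC.mono_right (hX.trans hLC)
  have hTL' : ∀ X, X ⊆ L → Disjoint T X := fun X hX => hst.dTC.mono_right (hX.trans hLC)
  obtain ⟨P, hPU, hP1, hP2, -, hSP, hTP, hop⟩ := cyc_blobs (U := U) {S, T, R ∪ K, R'} hst.conn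
    (by
      rintro B (rfl | rfl | rfl | rfl)
      · exact ⟨fun v hv => Or.inl (Or.inl hv), hst.cS, hst.conn_S⟩
      · exact ⟨fun v hv => Or.inl (Or.inr hv), hst.cT, hst.conn_T⟩
      · exact b1
      · exact b2)
    (by
      have a1 := hst.dST
      have a2 := hSL _ hML
      have a3 := hSL _ hML'
      have a4 := hTL' _ hML
      have a5 := hTL' _ hML'
      rintro B (rfl | rfl | rfl | rfl) B' (rfl | rfl | rfl | rfl) hne <;>
        first
        | exact absurd rfl hne
        | assumption
        | (apply Disjoint.symm; assumption))
    (by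
      intro v hv hvB
      refine hst.conn_v (hv.resolve_left ?_)
      rintro (h | h)
      · exact hvB S (by simp) h
      · exact hvB T (by simp) h)
    (S := S) (T := T) (M := R ∪ K) (M' := R') (by simp) (by simp) (by simp) (by simp) hst.dST b3
  obtain ⟨F, hFc, hFsub, hFL, hFor⟩ : ∃ F, Conn G F ∧ F ⊆ U \ P ∧ F ⊆ L ∧
      ((R ∪ K ⊆ P ∧ R' ⊆ F ∧ Disjoint (R ∪ K) (U \ P)) ∨
        (R' ⊆ P ∧ R ∪ K ⊆ F ∧ Disjoint (R ∪ K) P ∧ Disjoint R' (U \ P))) := by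
    rcases hop with ⟨h1, h2⟩ | ⟨h1, h2⟩
    · exact ⟨R', b2.2.1, h2, hML', Or.inl ⟨h1, subset_rfl,
        Set.disjoint_left.2 fun v hv h => h.2 (h1 hv)⟩⟩
    · exact ⟨R ∪ K, b1.2.1, h2, hML, Or.inr ⟨h1, subset_rfl,
        Set.disjoint_left.2 fun v hv h => (h2 hv).2 h, Set.disjoint_left.2 fun v hv h => h.2 (h1 hv)⟩⟩
  obtain ⟨Y, hFY, hYs, hYc, hYcl⟩ := exists_comp (X := (U \ P) \ T) hFc
    (fun v hv => ⟨hFsub hv, fun h => Set.disjoint_left.1 (hTL' F hFL) h hv⟩)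
  have hYC : Y ⊆ C := by
    intro v hv
    have h1 := hYs hv
    rcases h1.1.1 with (h | h) | h
    · exact absurd (hSP h) h1.1.2
    · exact absurd h h1.2
    · exact h
  have hYP : Disjoint P Y := Set.disjoint_left.2 fun v hv h => (hYs h).1.2 hv
  have hYt : Tch G Y T := by
    have hYs' : Y ⊆ U \ P := fun v hv => (hYs hv).1
    obtain ⟨t0, ht0⟩ := hst.cT.1
    obtain ⟨x, hx, y, hy, hxy⟩ := hP2.tch (Y := Y) (Z := (U \ P) \ Y)
      (by rw [Set.union_sdiff_cancel hYs']) hYc.1 ⟨t0, hTP ht0, fun h => (hYs h).2 ht0⟩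
      Set.disjoint_sdiff_right
    refine ⟨x, hx, y, ?_, hxy⟩
    by_contra hyT
    exact hy.2 (hYcl x hx y ⟨hy.1, hyT⟩ hxy)
  have hYU : Y ⊆ U := fun v hv => (hYs hv).1.1
  have hRK : ∀ X, R ⊆ X → R ⊆ X \ K := fun X hX v hv =>
    ⟨hX hv, fun h => Set.disjoint_left.1 hcore.dKR h hv⟩
  have hRK' : ∀ X, R' ⊆ X → R' ⊆ X \ K := fun X hX v hv =>
    ⟨hX hv, fun h => Set.disjoint_left.1 hcore.dKR' h hv⟩
  have hdP : Disjoint (P \ K) (Y \ K) := hYP.mono Set.sdiff_subset Set.sdiff_subset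
  have hcP : Conn G (P \ K) := by
    apply hcore.diff_conn (hUD ▸ hPU) hP1
    rcases hFor with ⟨h1, h2, h3⟩ | ⟨h1, h2, h3, h4⟩
    · exact Or.inl ⟨h1, (hYP.mono_right (h2.trans hFY)).symm⟩
    · exact Or.inr h3
  have hcY : Conn G (Y \ K) := by
    apply hcore.diff_conn (hUD ▸ hYU) hYc
    rcases hFor with ⟨h1, h2, h3⟩ | ⟨h1, h2, h3, h4⟩
    · exact Or.inr (hYP.mono_left h1)
    · exact Or.inl ⟨h2.trans hFY, hYP.mono_left h1⟩
  have hstate : State G (P \ K) (Y \ K) K := by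
    rcases hFor with ⟨h1, h2, h3⟩ | ⟨h1, h2, h3, h4⟩
    · exact hcore.state hcP hcY (hRK _ (Set.subset_union_left.trans h1))
        (hRK' _ (h2.trans hFY)) hdP Set.disjoint_sdiff_left Set.disjoint_sdiff_left
    · exact hcore.symm.state hcP hcY (hRK' _ h1)
        (hRK _ ((Set.subset_union_left.trans h2).trans hFY)) hdP Set.disjoint_sdiff_left
        Set.disjoint_sdiff_left
  refine ⟨P \ K, Y \ K, K, hstate, hcore.tr, ?_, ?_, Set.sdiff_subset.trans hYC,
    hKL.trans hLC, ?_⟩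
  · exact fun v hv => ⟨hSP hv, fun h => Set.disjoint_left.1 (hSL K hKL) hv h⟩
  · rintro v ⟨hv, -⟩
    rcases hPU hv with (h | h) | h
    · exact Or.inl h
    · exact absurd hv (hTP h).2
    · exact Or.inr h
  · obtain ⟨x, hx, y, hy, hxy⟩ := hYt
    refine ⟨x, ⟨hx, fun hxK => ?_⟩, y, hy, hxy⟩
    exact hcore.nKD ⟨x, hxK, y, Or.inl (Or.inr hy), hxy⟩

end PW


namespace PW
variable {V : Type*}

theorem sdiff_sdiff2 (A B C : Set V) : (A \ B) \ C = A \ (B ∪ C) := by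
  ext v
  simp only [Set.mem_sdiff, Set.mem_union]; tauto

def Opp (M M' X Y : Set V) : Prop := (M ⊆ X ∧ M' ⊆ Y) ∨ (M' ⊆ X ∧ M ⊆ Y)

def Side (M M' X : Set V) : Prop := (M ⊆ X ∧ Disjoint M' X) ∨ Disjoint M X

theorem Opp.symm {M M' X Y : Set V} (h : Opp M M' X Y) : Opp M M' Y X := by
  rcases h with h | h
  · exact Or.inr h.symm
  · exact Or.inl h.symm

theorem Opp.side {M M' X Y : Set V} (h : Opp M M' X Y) (hd : Disjoint X Y) : Side M M' X := by
  rcases h with h | h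
  · exact Or.inl ⟨h.1, hd.symm.mono_left h.2⟩
  · exact Or.inr (hd.symm.mono_left h.2)

theorem Opp.side3 {M M' X Y Z : Set V} (h : Opp M M' X Y) (hd : Disjoint X Z)
    (hd' : Disjoint Y Z) : Side M M' Z := by
  rcases h with h | h
  · exact Or.inr (hd.mono_left h.1)
  · exact Or.inr (hd'.mono_left h.2)

theorem Opp.mono {M M' X Y X' Y' : Set V} (h : Opp M M' X Y) (hX : X ⊆ X') (hY : Y ⊆ Y') :
    Opp M M' X' Y' := by
  rcases h with h | h
  · exact Or.inl ⟨h.1.trans hX, h.2.trans hY⟩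
  · exact Or.inr ⟨h.1.trans hX, h.2.trans hY⟩

structure CPair (G : SimpleGraph V) (m : ℕ) (U D1 K1 R1 R1' D2 K2 R2 R2' : Set V) : Prop where
  c1 : Core G m D1 K1 R1 R1'
  c2 : Core G m D2 K2 R2 R2'
  u1 : U = D1 ∪ (K1 ∪ R1 ∪ R1')
  u2 : U = D2 ∪ (K2 ∪ R2 ∪ R2')
  d : Disjoint (K1 ∪ R1 ∪ R1') (K2 ∪ R2 ∪ R2')

theorem CPair.symm {G : SimpleGraph V} {m : ℕ} {U D1 K1 R1 R1' D2 K2 R2 R2' : Set V}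
    (h : CPair G m U D1 K1 R1 R1' D2 K2 R2 R2') : CPair G m U D2 K2 R2 R2' D1 K1 R1 R1' :=
  ⟨h.c2, h.c1, h.u2, h.u1, h.d.symm⟩

theorem CPair.conn {G : SimpleGraph V} {m : ℕ} {U D1 K1 R1 R1' D2 K2 R2 R2' : Set V}
    (h : CPair G m U D1 K1 R1 R1' D2 K2 R2 R2') {X : Set V} (hX : X ⊆ U) (hc : Conn G X)
    (h1 : Side (R1 ∪ K1) R1' X) (h2 : Side (R2 ∪ K2) R2' X) : Conn G (X \ (K1 ∪ K2)) := by
  have a := h.c1.diff_conn (h.u1 ▸ hX) hc h1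
  have b := h.c2.diff_conn (h.u2 ▸ (Set.sdiff_subset.trans hX)) a (by
    rcases h2 with ⟨h2, h3⟩ | h2
    · refine Or.inl ⟨fun v hv => ⟨h2 hv, fun hv' => ?_⟩, h3.mono_right Set.sdiff_subset⟩
      refine dl h.d v (Or.inl (Or.inl hv')) ?_
      rcases hv with hv | hv
      · exact Or.inl (Or.inr hv)
      · exact Or.inl (Or.inl hv)
    · exact Or.inr (h2.mono_right Set.sdiff_subset))
  rwa [sdiff_sdiff2] at b

theorem CPair.state {G : SimpleGraph V} {m : ℕ} {U D1 K1 R1 R1' D2 K2 R2 R2' : Set V}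
    (h : CPair G m U D1 K1 R1 R1' D2 K2 R2 R2') {X Y : Set V}
    (hX : Conn G (X \ (K1 ∪ K2))) (hY : Conn G (Y \ (K1 ∪ K2))) (hd : Disjoint X Y)
    (ho : Opp (R1 ∪ K1) R1' X Y) : State G (X \ (K1 ∪ K2)) (Y \ (K1 ∪ K2)) K1 := by
  have hd' : Disjoint (X \ (K1 ∪ K2)) (Y \ (K1 ∪ K2)) := hd.mono Set.sdiff_subset Set.sdiff_subset
  have a : ∀ X : Set V, Disjoint (X \ (K1 ∪ K2)) K1 := fun X =>
    Set.disjoint_left.2 fun v hv h => hv.2 (Or.inl h)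
  have b : ∀ X, R1 ⊆ X → R1 ⊆ X \ (K1 ∪ K2) := fun X hX v hv => ⟨hX hv, by
    rintro (h' | h')
    · exact dl h.c1.dKR v h' hv
    · exact dl h.d v (Or.inl (Or.inr hv)) (Or.inl (Or.inl h'))⟩
  have b' : ∀ X, R1' ⊆ X → R1' ⊆ X \ (K1 ∪ K2) := fun X hX v hv => ⟨hX hv, by
    rintro (h' | h')
    · exact dl h.c1.dKR' v h' hv
    · exact dl h.d v (Or.inr hv) (Or.inl (Or.inl h'))⟩
  rcases ho with ho | ho
  · exact h.c1.state hX hY (b _ (Set.subset_union_left.trans ho.1)) (b' _ ho.2) hd' (a _) (a _)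
  · exact h.c1.symm.state hX hY (b' _ ho.1) (b _ (Set.subset_union_left.trans ho.2)) hd' (a _) (a _)

def SplitC (G : SimpleGraph V) (m : ℕ) (S T U : Set V) : Prop :=
  (∃ S' T' K1 K2, S ⊆ S' ∧ T ⊆ T' ∧ State G S' T' K1 ∧ State G S' T' K2 ∧ (∃ Z, Tr G m Z K1) ∧
    (∃ Z, Tr G m Z K2) ∧ Disjoint K1 K2 ∧ S' ⊆ U ∧ T' ⊆ U ∧ K1 ⊆ U ∧ K2 ⊆ U) ∨
  (∃ S' W T' K1 K2, S ⊆ S' ∧ T ⊆ T' ∧ State G S' W K1 ∧ State G W T' K2 ∧ (∃ Z, Tr G m Z K1) ∧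
    (∃ Z, Tr G m Z K2) ∧ Disjoint S' T' ∧ Disjoint K1 K2 ∧ Disjoint S' K2 ∧ Disjoint T' K1 ∧
    S' ⊆ U ∧ W ⊆ U ∧ T' ⊆ U ∧ K1 ⊆ U ∧ K2 ⊆ U)

theorem SplitC.symm {G : SimpleGraph V} {m : ℕ} {S T U : Set V} (h : SplitC G m S T U) :
    SplitC G m T S U := by
  rcases h with ⟨S', T', K1, K2, a1, a2, a3, a4, a5, a6, a7, a8, a9, a10, a11⟩ |
    ⟨S', W, T', K1, K2, a1, a2, a3, a4, a5, a6, a7, a8, a9, a10, a11, a12, a13, a14, a15⟩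
  · exact Or.inl ⟨T', S', K1, K2, a2, a1, a3.symm, a4.symm, a5, a6, a7, a9, a8, a10, a11⟩
  · exact Or.inr ⟨T', W, S', K2, K1, a2, a1, a4.symm, a3.symm, a6, a5, a7.symm, a8.symm, a10, a9,
      a13, a12, a11, a15, a14⟩

theorem CPair.finA {G : SimpleGraph V} {m : ℕ} {U D1 K1 R1 R1' D2 K2 R2 R2' : Set V}
    (h : CPair G m U D1 K1 R1 R1' D2 K2 R2 R2') {S T X : Set V}
    (hX : X ⊆ U) (hc : Conn G X) (hc' : Conn G (U \ X)) (hS : S ⊆ X) (hT : T ⊆ U \ X)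
    (hSK : Disjoint S (K1 ∪ K2)) (hTK : Disjoint T (K1 ∪ K2))
    (h1 : Opp (R1 ∪ K1) R1' X (U \ X)) (h2 : Opp (R2 ∪ K2) R2' X (U \ X)) :
    SplitC G m S T U := by
  have hd : Disjoint X (U \ X) := Set.disjoint_sdiff_right
  have e1 := h.conn hX hc (h1.side hd) (h2.side hd)
  have e2 := h.conn Set.sdiff_subset hc' (h1.symm.side hd.symm) (h2.symm.side hd.symm)
  have s1 := h.state e1 e2 hd h1
  have s2 := h.symm.state (by rwa [Set.union_comm K2 K1]) (by rwa [Set.union_comm K2 K1]) hd h2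
  rw [Set.union_comm K2 K1] at s2
  have k1 : K1 ⊆ U := by rw [h.u1]; intro v; simp only [Set.mem_union]; tauto
  have k2 : K2 ⊆ U := by rw [h.u2]; intro v; simp only [Set.mem_union]; tauto
  have dK : Disjoint K1 K2 := h.d.mono (by intro v; simp only [Set.mem_union]; tauto)
    (by intro v; simp only [Set.mem_union]; tauto)
  exact Or.inl ⟨X \ (K1 ∪ K2), (U \ X) \ (K1 ∪ K2), K1, K2, fun v hv => ⟨hS hv, dl hSK v hv⟩, fun v hv => ⟨hT hv, dl hTK v hv⟩,
    s1, s2, h.c1.tr, h.c2.tr, dK, Set.sdiff_subset.trans hX,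
    Set.sdiff_subset.trans Set.sdiff_subset, k1, k2⟩

theorem CPair.finB {G : SimpleGraph V} {m : ℕ} {U D1 K1 R1 R1' D2 K2 R2 R2' : Set V}
    (h : CPair G m U D1 K1 R1 R1' D2 K2 R2 R2') {S T X W Y : Set V}
    (hX : X ⊆ U) (hW : W ⊆ U) (hY : Y ⊆ U) (hc : Conn G X) (hcW : Conn G W) (hcY : Conn G Y)
    (hS : S ⊆ X) (hT : T ⊆ Y) (dXW : Disjoint X W) (dXY : Disjoint X Y) (dWY : Disjoint W Y)
    (hSK : Disjoint S (K1 ∪ K2)) (hTK : Disjoint T (K1 ∪ K2))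
    (h1 : Opp (R1 ∪ K1) R1' W Y) (h2 : Opp (R2 ∪ K2) R2' X W) :
    SplitC G m S T U := by
  have e1 := h.conn hX hc (h1.side3 dXW.symm dXY.symm) (h2.side dXW)
  have e2 := h.conn hW hcW (h1.side dWY) (h2.symm.side dXW.symm)
  have e3 := h.conn hY hcY (h1.symm.side dWY.symm) (h2.side3 dXY dWY)
  have s1 := h.state e2 e3 dWY h1
  have s2 := h.symm.state (by rwa [Set.union_comm K2 K1]) (by rwa [Set.union_comm K2 K1]) dXW h2
  rw [Set.union_comm K2 K1] at s2
  have k1 : K1 ⊆ U := by rw [h.u1]; intro v; simp only [Set.mem_union]; tauto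
  have k2 : K2 ⊆ U := by rw [h.u2]; intro v; simp only [Set.mem_union]; tauto
  have dK : Disjoint K1 K2 := h.d.mono (by intro v; simp only [Set.mem_union]; tauto)
    (by intro v; simp only [Set.mem_union]; tauto)
  exact Or.inr ⟨X \ (K1 ∪ K2), W \ (K1 ∪ K2), Y \ (K1 ∪ K2), K2, K1,
    fun v hv => ⟨hS hv, dl hSK v hv⟩, fun v hv => ⟨hT hv, dl hTK v hv⟩,
    s2, s1, h.c2.tr, h.c1.tr, dXY.mono Set.sdiff_subset Set.sdiff_subset, dK.symm,
    Set.disjoint_left.2 fun v hv h' => hv.2 (Or.inl h'),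
    Set.disjoint_left.2 fun v hv h' => hv.2 (Or.inr h'),
    Set.sdiff_subset.trans hX, Set.sdiff_subset.trans hW, Set.sdiff_subset.trans hY, k2, k1⟩

theorem split_aux2 [Finite V] {G : SimpleGraph V} {U S S1 F M M' : Set V} (hU : Conn G U)
    (hS1 : S1 ⊆ U) (hc1 : Conn G S1) (hc1' : Conn G (U \ S1))
    (bS : S ⊆ S1 ∧ Conn G S ∧ Conn G (U \ S)) (bF : F ⊆ S1 ∧ Conn G F ∧ Conn G (U \ F))
    (bM : M ⊆ S1 ∧ Conn G M ∧ Conn G (U \ M)) (bM' : M' ⊆ S1 ∧ Conn G M' ∧ Conn G (U \ M'))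
    (dSF : Disjoint S F) (dSM : Disjoint S M) (dSM' : Disjoint S M') (dFM : Disjoint F M)
    (dFM' : Disjoint F M') (dMM' : Disjoint M M')
    (hv : ∀ v ∈ S1, v ∉ S → Conn G (U \ {v})) :
    (∃ X ⊆ S1, S ⊆ X ∧ F ⊆ X ∧ Conn G X ∧ Conn G (U \ X) ∧ Opp M M' X (U \ X)) ∨
    (∃ X W, X ⊆ S1 ∧ W ⊆ S1 ∧ Disjoint X W ∧ S ⊆ X ∧ F ⊆ W ∧ Conn G X ∧ Conn G W ∧
      Conn G (U \ (X ∪ W)) ∧ Opp M M' X W) := by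
  obtain ⟨T1, hT1⟩ : ∃ T1, T1 = U \ S1 := ⟨_, rfl⟩
  have dT : ∀ X, X ⊆ S1 → Disjoint T1 X := fun X hX => by
    rw [hT1]; exact Set.disjoint_left.2 fun v hv h => hv.2 (hX h)
  have eT : U \ T1 = S1 := by
    rw [hT1, Set.sdiff_sdiff_right_self]; exact Set.inter_eq_right.2 hS1
  obtain ⟨P, hPU, hP1, hP2, hPF, hSP, hTP, hop⟩ := cyc_blobs (U := U) {S, T1, M, M', F} hU
    (by
      rintro B (rfl | rfl | rfl | rfl | rfl)
      · exact ⟨bS.1.trans hS1, bS.2⟩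
      · exact ⟨by rw [hT1]; exact Set.sdiff_subset, by rwa [hT1], by rwa [eT]⟩
      · exact ⟨bM.1.trans hS1, bM.2⟩
      · exact ⟨bM'.1.trans hS1, bM'.2⟩
      · exact ⟨bF.1.trans hS1, bF.2⟩)
    (by
      have a1 := dT _ bS.1
      have a2 := dT _ bM.1
      have a3 := dT _ bM'.1
      have a4 := dT _ bF.1
      rintro B (rfl | rfl | rfl | rfl | rfl) B' (rfl | rfl | rfl | rfl | rfl) hne <;>
        first
        | exact absurd rfl hne
        | assumption
        | (apply Disjoint.symm; assumption))
    (by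
      intro v hvU hvB
      refine hv v ?_ (hvB S (by simp))
      by_contra h
      exact hvB T1 (by simp) (by rw [hT1]; exact ⟨hvU, h⟩))
    (S := S) (T := T1) (M := M) (M' := M') (by simp) (by simp) (by simp) (by simp)
    (dT _ bS.1).symm dMM'
  have hPS1 : P ⊆ S1 := by
    intro v hvP
    by_contra h
    exact (hTP (by rw [hT1]; exact ⟨hPU hvP, h⟩)).2 hvP
  rcases hPF F (by simp) with hF | hF
  · exact Or.inl ⟨P, hPS1, hSP, hF, hP1, hP2, hop⟩
  obtain ⟨W, hFW, hWs, hWc, hWc', hWcl⟩ := exists_bipart hP2 bF.2.1 (Y2 := T1) (by rwa [hT1]) hF hTP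
    (dT _ bF.1).symm
  have hW1 : W ⊆ S1 := by
    intro v hvW
    by_contra h
    exact (hWs hvW).2 (by rw [hT1]; exact ⟨(hWs hvW).1.1, h⟩)
  have dPW : Disjoint P W := Set.disjoint_left.2 fun v hv h => (hWs h).1.2 hv
  have eW : (U \ P) \ W = U \ (P ∪ W) := by rw [sdiff_sdiff2]
  rw [eW] at hWc'
  have key : ∀ E, E ⊆ S1 → Conn G E → E ⊆ U \ P → E ⊆ W ∨ E ⊆ U \ (P ∪ W) := by
    intro E hE hEc hEP
    by_cases h : (E ∩ W).Nonempty
    · exact Or.inl (hEc.subset_of_closed (X := (U \ P) \ T1)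
        (fun v hv => ⟨hEP hv, fun h => dl (dT E hE) v h hv⟩) h hWcl)
    · refine Or.inr fun v hv => ⟨(hEP hv).1, ?_⟩
      rintro (h' | h')
      · exact (hEP hv).2 h'
      · exact h ⟨v, hv, h'⟩
  have tch : Tch G P W := by
    obtain ⟨s, hs⟩ := bS.2.1.1
    obtain ⟨x, hx, y, hy, hxy⟩ := hc1.tch (Y := W) (Z := S1 \ W)
      (by rw [Set.union_sdiff_cancel hW1]) hWc.1 ⟨s, bS.1 hs, fun h => dl dPW s (hSP hs) h⟩
      Set.disjoint_sdiff_right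
    refine ⟨y, ?_, x, hx, hxy.symm⟩
    by_contra hyP
    exact hy.2 (hWcl x hx y ⟨⟨hS1 hy.1, hyP⟩, by rw [hT1]; exact fun h => h.2 hy.1⟩ hxy)
  have finA : Opp M M' (P ∪ W) (U \ (P ∪ W)) → (∃ X ⊆ S1, S ⊆ X ∧ F ⊆ X ∧ Conn G X ∧
      Conn G (U \ X) ∧ Opp M M' X (U \ X)) := fun h =>
    ⟨P ∪ W, Set.union_subset hPS1 hW1, hSP.trans Set.subset_union_left,
      hFW.trans Set.subset_union_right, hP1.union_tch hWc tch, hWc', h⟩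
  have finB : Opp M M' P W → (∃ X W, X ⊆ S1 ∧ W ⊆ S1 ∧ Disjoint X W ∧ S ⊆ X ∧ F ⊆ W ∧
      Conn G X ∧ Conn G W ∧ Conn G (U \ (X ∪ W)) ∧ Opp M M' X W) := fun h =>
    ⟨P, W, hPS1, hW1, dPW, hSP, hFW, hP1, hWc, hWc', h⟩
  rcases hop with ⟨h1, h2⟩ | ⟨h1, h2⟩
  · rcases key M' bM'.1 bM'.2.1 h2 with h | h
    · exact Or.inr (finB (Or.inl ⟨h1, h⟩))
    · exact Or.inl (finA (Or.inl ⟨h1.trans Set.subset_union_left, h⟩))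
  · rcases key M bM.1 bM.2.1 h2 with h | h
    · exact Or.inr (finB (Or.inr ⟨h1, h⟩))
    · exact Or.inl (finA (Or.inr ⟨h1.trans Set.subset_union_left, h⟩))

theorem split_same [Finite V] {G : SimpleGraph V} {m : ℕ}
    {U D1 K1 R1 R1' D2 K2 R2 R2' S T C P : Set V}
    (h : CPair G m U D1 K1 R1 R1' D2 K2 R2 R2') (hst : State G S T C) (hU : U = S ∪ T ∪ C)
    (hL1 : K1 ∪ R1 ∪ R1' ⊆ C) (hL2 : K2 ∪ R2 ∪ R2' ⊆ C)
    (hPU : P ⊆ U) (hP : Conn G P) (hP' : Conn G (U \ P)) (hSP : S ⊆ P) (hTP : T ⊆ U \ P)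
    (h1 : Opp (R1 ∪ K1) R1' P (U \ P)) (h2 : R2 ∪ K2 ⊆ P) (h2' : R2' ⊆ P) :
    SplitC G m S T U := by
  have hd : Disjoint P (U \ P) := Set.disjoint_sdiff_right
  obtain ⟨b1, b1', b1d⟩ := h.c1.blobs h.u1
  obtain ⟨b2, b2', b2d⟩ := h.c2.blobs h.u2
  have sub1 : R1 ∪ K1 ⊆ K1 ∪ R1 ∪ R1' := by intro v; simp only [Set.mem_union]; tauto
  have sub1' : R1' ⊆ K1 ∪ R1 ∪ R1' := by intro v; simp only [Set.mem_union]; tauto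
  have sub2 : R2 ∪ K2 ⊆ K2 ∪ R2 ∪ R2' := by intro v; simp only [Set.mem_union]; tauto
  have sub2' : R2' ⊆ K2 ∪ R2 ∪ R2' := by intro v; simp only [Set.mem_union]; tauto
  have subK : K1 ∪ K2 ⊆ C := Set.union_subset
    ((show K1 ⊆ K1 ∪ R1 ∪ R1' by intro v; simp only [Set.mem_union]; tauto).trans hL1)
    ((show K2 ⊆ K2 ∪ R2 ∪ R2' by intro v; simp only [Set.mem_union]; tauto).trans hL2)
  obtain ⟨F, F', hFP, hF'P, bF, hFL, hFF⟩ : ∃ F F', F ⊆ P ∧ F' ⊆ U \ P ∧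
      (Conn G F ∧ Conn G (U \ F)) ∧ F ⊆ K1 ∪ R1 ∪ R1' ∧
      ((F = R1 ∪ K1 ∧ F' = R1') ∨ (F' = R1 ∪ K1 ∧ F = R1')) := by
    rcases h1 with h1 | h1
    · exact ⟨R1 ∪ K1, R1', h1.1, h1.2, b1.2, sub1, Or.inl ⟨rfl, rfl⟩⟩
    · exact ⟨R1', R1 ∪ K1, h1.1, h1.2, b1'.2, sub1', Or.inr ⟨rfl, rfl⟩⟩
  have hOF : ∀ X Y, F ⊆ X → F' ⊆ Y → Opp (R1 ∪ K1) R1' X Y := by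
    intro X Y hX hY
    rcases hFF with ⟨rfl, rfl⟩ | ⟨rfl, rfl⟩
    · exact Or.inl ⟨hX, hY⟩
    · exact Or.inr ⟨hX, hY⟩
  have hSK := hst.dSC.mono_right subK
  have hTK := hst.dTC.mono_right subK
  subst hU
  rcases split_aux2 hst.conn hPU hP hP' ⟨hSP, hst.cS, hst.conn_S⟩ ⟨hFP, bF⟩ ⟨h2, b2.2⟩ ⟨h2', b2'.2⟩
    (hst.dSC.mono_right (hFL.trans hL1)) (hst.dSC.mono_right (sub2.trans hL2))
    (hst.dSC.mono_right (sub2'.trans hL2)) (h.d.mono hFL sub2) (h.d.mono hFL sub2') b2d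
    (by
      intro v hv hvS
      refine hst.conn_v ?_
      rcases hPU hv with (h' | h') | h'
      · exact absurd h' hvS
      · exact absurd hv (hTP h').2
      · exact h') with
    ⟨X, hXP, hSX, hFX, hX, hX', ho⟩ | ⟨X, W, hXP, hWP, dXW, hSX, hFW, hX, hW, hY, ho⟩
  · have hPX : (S ∪ T ∪ C) \ P ⊆ (S ∪ T ∪ C) \ X := Set.sdiff_subset_sdiff_right hXP
    exact h.finA (hXP.trans hPU) hX hX' hSX (hTP.trans hPX) hSK hTK
      (hOF _ _ hFX (hF'P.trans hPX)) ho
  · have hPX : (S ∪ T ∪ C) \ P ⊆ (S ∪ T ∪ C) \ (X ∪ W) :=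
      Set.sdiff_subset_sdiff_right (Set.union_subset hXP hWP)
    exact h.finB (hXP.trans hPU) (hWP.trans hPU) Set.sdiff_subset hX hW hY hSX (hTP.trans hPX) dXW
      (Set.disjoint_left.2 fun v hv h' => h'.2 (Or.inl hv))
      (Set.disjoint_left.2 fun v hv h' => h'.2 (Or.inr hv)) hSK hTK
      (hOF _ _ hFW (hF'P.trans hPX)) ho

theorem split [Finite V] {G : SimpleGraph V} {k m : ℕ} {S T C Z : Set V}
    (hst : State G S T C) (hno : ¬ IsMinor (Pgraph k) G) (hT : Tr G (k + m + 2) Z C) :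
    SplitC G m S T (S ∪ T ∪ C) := by
  obtain ⟨s0, hs0, c, hc, hsc⟩ := hst.tSC
  obtain ⟨L1, L2, hL1C, hL2C, hLd, hcL1, hcL2, hCL1, hCL2, ⟨Z1, hT1⟩, ⟨Z2, hT2⟩⟩ := hT.pick2 c
  obtain ⟨K1, R1, R1', core1, e1⟩ := exists_core hst hno hL1C hT1 hCL1
    ⟨c, ⟨hc, hcL1⟩, s0, Or.inl hs0, hsc.symm⟩
  obtain ⟨K2, R2, R2', core2, e2⟩ := exists_core hst hno hL2C hT2 hCL2
    ⟨c, ⟨hc, hcL2⟩, s0, Or.inl hs0, hsc.symm⟩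
  obtain ⟨U, hU⟩ : ∃ U, U = S ∪ T ∪ C := ⟨_, rfl⟩
  have hp : CPair G m U _ K1 R1 R1' _ K2 R2 R2' := ⟨core1, core2,
    by rw [hU, ← e1, Set.union_assoc (S ∪ T), Set.sdiff_union_of_subset hL1C],
    by rw [hU, ← e2, Set.union_assoc (S ∪ T), Set.sdiff_union_of_subset hL2C],
    by rwa [← e1, ← e2]⟩
  obtain ⟨b1, b1', b1d⟩ := hp.c1.blobs hp.u1
  obtain ⟨b2, b2', b2d⟩ := hp.c2.blobs hp.u2
  have sub1 : R1 ∪ K1 ⊆ L1 := by rw [e1]; intro v; simp only [Set.mem_union]; tauto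
  have sub1' : R1' ⊆ L1 := by rw [e1]; intro v; simp only [Set.mem_union]; tauto
  have sub2 : R2 ∪ K2 ⊆ L2 := by rw [e2]; intro v; simp only [Set.mem_union]; tauto
  have sub2' : R2' ⊆ L2 := by rw [e2]; intro v; simp only [Set.mem_union]; tauto
  have hUc : Conn G U := by rw [hU]; exact hst.conn
  obtain ⟨P, hPU, hP1, hP2, hPF, hSP, hTP, hop⟩ := cyc_blobs (U := U)
    {S, T, R1 ∪ K1, R1', R2 ∪ K2, R2'} hUc
    (by
      rintro B (rfl | rfl | rfl | rfl | rfl | rfl)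
      · exact ⟨fun v hv => hU ▸ Or.inl (Or.inl hv), hst.cS, hU ▸ hst.conn_S⟩
      · exact ⟨fun v hv => hU ▸ Or.inl (Or.inr hv), hst.cT, hU ▸ hst.conn_T⟩
      · exact b1
      · exact b1'
      · exact b2
      · exact b2')
    (by
      have a0 := hst.dST
      have a1 := hst.dSC.mono_right (sub1.trans hL1C)
      have a2 := hst.dSC.mono_right (sub1'.trans hL1C)
      have a3 := hst.dSC.mono_right (sub2.trans hL2C)
      have a4 := hst.dSC.mono_right (sub2'.trans hL2C)
      have a5 := hst.dTC.mono_right (sub1.trans hL1C)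
      have a6 := hst.dTC.mono_right (sub1'.trans hL1C)
      have a7 := hst.dTC.mono_right (sub2.trans hL2C)
      have a8 := hst.dTC.mono_right (sub2'.trans hL2C)
      have a9 := hLd.mono sub1 sub2
      have a10 := hLd.mono sub1 sub2'
      have a11 := hLd.mono sub1' sub2
      have a12 := hLd.mono sub1' sub2'
      rintro B (rfl | rfl | rfl | rfl | rfl | rfl) B' (rfl | rfl | rfl | rfl | rfl | rfl) hne <;>
        first
        | exact absurd rfl hne
        | assumption
        | (apply Disjoint.symm; assumption))
    (by
      intro v hv hvB
      rw [hU] at hv ⊢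
      refine hst.conn_v (hv.resolve_left ?_)
      rintro (h | h)
      · exact hvB S (by simp) h
      · exact hvB T (by simp) h)
    (S := S) (T := T) (M := R1 ∪ K1) (M' := R1') (by simp) (by simp) (by simp) (by simp) hst.dST b1d
  have hL1' : K1 ∪ R1 ∪ R1' ⊆ C := e1 ▸ hL1C
  have hL2' : K2 ∪ R2 ∪ R2' ⊆ C := e2 ▸ hL2C
  have subK : K1 ∪ K2 ⊆ C := Set.union_subset
    ((show K1 ⊆ K1 ∪ R1 ∪ R1' by intro v; simp only [Set.mem_union]; tauto).trans hL1')
    ((show K2 ⊆ K2 ∪ R2 ∪ R2' by intro v; simp only [Set.mem_union]; tauto).trans hL2')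
  have hSK := hst.dSC.mono_right subK
  have hTK := hst.dTC.mono_right subK
  have eP : U \ (U \ P) = P := by
    rw [Set.sdiff_sdiff_right_self]; exact Set.inter_eq_right.2 hPU
  rw [← hU]
  rcases hPF (R2 ∪ K2) (by simp) with h2 | h2 <;> rcases hPF R2' (by simp) with h2' | h2'
  · exact split_same hp hst hU hL1' hL2' hPU hP1 hP2 hSP hTP hop h2 h2'
  · exact hp.finA hPU hP1 hP2 hSP hTP hSK hTK hop (Or.inl ⟨h2, h2'⟩)
  · exact hp.finA hPU hP1 hP2 hSP hTP hSK hTK hop (Or.inr ⟨h2', h2⟩)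
  · exact (split_same hp hst.symm (by rw [hU, Set.union_comm S T]) hL1' hL2' Set.sdiff_subset hP2
      (by rwa [eP]) hTP (by rwa [eP]) (by rw [eP]; exact Opp.symm hop) h2 h2').symm

end PW


namespace PW

section
variable {V : Type*}

theorem Tr.down [Finite V] {G : SimpleGraph V} {k m : ℕ} {Z X : Set V} (h : Tr G (k + m) Z X) :
    ∃ Z', Tr G m Z' X := by
  obtain ⟨Z', Y, hY, h'⟩ := h.sub
  exact h'.absorb hY h.conn.1

def PT (G : SimpleGraph V) (a : ℕ) (S T U : Set V) : Prop :=
  ∃ D Z X, Conn G D ∧ S ⊆ D ∧ T ⊆ Z ∧ BT G {v | ∃ d ∈ D, G.Adj v d} a Z X ∧ Disjoint D X ∧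
    D ⊆ U ∧ X ⊆ U

def QS (G : SimpleGraph V) : ℕ → Set V → Set V → Set V → Prop
  | 0, S, T, X => Conn G S ∧ Conn G T ∧ Disjoint S T ∧ Tch G S T ∧ Disjoint S X ∧ Disjoint T X
  | l + 1, S, T, X => (Conn G S ∧ Conn G T ∧ Disjoint S T ∧ Tch G S T ∧ Disjoint S X ∧
      Disjoint T X) ∧ ∃ W X1 X2, W ⊆ X ∧ X1 ⊆ X ∧ X2 ⊆ X ∧ Disjoint X1 X2 ∧ QS G l S W X1 ∧
        QS G l T W X2

theorem QS.base {G : SimpleGraph V} {l : ℕ} {S T X : Set V} (h : QS G l S T X) :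
    Conn G S ∧ Conn G T ∧ Disjoint S T ∧ Tch G S T ∧ Disjoint S X ∧ Disjoint T X := by
  cases l with
  | zero => exact h
  | succ l => exact h.1

theorem QS.mono {G : SimpleGraph V} {l : ℕ} {S T X S' T' : Set V} (h : QS G l S T X)
    (hS : S ⊆ S') (hT : T ⊆ T') (cS : Conn G S') (cT : Conn G T') (d : Disjoint S' T')
    (dS : Disjoint S' X) (dT : Disjoint T' X) : QS G l S' T' X := by
  induction l generalizing S T X S' T' with
  | zero => exact ⟨cS, cT, d, h.2.2.2.1.mono hS hT, dS, dT⟩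
  | succ l ih =>
    obtain ⟨h, W, X1, X2, hW, h1, h2, d12, q1, q2⟩ := h
    have b1 := q1.base
    have b2 := q2.base
    refine ⟨⟨cS, cT, d, h.2.2.2.1.mono hS hT, dS, dT⟩, W, X1, X2, hW, h1, h2, d12, ?_, ?_⟩
    · exact ih q1 hS subset_rfl cS b1.2.1 (dS.mono_right hW) (dS.mono_right h1) b1.2.2.2.2.2
    · exact ih q2 hT subset_rfl cT b2.2.1 (dT.mono_right hW) (dT.mono_right h2) b2.2.2.2.2.2

theorem QS.symm {G : SimpleGraph V} {l : ℕ} {S T X : Set V} (h : QS G l S T X) :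
    QS G l T S X := by
  cases l with
  | zero =>
    obtain ⟨a, b, c, d, e, f⟩ := h
    exact ⟨b, a, c.symm, d.symm, f, e⟩
  | succ l =>
    obtain ⟨⟨a, b, c, d, e, f⟩, W, X1, X2, hW, h1, h2, d12, q1, q2⟩ := h
    exact ⟨⟨b, a, c.symm, d.symm, f, e⟩, W, X2, X1, hW, h2, h1, d12.symm, q2, q1⟩

def QT (G : SimpleGraph V) (l : ℕ) (S T U : Set V) : Prop :=
  ∃ S' T' X, QS G l S' T' X ∧ S ⊆ S' ∧ T ⊆ T' ∧ S' ⊆ U ∧ T' ⊆ U ∧ X ⊆ U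

theorem stepA_Q {G : SimpleGraph V} {l : ℕ} {S T U S' T' K S1 Y K1 : Set V}
    (hS : S ⊆ S') (hT : T ⊆ T') (cT : Conn G T') (hSU : S' ⊆ U) (hTU : T' ⊆ U) (hKU : K ⊆ U)
    (dST : Disjoint S' T') (dTK : Disjoint T' K)
    (hS1 : S' ⊆ S1) (hS1' : S1 ⊆ S' ∪ K) (hY : Y ⊆ K) (hK1 : K1 ⊆ K) (tY : Tch G Y T')
    (h : QT G l S1 Y (S1 ∪ Y ∪ K1)) : QT G l S T U := by
  obtain ⟨A, B, X, q, hA, hB, hA', hB', hX⟩ := h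
  have b := q.base
  have hsub : S1 ∪ Y ∪ K1 ⊆ S' ∪ K := by
    intro v
    have a1 := @hS1' v
    have a2 := @hY v
    have a3 := @hK1 v
    simp only [Set.mem_union] at *; tauto
  have hd : Disjoint (S' ∪ K) T' := by simp [dST, dTK.symm]
  have hU : S' ∪ K ⊆ U := Set.union_subset hSU hKU
  refine ⟨A, B ∪ T', X, q.mono subset_rfl Set.subset_union_left b.1
    (b.2.1.union_tch cT (tY.mono hB subset_rfl)) ?_ b.2.2.2.2.1 ?_, (hS.trans hS1).trans hA,
    hT.trans Set.subset_union_right, (hA'.trans hsub).trans hU,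
    Set.union_subset ((hB'.trans hsub).trans hU) hTU, (hX.trans hsub).trans hU⟩
  · exact Set.disjoint_union_right.2 ⟨b.2.2.1, hd.mono_left (hA'.trans hsub)⟩
  · exact Set.disjoint_union_left.2 ⟨b.2.2.2.2.2, (hd.mono_left (hX.trans hsub)).symm⟩

theorem stepA_P1 {G : SimpleGraph V} {a : ℕ} {S' K S1 Y K1 : Set V}
    (hS1 : S' ⊆ S1) (hS1' : S1 ⊆ S' ∪ K) (hY : Y ⊆ K) (hK1 : K1 ⊆ K)
    (h : PT G a S1 Y (S1 ∪ Y ∪ K1)) : ∃ D Z X, Conn G D ∧ S' ⊆ D ∧ Y ⊆ Z ∧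
      BT G {v | ∃ d ∈ D, G.Adj v d} a Z X ∧ Disjoint D X ∧ D ⊆ S' ∪ K ∧ X ⊆ K := by
  obtain ⟨D, Z, X, cD, hD, hZ, hB, hd, hD', hX⟩ := h
  have hsub : S1 ∪ Y ∪ K1 ⊆ S' ∪ K := by
    intro v
    have a1 := @hS1' v
    have a2 := @hY v
    have a3 := @hK1 v
    simp only [Set.mem_union] at *; tauto
  refine ⟨D, Z, X, cD, hS1.trans hD, hZ, hB, hd, hD'.trans hsub, ?_⟩
  intro v hv
  rcases hsub (hX hv) with h | h
  · exact absurd hv (dl hd v (hD (hS1 h)))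
  · exact h

theorem stepA_P {G : SimpleGraph V} {a : ℕ} {S T U S' T' K S1 Y K1 L S2 Y2 K2 : Set V}
    (hS : S ⊆ S') (hT : T ⊆ T') (cT : Conn G T') (hSU : S' ⊆ U) (hTU : T' ⊆ U) (hKU : K ⊆ U)
    (hLU : L ⊆ U) (cS : S'.Nonempty) (dST : Disjoint S' T') (dTK : Disjoint T' K)
    (dTL : Disjoint T' L)
    (dSK : Disjoint S' K) (dSL : Disjoint S' L) (dKL : Disjoint K L)
    (hS1 : S' ⊆ S1) (hS1' : S1 ⊆ S' ∪ K) (hY : Y ⊆ K) (hK1 : K1 ⊆ K) (tY : Tch G Y T')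
    (hS2 : S' ⊆ S2) (hS2' : S2 ⊆ S' ∪ L) (hY2 : Y2 ⊆ L) (hK2 : K2 ⊆ L) (tY2 : Tch G Y2 T')
    (h : PT G a S1 Y (S1 ∪ Y ∪ K1)) (h2 : PT G a S2 Y2 (S2 ∪ Y2 ∪ K2)) :
    PT G (a + 1) S T U := by
  obtain ⟨D, Z, X, cD, hD, hZ, hB, hd, hD', hX⟩ := stepA_P1 hS1 hS1' hY hK1 h
  obtain ⟨E, Z2, X2, cE, hE, hZ2, hB2, hd2, hE', hX2⟩ := stepA_P1 hS2 hS2' hY2 hK2 h2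
  have hDT : Disjoint (S' ∪ K) T' := by simp [dST, dTK.symm]
  have hET : Disjoint (S' ∪ L) T' := by simp [dST, dTL.symm]
  have hDX : Disjoint (S' ∪ K) L := by simp [dSL, dKL]
  have hEX : Disjoint (S' ∪ L) K := by simp [dSK, dKL.symm]
  obtain ⟨s, hs⟩ := cS
  refine ⟨D ∪ E, T', T' ∪ X ∪ X2, cD.union cE (Or.inl ⟨s, hD hs, hE hs⟩),
    (hS.trans hD).trans Set.subset_union_left, hT, ⟨Z, X, Z2, X2, cT, hB.mono ?_, hB2.mono ?_,
      tY.symm.mono subset_rfl hZ, tY2.symm.mono subset_rfl hZ2, dTK.mono_right hX,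
      dTL.mono_right hX2, dKL.mono hX hX2, rfl⟩, ?_, ?_, ?_⟩
  · rintro v ⟨d, hd, h⟩; exact ⟨d, Or.inl hd, h⟩
  · rintro v ⟨d, hd, h⟩; exact ⟨d, Or.inr hd, h⟩
  · simp only [Set.disjoint_union_left, Set.disjoint_union_right]
    exact ⟨⟨⟨hDT.mono_left hD', hET.mono_left hE'⟩, hd, hEX.mono hE' hX⟩, hDX.mono hD' hX2, hd2⟩
  · exact Set.union_subset (hD'.trans (Set.union_subset hSU hKU))
      (hE'.trans (Set.union_subset hSU hLU))
  · exact Set.union_subset (Set.union_subset hTU (hX.trans hKU)) (hX2.trans hLU)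

theorem stepB_P1 {G : SimpleGraph V} {a : ℕ} {S T U S' W T' K : Set V}
    (hS : S ⊆ S') (hT : T ⊆ T') (cT : Conn G T') (hU : S' ∪ W ∪ K ⊆ U) (hTU : T' ⊆ U)
    (d : Disjoint T' (S' ∪ W ∪ K)) (t : Tch G W T')
    (h : PT G a S' W (S' ∪ W ∪ K)) : PT G a S T U := by
  obtain ⟨D, Z, X, cD, hD, hZ, hB, hd, hD', hX⟩ := h
  refine ⟨D, Z ∪ T', X ∪ T', cD, hS.trans hD, hT.trans Set.subset_union_right,
    hB.root cT (t.mono hZ subset_rfl) (d.mono_right hX), ?_, hD'.trans hU,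
    Set.union_subset (hX.trans hU) hTU⟩
  exact Set.disjoint_union_right.2 ⟨hd, (d.mono_right hD').symm⟩

theorem stepB_P2 {G : SimpleGraph V} {a : ℕ} {S T U S' W T' K : Set V}
    (hS : S ⊆ S') (hT : T ⊆ T') (cS : Conn G S') (hU : W ∪ T' ∪ K ⊆ U) (hSU : S' ⊆ U)
    (d : Disjoint S' (W ∪ T' ∪ K)) (t : Tch G S' W)
    (h : PT G a W T' (W ∪ T' ∪ K)) : PT G a S T U := by
  obtain ⟨D, Z, X, cD, hD, hZ, hB, hd, hD', hX⟩ := h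
  refine ⟨S' ∪ D, Z, X, cS.union_tch cD (t.mono subset_rfl hD), hS.trans Set.subset_union_left,
    hT.trans hZ, hB.mono ?_, ?_, Set.union_subset hSU (hD'.trans hU), hX.trans hU⟩
  · rintro v ⟨d, hd, h⟩; exact ⟨d, Or.inr hd, h⟩
  · exact Set.disjoint_union_left.2 ⟨d.mono_right hX, hd⟩

theorem stepB_Q {G : SimpleGraph V} {l : ℕ} {S T U S' W T' K K2 : Set V}
    (tST : Tch G S T) (cW : W.Nonempty)
    (hS : S ⊆ S') (hT : T ⊆ T') (hSU : S' ⊆ U) (hWU : W ⊆ U) (hTU : T' ⊆ U)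
    (hKU : K ⊆ U) (hK2U : K2 ⊆ U) (dST : Disjoint S' T')
    (dSK2 : Disjoint S' K2) (dTK : Disjoint T' K)
    (dKK : Disjoint K K2)
    (h1 : QT G l S' W (S' ∪ W ∪ K)) (h2 : QT G l W T' (W ∪ T' ∪ K2)) :
    QT G (l + 1) S T U := by
  obtain ⟨A, W1, X1, q1, hA, hW1, hA', hW1', hX1⟩ := h1
  obtain ⟨W2, B, X2, q2, hW2, hB, hW2', hB', hX2⟩ := h2
  obtain ⟨a1, a2, a3, a4, a5, a6⟩ := q1.base
  obtain ⟨b1, b2, b3, b4, b5, b6⟩ := q2.base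
  obtain ⟨w, hw⟩ := cW
  have cW' : Conn G (W1 ∪ W2) := a2.union b1 (Or.inl ⟨w, hW1 hw, hW2 hw⟩)
  have sA : A ⊆ S' ∪ K := by
    intro v hv
    rcases hA' hv with (h | h) | h
    · exact Or.inl h
    · exact absurd (hW1 h) (dl a3 v hv)
    · exact Or.inr h
  have sB : B ⊆ T' ∪ K2 := by
    intro v hv
    rcases hB' hv with (h | h) | h
    · exact absurd hv (dl b3 v (hW2 h))
    · exact Or.inl h
    · exact Or.inr h
  have sW1 : W1 ⊆ W ∪ K := by
    intro v hv
    rcases hW1' hv with (h | h) | h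
    · exact absurd hv (dl a3 v (hA h))
    · exact Or.inl h
    · exact Or.inr h
  have sW2 : W2 ⊆ W ∪ K2 := by
    intro v hv
    rcases hW2' hv with (h | h) | h
    · exact Or.inl h
    · exact absurd (hB h) (dl b3 v hv)
    · exact Or.inr h
  have sX1 : X1 ⊆ K := by
    intro v hv
    rcases hX1 hv with (h | h) | h
    · exact absurd hv (dl a5 v (hA h))
    · exact absurd hv (dl a6 v (hW1 h))
    · exact h
  have sX2 : X2 ⊆ K2 := by
    intro v hv
    rcases hX2 hv with (h | h) | h
    · exact absurd hv (dl b5 v (hW2 h))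
    · exact absurd hv (dl b6 v (hB h))
    · exact h
  have dAK2 : Disjoint A K2 := Disjoint.mono_left sA (by simp [dSK2, dKK])
  have dBK : Disjoint B K := Disjoint.mono_left sB (by simp [dTK, dKK.symm])
  have dAB : Disjoint A B := Disjoint.mono sA sB (by simp [dST, dSK2, dTK.symm, dKK])
  have dAW2 : Disjoint A W2 := Disjoint.mono_right sW2 (by simp [dAK2, a3.mono_right hW1])
  have dBW1 : Disjoint B W1 := Disjoint.mono_right sW1 (by simp [dBK, (b3.mono_left hW2).symm])
  have dX1W2 : Disjoint W2 X1 := Disjoint.mono_left sW2 (Set.disjoint_union_left.2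
    ⟨a6.mono_left hW1, dKK.symm.mono_right sX1⟩)
  have dX2W1 : Disjoint W1 X2 := Disjoint.mono_left sW1 (Set.disjoint_union_left.2
    ⟨b5.mono_left hW2, dKK.mono_right sX2⟩)
  have dAW : Disjoint A (W1 ∪ W2) := Set.disjoint_union_right.2 ⟨a3, dAW2⟩
  have dBW : Disjoint B (W1 ∪ W2) := Set.disjoint_union_right.2 ⟨dBW1, b3.symm⟩
  refine ⟨A, B, W1 ∪ W2 ∪ X1 ∪ X2, ⟨⟨a1, b2, dAB, tST.mono (hS.trans hA) (hT.trans hB), ?_, ?_⟩,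
    W1 ∪ W2, X1, X2, ?_, ?_, ?_, dKK.mono sX1 sX2, q1.mono subset_rfl Set.subset_union_left a1 cW'
      ?_ a5 ?_, q2.symm.mono subset_rfl Set.subset_union_right b2 cW' ?_ b6 ?_⟩, hS.trans hA,
      hT.trans hB, ?_, ?_, ?_⟩
  · exact Set.disjoint_union_right.2 ⟨Set.disjoint_union_right.2 ⟨dAW, a5⟩, dAK2.mono_right sX2⟩
  · exact Set.disjoint_union_right.2 ⟨Set.disjoint_union_right.2 ⟨dBW, dBK.mono_right sX1⟩, b6⟩
  · exact fun v hv => Or.inl (Or.inl hv)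
  · exact fun v hv => Or.inl (Or.inr hv)
  · exact fun v hv => Or.inr hv
  · exact dAW
  · exact Set.disjoint_union_left.2 ⟨a6, dX1W2⟩
  · exact dBW
  · exact Set.disjoint_union_left.2 ⟨dX2W1, b5⟩
  · exact sA.trans (Set.union_subset hSU hKU)
  · exact sB.trans (Set.union_subset hTU hK2U)
  · exact Set.union_subset (Set.union_subset (Set.union_subset
      (sW1.trans (Set.union_subset hWU hKU)) (sW2.trans (Set.union_subset hWU hK2U)))
      (sX1.trans hKU)) (sX2.trans hK2U)

end

theorem phi (k a l : ℕ) : ∃ N : ℕ, ∀ (V : Type) [Finite V] (G : SimpleGraph V) (S T C Z : Set V),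
    ¬ IsMinor (Pgraph k) G → State G S T C → Tr G N Z C →
      PT G a S T (S ∪ T ∪ C) ∨ QT G l S T (S ∪ T ∪ C) := by
  induction a generalizing l with
  | zero =>
    refine ⟨0, fun V _ G S T C Z _ hst _ => Or.inl ⟨S, T, T, hst.cS, subset_rfl, subset_rfl,
      ⟨hst.cT, rfl, ?_⟩, hst.dST, fun v hv => Or.inl (Or.inl hv), fun v hv => Or.inl (Or.inr hv)⟩⟩
    obtain ⟨x, hx, y, hy, hxy⟩ := hst.tST
    exact ⟨y, hy, x, hx, hxy.symm⟩
  | succ a iha =>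
    induction l with
    | zero =>
      refine ⟨0, fun V _ G S T C Z _ hst _ => Or.inr ⟨S, T, ∅, ⟨hst.cS, hst.cT, hst.dST, hst.tST,
        Set.disjoint_empty _, Set.disjoint_empty _⟩, subset_rfl, subset_rfl,
        fun v hv => Or.inl (Or.inl hv), fun v hv => Or.inl (Or.inr hv), Set.empty_subset _⟩⟩
    | succ l ihl =>
      obtain ⟨Na, hNa⟩ := iha (l + 1)
      obtain ⟨Nb, hNb⟩ := ihl
      refine ⟨k + ((k + Na + 1) + Nb) + 2, fun V _ G S T C Z hno hst hT => ?_⟩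
      rcases split hst hno hT with
        ⟨S', T', K1, K2, a1, a2, a3, a4, ⟨Z1, a5⟩, ⟨Z2, a6⟩, a7, a8, a9, a10, a11⟩ |
        ⟨S', W, T', K1, K2, a1, a2, a3, a4, ⟨Z1, a5⟩, ⟨Z2, a6⟩, a7, a8, a9, a10, a11, a12, a13,
          a14, a15⟩
      · rw [Nat.add_comm] at a5 a6
        obtain ⟨Z1', a5'⟩ := a5.down
        obtain ⟨Z2', a6'⟩ := a6.down
        obtain ⟨S1, Y1, L1, s1, ⟨_, t1⟩, b1, b2, b3, b4, b5⟩ := growth a3 hno a5'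
        obtain ⟨S2, Y2, L2, s2, ⟨_, t2⟩, c1, c2, c3, c4, c5⟩ := growth a4 hno a6'
        rcases hNa V G _ _ _ _ hno s1 t1 with h1 | h1
        · rcases hNa V G _ _ _ _ hno s2 t2 with h2 | h2
          · exact Or.inl (stepA_P a1 a2 a3.cT a8 a9 a10 a11 a3.cS.1 a3.dST a3.dTC a4.dTC a3.dSC
              a4.dSC a7 b1 b2 b3 b4 b5 c1 c2 c3 c4 c5 h1 h2)
          · exact Or.inr (stepA_Q a1 a2 a3.cT a8 a9 a11 a3.dST a4.dTC c1 c2 c3 c4 c5 h2)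
        · exact Or.inr (stepA_Q a1 a2 a3.cT a8 a9 a10 a3.dST a3.dTC b1 b2 b3 b4 b5 h1)
      · obtain ⟨Z1', a5'⟩ := a5.down
        obtain ⟨Z2', a6'⟩ := a6.down
        rcases hNb V G _ _ _ _ hno a3 a5' with h1 | h1
        · refine Or.inl (stepB_P1 a1 a2 a4.cT (Set.union_subset (Set.union_subset a11 a12) a14) a13
            ?_ a4.tST h1)
          simp [a7.symm, a4.dST.symm, a10]
        · rcases hNb V G _ _ _ _ hno a4 a6' with h2 | h2
          · refine Or.inl (stepB_P2 a1 a2 a3.cS (Set.union_subset (Set.union_subset a12 a13) a15)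
              a11 ?_ a3.tST h2)
            simp [a7, a3.dST, a9]
          · exact Or.inr (stepB_Q hst.tST a4.cS.1 a1 a2 a11 a12 a13 a14 a15 a7 a9 a10 a8 h1 h2)

end PW


namespace PW

section
variable {V : Type*}

def qbs (S T : Set V) (g : List Bool → Set V) : List Bool → Set V × Set V
  | [] => (S, T)
  | b :: ρ => qbs (if b then T else S) (g []) (fun ρ' => g (b :: ρ')) ρ

theorem qbs_append (S T : Set V) (g : List Bool → Set V) (ρ : List Bool) (b : Bool) :
    qbs S T g (ρ ++ [b]) = ((if b then (qbs S T g ρ).2 else (qbs S T g ρ).1), g ρ) := by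
  induction ρ generalizing S T g with
  | nil => simp [qbs]
  | cons c ρ ih => simp only [List.cons_append, qbs, ih]

theorem QS.map {G : SimpleGraph V} {l : ℕ} {S T X : Set V} (h : QS G l S T X) :
    ∃ g : List Bool → Set V, (∀ ρ, ρ.length < l → Conn G (g ρ) ∧ g ρ ⊆ X) ∧
      (∀ ρ ρ', ρ.length < l → ρ'.length < l → ρ ≠ ρ' → Disjoint (g ρ) (g ρ')) ∧
      (∀ ρ, ρ.length < l → Tch G (g ρ) (qbs S T g ρ).1 ∧ Tch G (g ρ) (qbs S T g ρ).2) := by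
  induction l generalizing S T X with
  | zero => exact ⟨fun _ => ∅, by simp, by simp, by simp⟩
  | succ l ih =>
    obtain ⟨h, W, X1, X2, hW, h1, h2, d12, q1, q2⟩ := h
    obtain ⟨f0, a0, b0, c0⟩ := ih q1
    obtain ⟨f1, a1, b1, c1⟩ := ih q2
    have e0 := q1.base
    have e1 := q2.base
    have d0 := e0.2.2.2.2.2
    have d1 := e1.2.2.2.2.2
    refine ⟨fun l => match l with
      | [] => W
      | false :: τ => f0 τ
      | true :: τ => f1 τ, ?_, ?_, ?_⟩
    · intro l hl
      match l, hl with
      | [], _ => exact ⟨e0.2.1, hW⟩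
      | false :: τ, hl =>
        have := a0 τ (by simpa using hl)
        exact ⟨this.1, this.2.trans h1⟩
      | true :: τ, hl =>
        have := a1 τ (by simpa using hl)
        exact ⟨this.1, this.2.trans h2⟩
    · intro l l' hl hl' hne
      match l, l', hl, hl', hne with
      | [], [], _, _, h => exact absurd rfl h
      | [], false :: τ, _, hl, _ => exact d0.mono_right (a0 τ (by simpa using hl)).2
      | [], true :: τ, _, hl, _ => exact d1.mono_right (a1 τ (by simpa using hl)).2
      | false :: τ, [], hl, _, _ => exact (d0.mono_right (a0 τ (by simpa using hl)).2).symm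
      | true :: τ, [], hl, _, _ => exact (d1.mono_right (a1 τ (by simpa using hl)).2).symm
      | false :: τ, true :: τ', hl, hl', _ =>
        exact d12.mono (a0 τ (by simpa using hl)).2 (a1 τ' (by simpa using hl')).2
      | true :: τ, false :: τ', hl, hl', _ =>
        exact (d12.mono (a0 τ' (by simpa using hl')).2 (a1 τ (by simpa using hl)).2).symm
      | true :: τ, true :: τ', hl, hl', h =>
        exact b1 τ τ' (by simpa using hl) (by simpa using hl') (fun h' => h (by rw [h']))
      | false :: τ, false :: τ', hl, hl', h =>
        exact b0 τ τ' (by simpa using hl) (by simpa using hl') (fun h' => h (by rw [h']))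
    · intro l hl
      match l, hl with
      | [], _ => exact ⟨e0.2.2.2.1.symm, e1.2.2.2.1.symm⟩
      | false :: τ, hl => exact c0 τ (by simpa using hl)
      | true :: τ, hl => exact c1 τ (by simpa using hl)

theorem QS.minor {G : SimpleGraph V} {k : ℕ} {S T X : Set V} (h : QS G k S T X) :
    IsMinor (Qgraph k) G := by
  obtain ⟨g, a, b, c⟩ := h.map
  obtain ⟨cS, cT, dST, tST, dSX, dTX⟩ := h.base
  let F : QVert k → Set V := fun o => match o with
    | Sum.inl false => S
    | Sum.inl true => T
    | Sum.inr σ => g σ.1.reverse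
  have hF : ∀ σ : List Bool, σ.length ≤ k →
      (F (qbase k σ).1, F (qbase k σ).2) = qbs S T g σ.reverse := by
    intro σ
    induction σ with
    | nil => intro _; rfl
    | cons b σ ih =>
      intro hl
      have hl' : σ.length < k := by simpa using hl
      rw [List.reverse_cons, qbs_append, ← ih hl'.le]
      simp only [qbase, hl', dif_pos]
      cases b <;> rfl
  have hconn : ∀ w, Conn G (F w) := by
    rintro ((_ | _) | σ)
    · exact cS
    · exact cT
    · exact (a _ (by simpa using σ.2)).1
  refine ⟨F, fun w => (hconn w).1, fun w => (hconn w).connected, ?_, ?_⟩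
  · rintro ((_ | _) | σ) ((_ | _) | τ) hne
    · exact absurd rfl hne
    · exact dST
    · exact dSX.mono_right (a _ (by simpa using τ.2)).2
    · exact dST.symm
    · exact absurd rfl hne
    · exact dTX.mono_right (a _ (by simpa using τ.2)).2
    · exact (dSX.mono_right (a _ (by simpa using σ.2)).2).symm
    · exact (dTX.mono_right (a _ (by simpa using σ.2)).2).symm
    · refine b _ _ (by simpa using σ.2) (by simpa using τ.2) ?_
      intro h
      exact hne (by rw [Subtype.ext (List.reverse_injective h)])
  · intro w1 w2 hadj
    change Tch G (F w1) (F w2)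
    rw [Qgraph, SimpleGraph.fromEdgeSet_adj] at hadj
    rcases hadj.1 with he | ⟨σ, hσ, he⟩
    · rcases Sym2.eq_iff.1 he with ⟨rfl, rfl⟩ | ⟨rfl, rfl⟩
      · exact tST
      · exact tST.symm
    · have e := hF σ hσ.le
      have key := c σ.reverse (by simpa using hσ)
      rw [← e] at key
      rcases he with he | he
      · rcases Sym2.eq_iff.1 he with ⟨rfl, rfl⟩ | ⟨rfl, rfl⟩
        · exact key.1
        · exact key.1.symm
      · rcases Sym2.eq_iff.1 he with ⟨rfl, rfl⟩ | ⟨rfl, rfl⟩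
        · exact key.2
        · exact key.2.symm

theorem init_state [Fintype V] {G : SimpleGraph V} (h2 : IsKConnected 2 G) {N : ℕ} {Z X : Set V}
    (hT : Tr G (N + 2) Z X) : ∃ S T C Z', State G S T C ∧ Tr G N Z' C := by
  classical
  obtain ⟨hcard, hcon⟩ := h2
  have huniv : Conn G (Set.univ : Set V) := by
    have := conn_of_connected (hcon ∅ (by simp))
    simpa using this
  have hdel : ∀ v, Conn G ({v}ᶜ : Set V) := by
    intro v
    have := conn_of_connected (hcon {v} (by simp))
    simpa using this
  obtain ⟨s, -⟩ := huniv.1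
  obtain ⟨x, hx, t, -, hst⟩ := huniv.tch (Y := {s}) (Z := {s}ᶜ) (by simp) ⟨s, rfl⟩ (hdel s).1
    disjoint_compl_right
  obtain rfl : x = s := hx
  obtain ⟨L1, -, hs1, -, -, Z1, hL1⟩ := hT.pick x
  obtain ⟨L2, hL2, ht2, -, -, Z2, hL2T⟩ := hL1.pick t
  have hsL2 : x ∉ L2 := fun h => hs1 (hL2 h)
  obtain ⟨C, hC1, hC2, hC3, hC4⟩ := exists_comp (X := ({x, t}ᶜ : Set V)) hL2T.conn.1 (by
    intro v hv
    simp only [Set.mem_compl_iff, Set.mem_insert_iff, Set.mem_singleton_iff, not_or]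
    exact ⟨fun h => hsL2 (h ▸ hv), fun h => ht2 (h ▸ hv)⟩)
  obtain ⟨Z', hZ'⟩ := hL2T.absorb hC1 hC3
  have hne : x ≠ t := hst.ne
  have hxC : x ∉ C := fun h => hC2 h (Or.inl rfl)
  have htC : t ∉ C := fun h => hC2 h (Or.inr rfl)
  -- closure of subsets
  have key : ∀ A : Set V, A ⊆ C → A.Nonempty → ∀ c, c ∉ A → c ∉ C ∨ c ∈ C →
      (∃ w, w ≠ c ∧ w ∉ A) → ∃ p ∈ A, ∃ q, q ≠ c ∧ q ∉ A ∧ G.Adj p q := by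
    intro A hA hAne c hc _ ⟨w, hwc, hwA⟩
    obtain ⟨p, hp, q, hq, hpq⟩ := (hdel c).tch (Y := A) (Z := {c}ᶜ \ A)
      (by
        rw [Set.union_sdiff_cancel]
        intro v hv h
        exact hc (h ▸ hv))
      hAne ⟨w, hwc, hwA⟩ Set.disjoint_sdiff_right
    exact ⟨p, hp, q, hq.1, hq.2, hpq⟩
  refine ⟨{x}, {t}, C, Z', ⟨conn_singleton G x, conn_singleton G t, hC3, ?_, ?_, ?_, ?_, ?_, ?_, ?_⟩,
    hZ'⟩
  · simpa using hne
  · simpa using hxC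
  · simpa using htC
  · exact ⟨x, rfl, t, rfl, hst⟩
  · obtain ⟨p, hp, q, hqc, hqA, hpq⟩ := key C subset_rfl hC3.1 t htC (em' _) ⟨x, hne, hxC⟩
    refine ⟨x, rfl, p, hp, ?_⟩
    by_cases hqx : q = x
    · rw [← hqx]; exact hpq.symm
    · exact absurd (hC4 p hp q (by simp [hqx, hqc]) hpq) hqA
  · obtain ⟨p, hp, q, hqc, hqA, hpq⟩ := key C subset_rfl hC3.1 x hxC (em' _) ⟨t, hne.symm, htC⟩
    refine ⟨t, rfl, p, hp, ?_⟩
    by_cases hqx : q = t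
    · rw [← hqx]; exact hpq.symm
    · exact absurd (hC4 p hp q (by simp [hqx, hqc]) hpq) hqA
  · intro c hc A hA hcA hAne hcl
    obtain ⟨p, hp, q, hqc, hqA, hpq⟩ := key A hA hAne c hcA (em' _)
      ⟨x, fun h => hxC (h ▸ hc), fun h => hxC (hA h)⟩
    refine ⟨p, hp, q, ?_, hpq⟩
    by_contra hq
    have hqC : q ∈ C := hC4 p (hA hp) q (by simp at hq ⊢; tauto) hpq
    rcases hcl p hp q hqC hpq with h | h
    · exact hqA h
    · exact hqc h

end

theorem main (k : ℕ) : ∃ p : ℕ, 0 < p ∧ ∀ (V : Type) [Fintype V] (G : SimpleGraph V),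
      IsKConnected 2 G → p ≤ pathwidth G →
        IsMinor (Pgraph k) G ∨ IsMinor (Qgraph k) G := by
  obtain ⟨N, hN⟩ := phi k k k
  refine ⟨2 ^ (N + 2 + 1), by positivity, fun V _ G h2 hp => ?_⟩
  by_cases hno : IsMinor (Pgraph k) G
  · exact Or.inl hno
  obtain ⟨Z, X, hT⟩ := exists_tr (N + 2) hp
  obtain ⟨S, T, C, Z', hst, hZ'⟩ := init_state h2 hT
  rcases hN V G S T C Z' hno hst hZ' with ⟨D, Z, X, cD, -, -, hB, hd, -, -⟩ | ⟨S', T', X, q, -⟩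
  · exact Or.inl (hB.minor cD hd)
  · exact Or.inr q.minor

end PW

/-- Theorem 7.1. For every positive integer `k` there is a positive
integer `p` such that every 2-connected graph of path-width at least `p` has a `𝒫_k` or
`𝒬_k` minor. -/
theorem two_connected_large_pathwidth_has_Pk_or_Qk_minor (k : ℕ) (hk : 0 < k) :
    ∃ p : ℕ, 0 < p ∧ ∀ (V : Type) [Fintype V] (G : SimpleGraph V),
      IsKConnected 2 G → p ≤ pathwidth G →
        IsMinor (Pgraph k) G ∨ IsMinor (Qgraph k) G := by
  exact PW.main k
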